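/- (From the multi-succedent to the single-succedent system, and the grand equivalence.) If mℓIGL ⊢ x:A then ℓIGL ⊢ x:A. Consequently, combining this with soundness of ℓIGL, the passage from birelational to predicate validity, and completeness of mℓIGL, the following are equivalent for every modal formula A: (i) ℓIGL ⊢ x:A; (ii) birel-IGL ⊨ A; (iii) pred-IGL ⊨ A; (iv) mℓIGL ⊢ x:A. -/

import Mathlib

namespace IGL

/-- Modal formulas over propositional symbols indexed by naturals. -/
inductive Formula : Type
  | atom : ℕ → Formula
  | bot  : Formula
  | and  : Formula → Formula → Formula
  | or   : Formula → Formula → Formula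
  | imp  : Formula → Formula → Formula
  | box  : Formula → Formula
  | dia  : Formula → Formula

/-- ¬A abbreviates A → ⊥. -/
def Formula.neg (A : Formula) : Formula := Formula.imp A Formula.bot

/-- Löb's axiom □(□A→A)→□A. -/
def lobAx (A : Formula) : Formula :=
  Formula.imp (Formula.box (Formula.imp (Formula.box A) A)) (Formula.box A)

/-- Boolean evaluation of a formula, treating modal (sub)formulas and atoms as
propositional atoms; used to define substitution instances of classical
propositional tautologies. -/
def evalCPL (v : Formula → Bool) : Formula → Bool
  | Formula.atom n  => v (Formula.atom n)
  | Formula.bot     => false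
  | Formula.and A B => evalCPL v A && evalCPL v B
  | Formula.or  A B => evalCPL v A || evalCPL v B
  | Formula.imp A B => !evalCPL v A || evalCPL v B
  | Formula.box A   => v (Formula.box A)
  | Formula.dia A   => v (Formula.dia A)

/-- A (substitution instance of a) theorem of classical propositional logic. -/
def Taut (A : Formula) : Prop := ∀ v, evalCPL v A = true

/-- The modal logic K: classical propositional logic, axiom k, modus ponens, necessitation. -/
inductive KProof : Formula → Prop
  | taut {A : Formula} : Taut A → KProof A
  | axK (A B : Formula) :
      KProof (Formula.imp (Formula.box (Formula.imp A B))
        (Formula.imp (Formula.box A) (Formula.box B)))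
  | mp {A B : Formula} : KProof (Formula.imp A B) → KProof A → KProof B
  | nec {A : Formula} : KProof A → KProof (Formula.box A)

/-- The modal logic K4: K plus axiom 4. -/
inductive K4Proof : Formula → Prop
  | taut {A : Formula} : Taut A → K4Proof A
  | axK (A B : Formula) :
      K4Proof (Formula.imp (Formula.box (Formula.imp A B))
        (Formula.imp (Formula.box A) (Formula.box B)))
  | ax4 (A : Formula) :
      K4Proof (Formula.imp (Formula.box A) (Formula.box (Formula.box A)))
  | mp {A B : Formula} : K4Proof (Formula.imp A B) → K4Proof A → K4Proof B
  | nec {A : Formula} : K4Proof A → K4Proof (Formula.box A)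

/-- Gödel–Löb logic GL: K4 plus Löb's axiom. -/
inductive GLProof : Formula → Prop
  | taut {A : Formula} : Taut A → GLProof A
  | axK (A B : Formula) :
      GLProof (Formula.imp (Formula.box (Formula.imp A B))
        (Formula.imp (Formula.box A) (Formula.box B)))
  | ax4 (A : Formula) :
      GLProof (Formula.imp (Formula.box A) (Formula.box (Formula.box A)))
  | axLob (A : Formula) : GLProof (lobAx A)
  | mp {A B : Formula} : GLProof (Formula.imp A B) → GLProof A → GLProof B
  | nec {A : Formula} : GLProof A → GLProof (Formula.box A)

/-- Classical relational (Kripke) satisfaction. -/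
def sat {W : Type} (R : W → W → Prop) (V : W → ℕ → Prop) : W → Formula → Prop
  | w, Formula.atom n  => V w n
  | _, Formula.bot     => False
  | w, Formula.and A B => sat R V w A ∧ sat R V w B
  | w, Formula.or  A B => sat R V w A ∨ sat R V w B
  | w, Formula.imp A B => sat R V w A → sat R V w B
  | w, Formula.box A   => ∀ v, R w v → sat R V v A
  | w, Formula.dia A   => ∃ v, R w v ∧ sat R V v A

/-- A frame satisfies `A` if every model based on it satisfies `A` at every world. -/
def FrameSat (W : Type) (R : W → W → Prop) (A : Formula) : Prop :=
  ∀ (V : W → ℕ → Prop) (w : W), sat R V w A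

/-- A relation is terminating if it admits no infinite path. -/
def Terminating {α : Type} (r : α → α → Prop) : Prop :=
  ¬ ∃ f : ℕ → α, ∀ n, r (f n) (f (n + 1))

/-! ### Labelled sequents -/

/-- A labelled formula `x : A`. -/
abbrev LFormula := ℕ × Formula

/-- A labelled sequent `R, Γ ⇒ Δ`: a set of relational atoms and two
multisets of labelled formulas. -/
structure Sequent : Type where
  rel : Set (ℕ × ℕ)
  left : Multiset LFormula
  right : Multiset LFormula

/-- Variables occurring in a set of relational atoms. -/
def relVars (R : Set (ℕ × ℕ)) : Set ℕ := {z | ∃ w, (z, w) ∈ R ∨ (w, z) ∈ R}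

/-- Labels occurring in a multiset of labelled formulas. -/
def mLabels (Γ : Multiset LFormula) : Set ℕ := {z | ∃ A, (z, A) ∈ Γ}

/-- The variables/labels occurring in a sequent. -/
def Sequent.vars (S : Sequent) : Set ℕ := relVars S.rel ∪ mLabels S.left ∪ mLabels S.right

/-- `y` is a fresh label for the sequent `S`. -/
def Fresh (y : ℕ) (S : Sequent) : Prop := y ∉ S.vars

/-- A sequent has exactly one formula on the right-hand side. -/
def SingleRHS (S : Sequent) : Prop := Multiset.card S.right = 1

/-- Rule instances of the standard labelled calculi, presented as a relation
between a conclusion and its list of premisses.  The flag `tr` enables the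
transitivity rule (giving ℓK4 rather than ℓK), the flag `thn` enables the
relational thinning rule `th`, and the flag `ir` imposes the restriction that
the →-right and □-right rules have exactly one formula on the RHS (giving the
multi-succedent intuitionistic system mℓIK4). -/
inductive Rule (tr thn ir : Bool) : Sequent → List Sequent → Prop
  | id (R : Set (ℕ × ℕ)) (x p : ℕ) :
      Rule tr thn ir ⟨R, {(x, Formula.atom p)}, {(x, Formula.atom p)}⟩ []
  | cut (R : Set (ℕ × ℕ)) (Γ Γ' Δ Δ' : Multiset LFormula) (x : ℕ) (A : Formula) :
      Rule tr thn ir ⟨R, Γ + Γ', Δ + Δ'⟩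
        [⟨R, Γ, (x, A) ::ₘ Δ⟩, ⟨R, (x, A) ::ₘ Γ', Δ'⟩]
  | wkL (R : Set (ℕ × ℕ)) (Γ Δ : Multiset LFormula) (x : ℕ) (A : Formula) :
      Rule tr thn ir ⟨R, (x, A) ::ₘ Γ, Δ⟩ [⟨R, Γ, Δ⟩]
  | wkR (R : Set (ℕ × ℕ)) (Γ Δ : Multiset LFormula) (x : ℕ) (A : Formula) :
      Rule tr thn ir ⟨R, Γ, (x, A) ::ₘ Δ⟩ [⟨R, Γ, Δ⟩]
  | ctrL (R : Set (ℕ × ℕ)) (Γ Δ : Multiset LFormula) (x : ℕ) (A : Formula) :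
      Rule tr thn ir ⟨R, (x, A) ::ₘ Γ, Δ⟩ [⟨R, (x, A) ::ₘ (x, A) ::ₘ Γ, Δ⟩]
  | ctrR (R : Set (ℕ × ℕ)) (Γ Δ : Multiset LFormula) (x : ℕ) (A : Formula) :
      Rule tr thn ir ⟨R, Γ, (x, A) ::ₘ Δ⟩ [⟨R, Γ, (x, A) ::ₘ (x, A) ::ₘ Δ⟩]
  | th (R R' : Set (ℕ × ℕ)) (Γ Δ : Multiset LFormula) :
      thn = true → Rule tr thn ir ⟨R ∪ R', Γ, Δ⟩ [⟨R, Γ, Δ⟩]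
  | botL (R : Set (ℕ × ℕ)) (Γ Δ : Multiset LFormula) (x : ℕ) :
      Rule tr thn ir ⟨R, (x, Formula.bot) ::ₘ Γ, Δ⟩ []
  | impL (R : Set (ℕ × ℕ)) (Γ Γ' Δ Δ' : Multiset LFormula) (x : ℕ) (A B : Formula) :
      Rule tr thn ir ⟨R, (x, Formula.imp A B) ::ₘ (Γ + Γ'), Δ + Δ'⟩
        [⟨R, Γ, (x, A) ::ₘ Δ⟩, ⟨R, (x, B) ::ₘ Γ', Δ'⟩]
  | impR (R : Set (ℕ × ℕ)) (Γ Δ : Multiset LFormula) (x : ℕ) (A B : Formula) :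
      (ir = true → Δ = 0) →
      Rule tr thn ir ⟨R, Γ, (x, Formula.imp A B) ::ₘ Δ⟩ [⟨R, (x, A) ::ₘ Γ, (x, B) ::ₘ Δ⟩]
  | andL₁ (R : Set (ℕ × ℕ)) (Γ Δ : Multiset LFormula) (x : ℕ) (A B : Formula) :
      Rule tr thn ir ⟨R, (x, Formula.and A B) ::ₘ Γ, Δ⟩ [⟨R, (x, A) ::ₘ Γ, Δ⟩]
  | andL₂ (R : Set (ℕ × ℕ)) (Γ Δ : Multiset LFormula) (x : ℕ) (A B : Formula) :
      Rule tr thn ir ⟨R, (x, Formula.and A B) ::ₘ Γ, Δ⟩ [⟨R, (x, B) ::ₘ Γ, Δ⟩]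
  | orL (R : Set (ℕ × ℕ)) (Γ Δ : Multiset LFormula) (x : ℕ) (A B : Formula) :
      Rule tr thn ir ⟨R, (x, Formula.or A B) ::ₘ Γ, Δ⟩
        [⟨R, (x, A) ::ₘ Γ, Δ⟩, ⟨R, (x, B) ::ₘ Γ, Δ⟩]
  | orR₁ (R : Set (ℕ × ℕ)) (Γ Δ : Multiset LFormula) (x : ℕ) (A B : Formula) :
      Rule tr thn ir ⟨R, Γ, (x, Formula.or A B) ::ₘ Δ⟩ [⟨R, Γ, (x, A) ::ₘ Δ⟩]
  | orR₂ (R : Set (ℕ × ℕ)) (Γ Δ : Multiset LFormula) (x : ℕ) (A B : Formula) :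
      Rule tr thn ir ⟨R, Γ, (x, Formula.or A B) ::ₘ Δ⟩ [⟨R, Γ, (x, B) ::ₘ Δ⟩]
  | andR (R : Set (ℕ × ℕ)) (Γ Δ : Multiset LFormula) (x : ℕ) (A B : Formula) :
      Rule tr thn ir ⟨R, Γ, (x, Formula.and A B) ::ₘ Δ⟩
        [⟨R, Γ, (x, A) ::ₘ Δ⟩, ⟨R, Γ, (x, B) ::ₘ Δ⟩]
  | diaL (R : Set (ℕ × ℕ)) (Γ Δ : Multiset LFormula) (x y : ℕ) (A : Formula) :
      Fresh y ⟨R, (x, Formula.dia A) ::ₘ Γ, Δ⟩ →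
      Rule tr thn ir ⟨R, (x, Formula.dia A) ::ₘ Γ, Δ⟩
        [⟨insert (x, y) R, (y, A) ::ₘ Γ, Δ⟩]
  | diaR (R : Set (ℕ × ℕ)) (Γ Δ : Multiset LFormula) (x y : ℕ) (A : Formula) :
      (x, y) ∈ R →
      Rule tr thn ir ⟨R, Γ, (x, Formula.dia A) ::ₘ Δ⟩ [⟨R, Γ, (y, A) ::ₘ Δ⟩]
  | boxR (R : Set (ℕ × ℕ)) (Γ Δ : Multiset LFormula) (x y : ℕ) (A : Formula) :
      (ir = true → Δ = 0) →
      Fresh y ⟨R, Γ, (x, Formula.box A) ::ₘ Δ⟩ →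
      Rule tr thn ir ⟨R, Γ, (x, Formula.box A) ::ₘ Δ⟩
        [⟨insert (x, y) R, Γ, (y, A) ::ₘ Δ⟩]
  | boxL (R : Set (ℕ × ℕ)) (Γ Δ : Multiset LFormula) (x y : ℕ) (A : Formula) :
      (x, y) ∈ R →
      Rule tr thn ir ⟨R, (x, Formula.box A) ::ₘ Γ, Δ⟩ [⟨R, (y, A) ::ₘ Γ, Δ⟩]
  | trans (R : Set (ℕ × ℕ)) (Γ Δ : Multiset LFormula) (x y z : ℕ) :
      tr = true → (x, y) ∈ R → (y, z) ∈ R →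
      Rule tr thn ir ⟨R, Γ, Δ⟩ [⟨insert (x, z) R, Γ, Δ⟩]

/-- The labelled calculus ℓK. -/
def RuleLK : Sequent → List Sequent → Prop := Rule false true false

/-- The labelled calculus ℓK4 (= ℓK + transitivity rule). -/
def RuleLK4 : Sequent → List Sequent → Prop := Rule true true false

/-- ℓK4 without the thinning rule th. -/
def RuleLK4NoTh : Sequent → List Sequent → Prop := Rule true false false

/-- The multi-succedent intuitionistic calculus mℓIK4: ℓK4 where the →-right
and □-right rules must have exactly one formula on the RHS. -/
def RuleMLIK4 : Sequent → List Sequent → Prop := Rule true true true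

/-- The single-succedent intuitionistic calculus ℓIK4: the restriction of ℓK4
to sequents with exactly one formula on the RHS. -/
def RuleLIK4 : Sequent → List Sequent → Prop :=
  fun S ps => RuleLK4 S ps ∧ SingleRHS S ∧ ∀ p ∈ ps, SingleRHS p

/-- ℓIK4 without the thinning rule th. -/
def RuleLIK4NoTh : Sequent → List Sequent → Prop :=
  fun S ps => RuleLK4NoTh S ps ∧ SingleRHS S ∧ ∀ p ∈ ps, SingleRHS p

/-- Finite (wellfounded) derivability from a set of rule instances. -/
inductive Deriv (rule : Sequent → List Sequent → Prop) : Sequent → Prop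
  | step (S : Sequent) (prems : List Sequent) :
      rule S prems → (∀ S' ∈ prems, Deriv rule S') → Deriv rule S

/-! ### Non-wellfounded proofs -/

/-- A (possibly infinite) preproof of `S₀`: a tree of sequents, given as a
partial labelling of finite paths (lists of child indices), whose root is `S₀`
and in which every node is the conclusion of a rule instance whose premisses
are exactly its children. -/
structure Preproof (rule : Sequent → List Sequent → Prop) (S₀ : Sequent) : Type where
  node : List ℕ → Option Sequent
  root : node [] = some S₀
  children : ∀ p S, node p = some S →
    ∃ prems : List Sequent, rule S prems ∧ ∀ i : ℕ, node (p ++ [i]) = prems[i]?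

/-- The path of length `n` along the branch determined by `f`. -/
def branchPath (f : ℕ → ℕ) (n : ℕ) : List ℕ := (List.range n).map f

/-- An infinite sequence of sequents (a branch) has a progressing trace:
from some point on there are labels `x i` occurring in the `i`-th sequent with
either `x (i+1) = x i` or the relational atom `(x i) R (x (i+1))` occurring in
the `i`-th sequent, the latter happening infinitely often. -/
def Progressing (Sb : ℕ → Sequent) : Prop :=
  ∃ (k : ℕ) (x : ℕ → ℕ),
    (∀ i, k ≤ i → x i ∈ (Sb i).vars) ∧
    (∀ i, k ≤ i → x (i + 1) = x i ∨ (x i, x (i + 1)) ∈ (Sb i).rel) ∧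
    (∀ n, ∃ i, n ≤ i ∧ k ≤ i ∧ (x i, x (i + 1)) ∈ (Sb i).rel)

/-- `S₀` has an ∞-proof: a preproof all of whose infinite branches have a
progressing trace. -/
def InfProof (rule : Sequent → List Sequent → Prop) (S₀ : Sequent) : Prop :=
  ∃ P : Preproof rule S₀,
    ∀ (f : ℕ → ℕ) (Sb : ℕ → Sequent),
      (∀ n, P.node (branchPath f n) = some (Sb n)) → Progressing Sb

/-! ### Birelational semantics -/

/-- A birelational model on the set of worlds `W`: an intuitionistic partial
order `le`, an accessibility relation `acc` satisfying the frame conditions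
(F1) and (F2), and a monotone valuation. -/
structure Birel (W : Type) : Type where
  le : W → W → Prop
  le_refl : ∀ w, le w w
  le_trans : ∀ u v w, le u v → le v w → le u w
  le_antisymm : ∀ u v, le u v → le v u → u = v
  acc : W → W → Prop
  F1 : ∀ w w' v, le w w' → acc w v → ∃ v', le v v' ∧ acc w' v'
  F2 : ∀ w v v', acc w v → le v v' → ∃ w', le w w' ∧ acc w' v'
  val : W → ℕ → Prop
  val_mono : ∀ w w', le w w' → ∀ p, val w p → val w' p

/-- Birelational satisfaction. -/
def bsat {W : Type} (B : Birel W) : W → Formula → Prop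
  | w, Formula.atom p  => B.val w p
  | _, Formula.bot     => False
  | w, Formula.and A C => bsat B w A ∧ bsat B w C
  | w, Formula.or  A C => bsat B w A ∨ bsat B w C
  | w, Formula.imp A C => ∀ w', B.le w w' → bsat B w' A → bsat B w' C
  | w, Formula.box A   => ∀ w' v, B.le w w' → B.acc w' v → bsat B v A
  | w, Formula.dia A   => ∃ v, B.acc w v ∧ bsat B v A

/-- Membership in the class birel-IGL: the accessibility relation is
transitive and the composite ≤;R is terminating. -/
def BirelIGL {W : Type} (B : Birel W) : Prop :=
  Transitive B.acc ∧ Terminating (fun u v => ∃ m, B.le u m ∧ B.acc m v)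

/-- An interpretation of a sequent into a birelational model: a map on labels
sending relational atoms of the sequent to accessibility-related worlds. -/
def Interp {W : Type} (B : Birel W) (I : ℕ → W) (S : Sequent) : Prop :=
  ∀ x y, (x, y) ∈ S.rel → B.acc (I x) (I y)

/-- `B, I ⊨ S`. -/
def seqSat {W : Type} (B : Birel W) (I : ℕ → W) (S : Sequent) : Prop :=
  (∀ q ∈ S.left, bsat B (I q.1) q.2) → ∃ q ∈ S.right, bsat B (I q.1) q.2

/-- `B ⊨ S`: satisfaction under every interpretation. -/
def seqValid {W : Type} (B : Birel W) (S : Sequent) : Prop :=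
  ∀ I : ℕ → W, Interp B I S → seqSat B I S

/-- Conjunction of a nonempty list of formulas `A ∧ B₁ ∧ ... ∧ Bₙ`. -/
def conjList : Formula → List Formula → Formula
  | A, [] => A
  | A, B :: l => Formula.and A (conjList B l)

/-! ### (Quasi-)trees -/

/-- A set of relational atoms is a tree: there is a root from which every
other variable is reachable by a unique path of relational atoms. -/
def IsTree (R : Set (ℕ × ℕ)) : Prop :=
  ∃ x₀ ∈ relVars R, ∀ x ∈ relVars R, x ≠ x₀ →
    ∃! l : List ℕ, l ≠ [] ∧ List.Chain (fun a b => (a, b) ∈ R) x₀ l ∧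
      l.getLast? = some x

/-- A quasi-tree: squeezed between a tree and its transitive closure. -/
def IsQuasiTree (R : Set (ℕ × ℕ)) : Prop :=
  ∃ R₀ : Set (ℕ × ℕ), IsTree R₀ ∧ R₀ ⊆ R ∧
    ∀ q ∈ R, Relation.TransGen (fun a b => (a, b) ∈ R₀) q.1 q.2

/-- The (single-succedent) sequent `R, Γ ⇒ x:A` is quasi-tree-like. -/
def QuasiTreeLike (R : Set (ℕ × ℕ)) (Γ : Multiset LFormula) (x : ℕ) : Prop :=
  (R = ∅ ∧ mLabels Γ ⊆ {x}) ∨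
  (IsQuasiTree R ∧ mLabels Γ ∪ {x} ⊆ relVars R)

/-! ### Kripke predicate structures -/

/-- A Kripke (predicate) structure: partially ordered worlds, growing nonempty
domains, monotone interpretations of the unary predicates, and growing binary
relations on the domains. -/
structure Kripke (W D : Type) : Type where
  le : W → W → Prop
  le_refl : ∀ w, le w w
  le_trans : ∀ u v w, le u v → le v w → le u w
  le_antisymm : ∀ u v, le u v → le v u → u = v
  Dom : W → Set D
  Dom_ne : ∀ w, (Dom w).Nonempty
  Dom_mono : ∀ w w', le w w' → Dom w ⊆ Dom w'
  Pr : W → ℕ → Set D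
  Pr_sub : ∀ w p, Pr w p ⊆ Dom w
  Pr_mono : ∀ w w' p, le w w' → Pr w p ⊆ Pr w' p
  Rel : W → D → D → Prop
  Rel_dom : ∀ w d e, Rel w d e → d ∈ Dom w ∧ e ∈ Dom w
  Rel_mono : ∀ w w' d e, le w w' → Rel w d e → Rel w' d e

/-- Satisfaction `K, w ⊨^ρ ⟨A⟩ₓ` of the standard translation of `A`; since the
translation of `A` at `x` has only `x` free, satisfaction is presented through
the value `d = ρ x` of the environment at `x`. -/
def ksat {W D : Type} (K : Kripke W D) : W → D → Formula → Prop
  | w, d, Formula.atom p  => d ∈ K.Pr w p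
  | _, _, Formula.bot     => False
  | w, d, Formula.and A B => ksat K w d A ∧ ksat K w d B
  | w, d, Formula.or  A B => ksat K w d A ∨ ksat K w d B
  | w, d, Formula.imp A B => ∀ w', K.le w w' → ksat K w' d A → ksat K w' d B
  | w, d, Formula.box A   => ∀ w' e, K.le w w' → K.Rel w' d e → ksat K w' e A
  | w, d, Formula.dia A   => ∃ e, K.Rel w d e ∧ ksat K w e A

/-- Membership in the class pred-IGL: each `R_w` is transitive and the
composite `≤_{D_W} ; R_{D_W}` on pairs `(w, d)` with `d ∈ D_w` is terminating. -/
def PredIGL {W D : Type} (K : Kripke W D) : Prop :=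
  (∀ w, Transitive (K.Rel w)) ∧
  ¬ ∃ (f : ℕ → W) (g : ℕ → D),
      ∀ n, g n ∈ K.Dom (f n) ∧ K.le (f n) (f (n + 1)) ∧
        K.Rel (f (n + 1)) (g n) (g (n + 1))


structure TG (P M : Type) where
  av : P → M → Prop
  rp : P → M → P → Prop
  par : P → P
  d : P → ℕ
  av_ex : ∀ p, ∃ m, av p m
  hpar : ∀ p m q, rp p m q → par q = p
  hd : ∀ p m q, rp p m q → d q = d p + 1

namespace TG
variable {P M : Type} (G : TG P M)

def Pl (T : Set P) (σ : P → M) (p : P) (f : ℕ → P) : Prop :=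
  f 0 = p ∧ ∀ n, G.rp (f n) (σ (f n)) (f (n+1)) ∧ f (n+1) ∈ T

def Win (T : Set P) (A : (ℕ → P) → Prop) (p : P) : Prop :=
  ∃ σ : P → M, (∀ q, G.av q (σ q)) ∧ ∀ f, G.Pl T σ p f → A f

def APl (T : Set P) (p : P) (f : ℕ → P) : Prop :=
  f 0 = p ∧ ∀ n, (∃ m, G.rp (f n) m (f (n+1))) ∧ f (n+1) ∈ T

def Ioft (e : Set P) (f : ℕ → P) : Prop := ∀ N, ∃ n, N ≤ n ∧ f n ∈ e

def Good (T e : Set P) (A : (ℕ → P) → Prop) (q : P) : Prop :=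
  ∃ U, U ⊆ T ∧ q ∈ U ∧ (∀ f, G.APl U q f → ¬ Ioft e f) ∧ ¬ G.Win U A q

def Inv (A : (ℕ → P) → Prop) : Prop := ∀ f, A f ↔ A (fun n => f (n+1))

theorem Inv.shift {A : (ℕ → P) → Prop} (h : Inv A) (k : ℕ) (f : ℕ → P) :
    A f ↔ A (fun n => f (k+n)) := by
  induction k with
  | zero => simp
  | succ k ih =>
    rw [ih, h]
    have : (fun n => f (k+1+n)) = (fun n => (fun n => f (k+n)) (n+1)) := by
      funext n; congr 1; omega
    rw [this]

theorem Ioft_inv (e : Set P) : Inv (Ioft e) := by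
  intro f; constructor
  · intro h N
    obtain ⟨n, hn, hf⟩ := h (N+1)
    exact ⟨n-1, by omega, by simpa only [show n - 1 + 1 = n by omega] using hf⟩
  · intro h N
    obtain ⟨n, hn, hf⟩ := h N
    exact ⟨n+1, by omega, hf⟩

variable {G} in
theorem Pl.toA {T : Set P} {σ p f} (h : G.Pl T σ p f) : G.APl T p f :=
  ⟨h.1, fun n => ⟨⟨_, (h.2 n).1⟩, (h.2 n).2⟩⟩

variable {G} in
theorem APl.par {T : Set P} {p f} (h : G.APl T p f) (n : ℕ) : G.par (f (n+1)) = f n := by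
  obtain ⟨⟨m, hm⟩, _⟩ := h.2 n
  exact G.hpar _ _ _ hm

variable {G} in
theorem APl.d {T : Set P} {p f} (h : G.APl T p f) (n : ℕ) : G.d (f n) = G.d p + n := by
  induction n with
  | zero => simp [h.1]
  | succ n ih =>
    obtain ⟨⟨m, hm⟩, _⟩ := h.2 n
    rw [G.hd _ _ _ hm, ih]; omega

variable {G} in
theorem APl.shift {T : Set P} {p f} (h : G.APl T p f) (k : ℕ) :
    G.APl T (f k) (fun n => f (k+n)) := ⟨rfl, fun n => h.2 (k+n)⟩

open Classical in
noncomputable def cur (Z : Set P) : ℕ → P → P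
  | 0, q => q
  | n+1, q => if q ∈ Z then q else cur Z n (G.par q)

theorem glue (Z T : Set P) (τ : P → P → M) (hτ : ∀ z q, G.av q (τ z q)) (z0 : P) :
    ∃ σ : P → M, (∀ q, G.av q (σ q)) ∧ ∀ f, G.Pl T σ z0 f → ∀ k, (k = 0 ∨ f k ∈ Z) →
      (∀ i, k < i → f i ∉ Z) → G.Pl T (τ (f k)) (f k) (fun n => f (k+n)) := by
  refine ⟨fun q => τ (G.cur Z (G.d q - G.d z0) q) q, fun q => hτ _ _, ?_⟩
  intro f hf k hk hno
  have hc : ∀ j, G.cur Z (k+j) (f (k+j)) = f k := by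
    intro j
    induction j with
    | zero =>
      rcases k with _ | k
      · rfl
      · have : f (k+1) ∈ Z := by rcases hk with h | h; omega; exact h
        simp [cur, this]
    | succ j ih =>
      have h1 := hno (k+(j+1)) (by omega)
      rw [show k + (j+1) = (k+j)+1 by omega] at h1 ⊢
      rw [cur, if_neg h1, hf.toA.par, ih]
  refine ⟨rfl, fun n => ?_⟩
  have h2 := hf.2 (k+n)
  simp only [] at h2
  rw [hf.toA.d, Nat.add_sub_cancel_left, hc] at h2
  exact h2

theorem glueA (Z T : Set P) (τ : P → P → M) (hτ : ∀ z q, G.av q (τ z q))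
    (z0 : P) : ∃ σ : P → M, (∀ q, G.av q (σ q)) ∧ ∀ f, G.Pl T σ z0 f →
      Ioft Z f ∨ ∃ k, (k = 0 ∨ f k ∈ Z) ∧ (∀ i, k < i → f i ∉ Z) ∧
       G.Pl T (τ (f k)) (f k) (fun n => f (k+n)) := by
  obtain ⟨σ, h1, h2⟩ := G.glue Z T τ hτ z0
  refine ⟨σ, h1, fun f hf => ?_⟩
  by_cases hio : Ioft Z f
  · exact Or.inl hio
  right
  unfold Ioft at hio
  push Not at hio
  have hex : ∃ k, ∀ i, k < i → f i ∉ Z := by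
    obtain ⟨N, hN⟩ := hio
    exact ⟨N, fun i hi => hN i hi.le⟩
  classical
  have hk := Nat.find_spec hex
  have hm := fun m => Nat.find_min hex (m := m)
  set k := Nat.find hex
  have hkz : k = 0 ∨ f k ∈ Z := by
    by_contra hcon
    push Not at hcon
    apply hm (k-1) (by omega)
    intro i hi
    by_cases h : i = k
    · rw [h]; exact hcon.2
    · exact hk i (by omega)
  exact ⟨k, hkz, hk, h2 f hf k hkz hk⟩

open Classical in
noncomputable def cls (S : Set P) : ℕ → P → Option P
  | 0, _ => none
  | n+1, r => match cls S n (G.par r) with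
    | some q => some q
    | none => if r ∈ S then some r else none

variable {G} in
theorem cls_none {S : Set P} {f : ℕ → P} (hp : ∀ n, G.par (f (n+1)) = f n) (n : ℕ)
    (h : ∀ i, 1 ≤ i → i ≤ n → f i ∉ S) : G.cls S n (f n) = none := by
  induction n with
  | zero => rfl
  | succ n ih =>
    rw [cls, hp, ih (fun i h1 h2 => h i h1 (by omega))]
    simp [h (n+1) (by omega) le_rfl]

variable {G} in
theorem cls_some {S : Set P} {f : ℕ → P} (hp : ∀ n, G.par (f (n+1)) = f n) (i : ℕ) (h1 : 1 ≤ i)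
    (hi : f i ∈ S) (h : ∀ j, 1 ≤ j → j < i → f j ∉ S) (n : ℕ) :
    G.cls S (i+n) (f (i+n)) = some (f i) := by
  induction n with
  | zero =>
    obtain ⟨k, rfl⟩ : ∃ k, i = k+1 := ⟨i-1, by omega⟩
    have := cls_none (G := G) hp k (S := S) (fun j h1 h2 => h j h1 (by omega))
    rw [Nat.add_zero, cls, hp, this]
    simp [hi]
  | succ n ih => rw [← Nat.add_assoc, cls, hp, ih]

theorem first_cases (S : Set P) (f : ℕ → P) : (∀ i, 1 ≤ i → f i ∉ S) ∨
    ∃ i, 1 ≤ i ∧ f i ∈ S ∧ ∀ j, 1 ≤ j → j < i → f j ∉ S := by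
  classical
  by_cases h : ∃ i, 1 ≤ i ∧ f i ∈ S
  · right
    exact ⟨Nat.find h, (Nat.find_spec h).1, (Nat.find_spec h).2,
      fun j h1 h2 h3 => Nat.find_min h h2 ⟨h1, h3⟩⟩
  · left; push Not at h; exact h

theorem first (S T : Set P) (σ0 : P → M) (h0 : ∀ q, G.av q (σ0 q)) (τ : P → P → M)
    (hτ : ∀ z q, G.av q (τ z q)) (p : P) :
    ∃ σ : P → M, (∀ q, G.av q (σ q)) ∧ ∀ f, G.Pl T σ p f → G.rp p (σ0 p) (f 1) ∧
      (((∀ i, 1 ≤ i → f i ∉ S) ∧ G.Pl T σ0 p f) ∨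
       ∃ i, 1 ≤ i ∧ f i ∈ S ∧ G.Pl T (τ (f i)) (f i) (fun n => f (i+n))) := by
  refine ⟨fun q => match G.cls S (G.d q - G.d p) q with
    | none => σ0 q
    | some z => τ z q, ?_, ?_⟩
  · intro q; dsimp only; split
    · exact h0 q
    · exact hτ _ q
  intro f hf
  have hp := hf.toA.par
  have hs : ∀ n, ∀ o, G.cls S n (f n) = o → G.rp (f n) (match o with
    | none => σ0 (f n)
    | some z => τ z (f n)) (f (n+1)) ∧ f (n+1) ∈ T := by
    intro n o ho
    have := hf.2 n
    simp only [hf.toA.d, Nat.add_sub_cancel_left, ho] at this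
    exact this
  refine ⟨?_, ?_⟩
  · have := (hs 0 none rfl).1
    simpa [hf.1] using this
  rcases first_cases S f with h | ⟨i, h1, hi, h2⟩
  · left
    exact ⟨h, hf.1, fun n => hs n none (cls_none hp n (fun i h1 _ => h i h1))⟩
  · right
    exact ⟨i, h1, hi, rfl, fun n => hs (i+n) (some (f i)) (cls_some hp i h1 hi h2 n)⟩

open Classical in
theorem exStrat (T : Set P) (A : (ℕ → P) → Prop) : ∃ τ : P → P → M, (∀ z q, G.av q (τ z q)) ∧
    ∀ z, G.Win T A z → ∀ f, G.Pl T (τ z) z f → A f := by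
  choose m0 hm0 using G.av_ex
  refine ⟨fun z q => if h : G.Win T A z then h.choose q else m0 q, ?_, ?_⟩
  · intro z q; dsimp only; split_ifs with h
    · exact h.choose_spec.1 q
    · exact hm0 q
  · intro z hz f hf
    simp only [hz, dif_pos] at hf
    exact hz.choose_spec.2 f hf

open Classical in
theorem L1 {T : Set P} {A : (ℕ → P) → Prop} (hA : Inv A) {p : P} (h : ¬ G.Win T A p) {m : M}
    (hm : G.av p m) : ∃ q, G.rp p m q ∧ q ∈ T ∧ ¬ G.Win T A q := by
  by_contra hcon
  push Not at hcon
  apply h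
  choose m0 hm0 using G.av_ex
  obtain ⟨τ, hτ, hw⟩ := G.exStrat T A
  obtain ⟨σ, hσ, hg⟩ := G.first {r | G.Win T A r} T (fun q => if q = p then m else m0 q)
    (by intro q; split_ifs with h1
        · exact h1 ▸ hm
        · exact hm0 q) τ hτ p
  refine ⟨σ, hσ, fun f hf => ?_⟩
  obtain ⟨h1, h2⟩ := hg f hf
  simp only [if_true] at h1
  have h3 := hcon (f 1) h1 (hf.2 0).2
  rcases h2 with ⟨h2, _⟩ | ⟨i, _, hi, h2⟩
  · exact absurd h3 (h2 1 le_rfl)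
  · rw [hA.shift i]; exact hw _ hi _ h2

theorem davis {T e : Set P} {A : (ℕ → P) → Prop} (hA : Inv A) (hB : ∀ f, Ioft e f → A f) {p : P}
    (hpT : p ∈ T) (hp : ¬ G.Win T A p) : G.Good T e A p := by
  classical
  by_contra hng
  let E : Set P := {r | r ∈ T ∧ r ∈ e ∧ ¬ G.Good T e A r}
  let AE : (ℕ → P) → Prop := fun f => A f ∨ ∃ n, 1 ≤ n ∧ f n ∈ E
  obtain ⟨τ, hτ, hw⟩ := G.exStrat T AE
  have claim : ∀ z, z ∈ T → ¬ G.Good T e A z → G.Win T AE z := by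
    intro z hz hzg
    have hU : ∀ q, ∃ U : Set P, G.Good T e A q → U ⊆ T ∧ q ∈ U ∧
        (∀ f, G.APl U q f → ¬ Ioft e f) ∧ ¬ G.Win U A q := by
      intro q
      by_cases h : G.Good T e A q
      · obtain ⟨U, hU⟩ := h
        exact ⟨U, fun _ => hU⟩
      · exact ⟨∅, fun h' => absurd h' h⟩
    choose U hU using hU
    by_contra hzw
    let ok : P → Option P → Prop := fun r o => match o with
      | none => r = z ∨ ¬ G.Win T AE r
      | some q => G.Good T e A q ∧ r ∈ U q
    let T' : Set P := {r | r ∈ T ∧ ok r (G.cls e (G.d r - G.d z) r)}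
    have hzT' : z ∈ T' := by
      refine ⟨hz, ?_⟩
      simp [cls, ok]
    have hT' : T' ⊆ T := fun r h => h.1
    have hav : ∀ f, G.APl T' z f → ¬ Ioft e f := by
      intro f hf hio
      have hpar := hf.par
      rcases first_cases e f with h | ⟨i, h1, hi, h2⟩
      · obtain ⟨n, hn, hne⟩ := hio 1
        exact h n hn hne
      have hs : ∀ n, ok (f (i+n)) (some (f i)) := by
        intro n
        have h3 := (hf.2 (i+n-1)).2
        rw [show i+n-1+1 = i+n by omega] at h3
        have h4 := h3.2
        rw [hf.d, Nat.add_sub_cancel_left, cls_some hpar i h1 hi h2 n] at h4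
        exact h4
      have hg := (hs 0).1
      apply (hU _ hg).2.2.1 (fun n => f (i+n)) ⟨rfl, fun n => ⟨(hf.2 (i+n)).1, (hs (n+1)).2⟩⟩
      exact ((Ioft_inv e).shift i f).1 hio
    have hwin : G.Win T' A z := by
      by_contra h
      exact hzg ⟨T', hT', hzT', hav, h⟩
    obtain ⟨σ0, h0, hσ0⟩ := hwin
    apply hzw
    obtain ⟨σ, hσ, hg⟩ := G.first {r | G.Win T AE r} T σ0 h0 τ hτ z
    refine ⟨σ, hσ, fun f hf => ?_⟩
    obtain ⟨-, ⟨h1, h2⟩ | ⟨i, h1, hi, h2⟩⟩ := hg f hf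
    · by_cases hE : ∃ n, 1 ≤ n ∧ f n ∈ E
      · exact Or.inr hE
      left
      push Not at hE
      have hpar := hf.toA.par
      have hin : ∀ n, f n ∈ T' ∧ ∀ i, 1 ≤ i → i ≤ n → f i ∉ e := by
        intro n
        induction n using Nat.strong_induction_on with
        | _ n ih =>
        rcases n with _ | n
        · exact ⟨hf.1 ▸ hzT', fun i h1 h2 => by omega⟩
        have hne : ∀ i, 1 ≤ i → i ≤ n → f i ∉ e := (ih n (by omega)).2
        have hne' : f (n+1) ∉ e := by
          intro hin
          have hgood : G.Good T e A (f (n+1)) := by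
            by_contra hbad
            exact hE (n+1) (by omega) ⟨(hf.2 n).2, hin, hbad⟩
          apply (hU _ hgood).2.2.2
          refine ⟨σ0, h0, fun g hgp => ?_⟩
          have hh := hσ0 (fun i => if i ≤ n then f i else g (i-(n+1))) ?_
          · rw [hA.shift (n+1)] at hh
            convert hh using 1
            funext k
            simp [show ¬ (n+1+k ≤ n) by omega]
          have hle : ∀ i, i ≤ n+1 → (fun i => if i ≤ n then f i else g (i-(n+1))) i = f i := by
            intro i hi
            by_cases h : i ≤ n
            · simp [h]
            · have : i = n+1 := by omega
              subst this
              simp [hgp.1]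
          set h := (fun i => if i ≤ n then f i else g (i-(n+1))) with hh
          have hge : ∀ k, h (n+1+k) = g k := by
            intro k; simp [hh, show ¬ (n+1+k ≤ n) by omega]
          have hap : ∀ k, G.rp (h k) (σ0 (h k)) (h (k+1)) := by
            intro k
            by_cases hk : k ≤ n
            · rw [hle k (by omega), hle (k+1) (by omega)]
              exact (h2.2 k).1
            · obtain ⟨j, rfl⟩ : ∃ j, k = n+1+j := ⟨k-(n+1), by omega⟩
              rw [hge, show n+1+j+1 = n+1+(j+1) by omega, hge]
              exact (hgp.2 j).1
          have hp' : ∀ k, G.par (h (k+1)) = h k := fun k => G.hpar _ _ _ (hap k)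
          have hz0 : h 0 = z := by rw [hle 0 (by omega)]; exact hf.1
          have hd' : ∀ k, G.d (h k) = G.d z + k := by
            intro k; induction k with
            | zero => rw [hz0]; rfl
            | succ k ih => rw [G.hd _ _ _ (hap k), ih]; omega
          refine ⟨hz0, fun k => ⟨hap k, ?_⟩⟩
          by_cases hk : k+1 ≤ n
          · rw [hle _ (by omega)]; exact (ih _ (by omega)).1
          · obtain ⟨j, hj⟩ : ∃ j, k + 1 = n+1+j := ⟨k-n, by omega⟩
            rw [hj]
            have hgj : g j ∈ U (f (n+1)) := by
              rcases j with _ | j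
              · rw [hgp.1]; exact (hU _ hgood).2.1
              · exact (hgp.2 j).2
            have hc := cls_some (G := G) hp' (n+1) (by omega) (S := e)
              (by rw [hle _ le_rfl]; exact hin)
              (fun j h1 h2 => by rw [hle _ (by omega)]; exact hne j h1 (by omega)) j
            refine ⟨?_, ?_⟩
            · rw [hge]; exact (hU _ hgood).1 hgj
            · rw [hd', Nat.add_sub_cancel_left, hc, hge, hle _ le_rfl]
              exact ⟨hgood, hgj⟩
        have hne2 : ∀ i, 1 ≤ i → i ≤ n+1 → f i ∉ e := by
          intro i h1 h2
          by_cases h : i = n+1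
          · rw [h]; exact hne'
          · exact hne i h1 (by omega)
        refine ⟨⟨(hf.2 n).2, ?_⟩, hne2⟩
        rw [hf.toA.d, Nat.add_sub_cancel_left, cls_none hpar (n+1) hne2]
        exact Or.inr (h1 (n+1) (by omega))
      exact hσ0 f ⟨hf.1, fun n => ⟨(h2.2 n).1, (hin (n+1)).1⟩⟩
    · rcases hw _ hi _ h2 with h | ⟨n, hn, hE⟩
      · left; rw [hA.shift i]; exact h
      · exact Or.inr ⟨i+n, by omega, hE⟩
  apply hp
  obtain ⟨σ, hσ, hg⟩ := G.glueA E T τ hτ p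
  refine ⟨σ, hσ, fun f hf => ?_⟩
  rcases hg f hf with h | ⟨k, hk, hno, hpl⟩
  · apply hB
    intro N
    obtain ⟨n, hn, hE⟩ := h N
    exact ⟨n, hn, hE.2.1⟩
  · have hwk : G.Win T AE (f k) := by
      rcases hk with hk | hk
      · subst hk; rw [hf.1]; exact claim p hpT hng
      · exact claim _ hk.1 hk.2.2
    rcases hw _ hwk _ hpl with h | ⟨n, hn, hE⟩
    · rw [hA.shift k]; exact h
    · exact absurd hE (hno (k+n) (by omega))

def Aof (e : ℕ → Set P) : (ℕ → P) → Prop := fun f => ∃ v, Ioft (e v) f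

theorem Aof_inv (e : ℕ → Set P) : Inv (Aof e) := by
  intro f
  exact exists_congr fun v => Ioft_inv (e v) f

structure OS (e : ℕ → Set P) where
  lev : ℕ
  T : Set P
  pos : P
  hT : pos ∈ T
  nw : ¬ G.Win T (Aof e) pos
  hav : ∀ v, v < lev → ∀ f, G.APl T pos f → ¬ Ioft (e v) f

theorem OS_step (e : ℕ → Set P) (o : G.OS e) (m : M) (hm : G.av o.pos m) :
    ∃ o' : G.OS e, G.rp o.pos m o'.pos ∧ o'.lev = o.lev + 1 ∧ o'.T ⊆ o.T := by
  obtain ⟨U, hUT, hpU, hav, hnw⟩ := G.davis (e := e o.lev) (Aof_inv e) (fun f hf => ⟨_, hf⟩) o.hT o.nw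
  obtain ⟨q, hq, hqU, hqw⟩ := G.L1 (Aof_inv e) hnw hm
  refine ⟨⟨o.lev+1, U, q, hqU, hqw, ?_⟩, hq, rfl, hUT⟩
  intro v hv f hf hio
  let g : ℕ → P := fun n => match n with | 0 => o.pos | n+1 => f n
  have hg : G.APl U o.pos g := by
    refine ⟨rfl, fun n => ?_⟩
    rcases n with _ | n
    · have : f 0 = q := hf.1
      exact ⟨⟨m, by simpa [g, this] using hq⟩, by simpa [g, this] using hqU⟩
    · exact hf.2 n
  have hgio : Ioft (e v) g := (Ioft_inv (e v) g).2 hio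
  by_cases h : v = o.lev
  · subst h; exact hav g hg hgio
  · exact o.hav v (by omega) g ⟨hg.1, fun n => ⟨(hg.2 n).1, hUT (hg.2 n).2⟩⟩ hgio

open Classical in
noncomputable def resp (e : ℕ → Set P) (o : G.OS e) (m : M) : G.OS e :=
  if h : G.av o.pos m then (G.OS_step e o m h).choose else o

variable {G} in
theorem resp_spec {e : ℕ → Set P} {o : G.OS e} {m : M} (hm : G.av o.pos m) :
    G.rp o.pos m (G.resp e o m).pos ∧ (G.resp e o m).lev = o.lev + 1 ∧ (G.resp e o m).T ⊆ o.T := by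
  unfold resp
  rw [dif_pos hm]
  exact (G.OS_step e o m hm).choose_spec

variable {G} in
theorem chain_not {e : ℕ → Set P} {c : ℕ → G.OS e} {m : ℕ → M} (hm : ∀ n, G.av (c n).pos (m n))
    (hc : ∀ n, c (n+1) = G.resp e (c n) (m n)) (v : ℕ) : ¬ Ioft (e v) (fun n => (c n).pos) := by
  intro hio
  have hl : ∀ n, n ≤ (c n).lev := by
    intro n; induction n with
    | zero => omega
    | succ n ih => rw [hc, (resp_spec (hm n)).2.1]; omega
  have hT : ∀ k n, (c (k+n)).T ⊆ (c k).T := by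
    intro k n; induction n with
    | zero => exact fun _ h => h
    | succ n ih => rw [← Nat.add_assoc, hc]; exact (resp_spec (hm _)).2.2.trans ih
  refine (c (v+1)).hav v (hl (v+1)) (fun n => (c (v+1+n)).pos) ⟨rfl, fun n => ⟨⟨m (v+1+n), ?_⟩, ?_⟩⟩
    (((Ioft_inv (e v)).shift (v+1) _).1 hio)
  · dsimp only; rw [← Nat.add_assoc, hc]; exact (resp_spec (hm _)).1
  · exact hT _ _ (c (v+1+(n+1))).hT

end TG


noncomputable instance instDecEqFormula : DecidableEq Formula := Classical.decEq _

abbrev Nd := List ℕ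

def PS (x y : Nd) : Prop := x <:+ y ∧ x ≠ y

theorem PS.len {x y : Nd} (h : PS x y) : x.length < y.length :=
  lt_of_le_of_ne h.1.length_le fun e => h.2 (h.1.eq_of_length e)

theorem PS.trans {x y z : Nd} (h : PS x y) (h' : PS y z) : PS x z :=
  ⟨h.1.trans h'.1, fun e => by subst e; have := h.len; have := h'.len; omega⟩

theorem PS_cons {x y : Nd} {k : ℕ} : PS x (k :: y) ↔ x <:+ y := by
  constructor
  · rintro ⟨h, hn⟩
    rcases List.suffix_cons_iff.1 h with h | h
    · exact absurd h hn
    · exact h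
  · intro h
    refine ⟨h.trans (List.suffix_cons _ _), fun e => ?_⟩
    have := h.length_le
    rw [e] at this
    simp at this

theorem PS_cons' {x y : Nd} {k : ℕ} : PS x (k :: y) ↔ x = y ∨ PS x y := by
  rw [PS_cons]
  unfold PS
  constructor
  · intro h; by_cases e : x = y
    · exact Or.inl e
    · exact Or.inr ⟨h, e⟩
  · rintro (rfl | h)
    · exact List.suffix_rfl
    · exact h.1

theorem PS_self_cons (x : Nd) (k : ℕ) : PS x (k :: x) := PS_cons.2 List.suffix_rfl

structure St : Type where
  V : Finset Nd
  L : Finset (Nd × Formula)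
  g : Nd × Formula

structure SubC (Sg : Finset Formula) : Prop where
  and1 : ∀ A B, Formula.and A B ∈ Sg → A ∈ Sg
  and2 : ∀ A B, Formula.and A B ∈ Sg → B ∈ Sg
  or1 : ∀ A B, Formula.or A B ∈ Sg → A ∈ Sg
  or2 : ∀ A B, Formula.or A B ∈ Sg → B ∈ Sg
  imp1 : ∀ A B, Formula.imp A B ∈ Sg → A ∈ Sg
  imp2 : ∀ A B, Formula.imp A B ∈ Sg → B ∈ Sg
  box : ∀ A, Formula.box A ∈ Sg → A ∈ Sg
  dia : ∀ A, Formula.dia A ∈ Sg → A ∈ Sg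

noncomputable def subF : Formula → Finset Formula
  | .atom p => {.atom p}
  | .bot => {.bot}
  | .and A B => insert (.and A B) (subF A ∪ subF B)
  | .or A B => insert (.or A B) (subF A ∪ subF B)
  | .imp A B => insert (.imp A B) (subF A ∪ subF B)
  | .box A => insert (.box A) (subF A)
  | .dia A => insert (.dia A) (subF A)

theorem self_subF (A : Formula) : A ∈ subF A := by cases A <;> simp [subF]

theorem subF_trans {A B : Formula} (h : B ∈ subF A) : subF B ⊆ subF A := by
  induction A with
  | atom p => simp [subF] at h; subst h; exact subset_rfl
  | bot => simp [subF] at h; subst h; exact subset_rfl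
  | and C D h1 h2 | or C D h1 h2 | imp C D h1 h2 =>
    simp only [subF, Finset.mem_insert, Finset.mem_union] at h
    rcases h with rfl | h | h
    · exact subset_rfl
    · intro z hz; have := h1 h hz; simp [subF, this]
    · intro z hz; have := h2 h hz; simp [subF, this]
  | box C h1 | dia C h1 =>
    simp only [subF, Finset.mem_insert] at h
    rcases h with rfl | h
    · exact subset_rfl
    · intro z hz; have := h1 h hz; simp [subF, this]

theorem subF_subC (A : Formula) : SubC (subF A) := by
  constructor <;> intros <;> (rename_i h; apply subF_trans h; simp [subF, self_subF])

structure WF (Sg : Finset Formula) (S : St) : Prop where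
  root : [] ∈ S.V
  tl : ∀ k x, k :: x ∈ S.V → x ∈ S.V
  LV : ∀ x A, (x, A) ∈ S.L → x ∈ S.V
  LS : ∀ x A, (x, A) ∈ S.L → A ∈ Sg
  gV : S.g.1 ∈ S.V
  gS : S.g.2 ∈ Sg

theorem WF.suf {Sg : Finset Formula} {S : St} (h : WF Sg S) {x y : Nd} (hy : y ∈ S.V) (hs : x <:+ y) :
    x ∈ S.V := by
  induction y with
  | nil => rw [List.suffix_nil.1 hs]; exact hy
  | cons k y ih =>
    rcases List.suffix_cons_iff.1 hs with rfl | hs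
    · exact hy
    · exact ih (h.tl _ _ hy) hs

inductive Closed (S : St) : Prop
  | ax : S.g ∈ S.L → Closed S
  | bot (x : Nd) : (x, Formula.bot) ∈ S.L → Closed S
  | andL1 (x : Nd) (A B : Formula) : (x, Formula.and A B) ∈ S.L → S.g = (x, A) → Closed S
  | andL2 (x : Nd) (A B : Formula) : (x, Formula.and A B) ∈ S.L → S.g = (x, B) → Closed S
  | andR (x : Nd) (A B : Formula) : (x, A) ∈ S.L → (x, B) ∈ S.L → S.g = (x, Formula.and A B) → Closed S
  | orR1 (x : Nd) (A B : Formula) : (x, A) ∈ S.L → S.g = (x, Formula.or A B) → Closed S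
  | orR2 (x : Nd) (A B : Formula) : (x, B) ∈ S.L → S.g = (x, Formula.or A B) → Closed S
  | impL (x : Nd) (A B : Formula) : (x, Formula.imp A B) ∈ S.L → (x, A) ∈ S.L → S.g = (x, B) → Closed S
  | boxL (x y : Nd) (A : Formula) : (x, Formula.box A) ∈ S.L → PS x y → y ∈ S.V → S.g = (y, A) → Closed S
  | diaR (x y : Nd) (A : Formula) : (y, A) ∈ S.L → PS x y → S.g = (x, Formula.dia A) → Closed S
  | four (x y : Nd) (A : Formula) : (x, Formula.box A) ∈ S.L → PS x y → y ∈ S.V →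
      S.g = (y, Formula.box A) → Closed S

theorem WF.ins {Sg : Finset Formula} {S : St} (h : WF Sg S) {x : Nd} {A : Formula} {q : Nd × Formula}
    (hx : x ∈ S.V) (hA : A ∈ Sg) (hq : q.1 ∈ S.V) (hq' : q.2 ∈ Sg) :
    WF Sg ⟨S.V, insert (x, A) S.L, q⟩ where
  root := h.root
  tl := h.tl
  LV := by
    intro y B hB
    rcases Finset.mem_insert.1 hB with e | hB
    · cases e; exact hx
    · exact h.LV _ _ hB
  LS := by
    intro y B hB
    rcases Finset.mem_insert.1 hB with e | hB
    · cases e; exact hA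
    · exact h.LS _ _ hB
  gV := hq
  gS := hq'

theorem WF.goal {Sg : Finset Formula} {S : St} (h : WF Sg S) {q : Nd × Formula}
    (hq : q.1 ∈ S.V) (hq' : q.2 ∈ Sg) : WF Sg ⟨S.V, S.L, q⟩ :=
  ⟨h.root, h.tl, h.LV, h.LS, hq, hq'⟩

theorem WF.new {Sg : Finset Formula} {S : St} (h : WF Sg S) {x : Nd} (k : ℕ) (hx : x ∈ S.V) :
    WF Sg ⟨insert (k :: x) S.V, S.L, S.g⟩ where
  root := by simp [h.root]
  tl := by
    intro j y hj
    rcases Finset.mem_insert.1 hj with e | hj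
    · cases e; exact Finset.mem_insert_of_mem hx
    · exact Finset.mem_insert_of_mem (h.tl _ _ hj)
  LV := fun y B hB => Finset.mem_insert_of_mem (h.LV _ _ hB)
  LS := h.LS
  gV := Finset.mem_insert_of_mem h.gV
  gS := h.gS


def fc : Formula → ℕ
  | .atom n => Nat.pair 0 n
  | .bot => Nat.pair 1 0
  | .and A B => Nat.pair 2 (Nat.pair (fc A) (fc B))
  | .or A B => Nat.pair 3 (Nat.pair (fc A) (fc B))
  | .imp A B => Nat.pair 4 (Nat.pair (fc A) (fc B))
  | .box A => Nat.pair 5 (fc A)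
  | .dia A => Nat.pair 6 (fc A)

theorem fc_inj : ∀ A B : Formula, fc A = fc B → A = B := by
  intro A
  induction A with
  | atom n => intro B h; cases B <;> simp [fc, Nat.pair_eq_pair] at h; subst h; rfl
  | bot => intro B h; cases B <;> simp [fc, Nat.pair_eq_pair] at h; rfl
  | and A1 A2 h1 h2 | or A1 A2 h1 h2 | imp A1 A2 h1 h2 =>
    intro B h; cases B <;> simp [fc, Nat.pair_eq_pair] at h; rw [h1 _ h.1, h2 _ h.2]
  | box A1 h1 | dia A1 h1 =>
    intro B h; cases B <;> simp [fc, Nat.pair_eq_pair] at h; rw [h1 _ h]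

def dc (A : Formula) (x : Nd) : Nd := (2 * fc A) :: x
def oc (A : Formula) (j : ℕ) (x : Nd) : Nd := (2 * Nat.pair (fc A) j + 1) :: x

theorem dc_inj {A B : Formula} {x y : Nd} (h : dc A x = dc B y) : A = B ∧ x = y := by
  unfold dc at h
  injection h with h1 h2
  exact ⟨fc_inj _ _ (by omega), h2⟩

theorem oc_inj {A B : Formula} {i j : ℕ} {x y : Nd} (h : oc A i x = oc B j y) : A = B ∧ i = j ∧ x = y := by
  unfold oc at h
  injection h with h1 h2
  have h3 : Nat.pair (fc A) i = Nat.pair (fc B) j := by omega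
  rw [Nat.pair_eq_pair] at h3
  exact ⟨fc_inj _ _ h3.1, h3.2, h2⟩

theorem dc_ne_oc {A B : Formula} {j : ℕ} {x y : Nd} (h : dc A x = oc B j y) : False := by
  unfold oc dc at h
  injection h with h1 h2
  omega

structure WG (Sg : Finset Formula) (S : St) : Prop extends WF Sg S where
  ev : ∀ A x, dc A x ∈ S.V → (dc A x, A) ∈ S.L
  od : ∀ A j x, oc A j x ∈ S.V → (oc A j x, Formula.box A) ∈ S.L
  hd : ∀ k x, k :: x ∈ S.V → (∃ A ∈ Sg, k = 2 * fc A) ∨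
    ∃ A j, Formula.box A ∈ Sg ∧ k = 2 * Nat.pair (fc A) j + 1

inductive Mv : Type
  | ax
  | cut (x : Nd) (A : Formula)
  | orL (x : Nd) (A B : Formula)
  | diaL (x : Nd) (A : Formula)
  | impR (x : Nd) (A B : Formula)
  | boxR (x : Nd) (A : Formula)

inductive App (Sg : Finset Formula) (S : St) : Mv → Prop
  | ax : Closed S → App Sg S .ax
  | cut (x : Nd) (A : Formula) : x ∈ S.V → A ∈ Sg → App Sg S (.cut x A)
  | orL (x : Nd) (A B : Formula) : (x, Formula.or A B) ∈ S.L → App Sg S (.orL x A B)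
  | diaL (x : Nd) (A : Formula) : (x, Formula.dia A) ∈ S.L → dc A x ∉ S.V → App Sg S (.diaL x A)
  | impR (x : Nd) (A B : Formula) : S.g = (x, Formula.imp A B) → App Sg S (.impR x A B)
  | boxR (x : Nd) (A : Formula) : S.g = (x, Formula.box A) → App Sg S (.boxR x A)

inductive Rep (S : St) : Mv → St → Prop
  | cutR (x : Nd) (A : Formula) : Rep S (.cut x A) ⟨S.V, S.L, (x, A)⟩
  | cutL (x : Nd) (A : Formula) : Rep S (.cut x A) ⟨S.V, insert (x, A) S.L, S.g⟩
  | or1 (x : Nd) (A B : Formula) : Rep S (.orL x A B) ⟨S.V, insert (x, A) S.L, S.g⟩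
  | or2 (x : Nd) (A B : Formula) : Rep S (.orL x A B) ⟨S.V, insert (x, B) S.L, S.g⟩
  | dia (x : Nd) (A : Formula) : Rep S (.diaL x A)
      ⟨insert (dc A x) S.V, insert (dc A x, A) S.L, S.g⟩
  | imp (x : Nd) (A B : Formula) : Rep S (.impR x A B) ⟨S.V, insert (x, A) S.L, (x, B)⟩
  | box (x : Nd) (A : Formula) (j : ℕ) : oc A j x ∉ S.V → Rep S (.boxR x A)
      ⟨insert (oc A j x) S.V, insert (oc A j x, Formula.box A) S.L, (oc A j x, A)⟩

abbrev GX (Sg : Finset Formula) := {S : St // WG Sg S}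
abbrev GP (Sg : Finset Formula) := GX Sg × List (GX Sg)

def gm (Sg : Finset Formula) : TG (GP Sg) Mv where
  av p m := App Sg p.1.1 m
  rp p m q := Rep p.1.1 m q.1.1 ∧ q.2 = p.1 :: p.2
  par q := match q.2 with
    | [] => q
    | a :: l => (a, l)
  d q := q.2.length
  av_ex p := ⟨_, App.cut _ _ p.1.2.gV p.1.2.gS⟩
  hpar := by
    rintro p m q ⟨-, h⟩
    rw [h]
  hd := by
    rintro p m q ⟨-, h⟩
    rw [h]; rfl

def evn (Sg : Finset Formula) (v : Nd) : Set (GP Sg) :=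
  {q | ∃ a l, q.2 = a :: l ∧ ∃ t : Nd, t ≠ [] ∧ (∀ k ∈ t, k % 2 = 0) ∧ t ++ v ∈ q.1.1.V ∧ t ++ v ∉ a.1.V}

def evs (Sg : Finset Formula) (n : ℕ) : Set (GP Sg) := {q | ∃ v : Nd, Encodable.encode v = n ∧ q ∈ evn Sg v}

theorem evs_encode (Sg : Finset Formula) (v : Nd) : evs Sg (Encodable.encode v) = evn Sg v := by
  ext q
  constructor
  · rintro ⟨w, h, hq⟩
    rw [← Encodable.encode_injective h]; exact hq
  · intro h; exact ⟨v, rfl, h⟩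

theorem Rep.mono {S S' : St} {m : Mv} (h : Rep S m S') : S.V ⊆ S'.V ∧ S.L ⊆ S'.L := by
  cases h <;> simp


open Relation

theorem rtg_lev {O : Type} {step : O → O → Prop} {lev : O → ℕ} (hs : ∀ o o', step o o' → lev o' = lev o + 1)
    {a b : O} (h : ReflTransGen step a b) : lev a ≤ lev b ∧ (lev a = lev b → a = b) := by
  induction h with
  | refl => exact ⟨le_rfl, fun _ => rfl⟩
  | tail _ h ih =>
    have := hs _ _ h
    exact ⟨by omega, fun e => by omega⟩

theorem chain_of_reach {O : Type} {step : O → O → Prop} {lev : O → ℕ} (hs : ∀ o o', step o o' → lev o' = lev o + 1)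
    (f : ℕ → O) (hf : ∀ n, ReflTransGen step (f n) (f (n+1))) (hu : ∀ B, ∃ n, B < lev (f n)) :
    ∃ c : ℕ → O, c 0 = f 0 ∧ (∀ n, step (c n) (c (n+1))) ∧ ∀ n, ∃ m, c m = f n := by
  classical
  have hm : ∀ n k, ReflTransGen step (f n) (f (n+k)) := by
    intro n k
    induction k with
    | zero => exact .refl
    | succ k ih => exact ih.trans (hf _)
  let I : O → Prop := fun o => ∀ n, lev o ≤ lev (f n) → ReflTransGen step o (f n)
  have hI0 : I (f 0) := fun n _ => by simpa using hm 0 n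
  have hstep : ∀ o : {o // I o}, ∃ o' : {o // I o}, step o.1 o'.1 := by
    rintro ⟨o, ho⟩
    have hsp := Nat.find_spec (hu (lev o))
    have hmin := fun k => Nat.find_min (hu (lev o)) (m := k)
    set n := Nat.find (hu (lev o))
    rcases (ho n (by omega)).cases_head with h | ⟨o', h1, h2⟩
    · rw [h] at hsp; omega
    refine ⟨⟨o', fun k hk => ?_⟩, h1⟩
    have := hs _ _ h1
    have hnk : n ≤ k := by
      by_contra hlt
      exact hmin k (by omega) (by omega)
    obtain ⟨j, rfl⟩ := Nat.exists_eq_add_of_le hnk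
    exact h2.trans (hm n j)
  choose nx hnx using hstep
  let c : ℕ → {o // I o} := fun n => Nat.rec ⟨f 0, hI0⟩ (fun _ o => nx o) n
  have hc : ∀ n, step (c n).1 (c (n+1)).1 := fun n => hnx _
  have hl : ∀ n, lev (c n).1 = lev (f 0) + n := by
    intro n; induction n with
    | zero => rfl
    | succ n ih => rw [hs _ _ (hc n), ih]; omega
  refine ⟨fun n => (c n).1, rfl, hc, fun n => ?_⟩
  have h0 := (rtg_lev hs (hm 0 n)).1
  rw [Nat.zero_add] at h0
  have he : lev (c (lev (f n) - lev (f 0))).1 = lev (f n) := by rw [hl]; omega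
  exact ⟨_, (rtg_lev hs ((c _).2 n he.le)).2 he⟩

section
variable {Sg : Finset Formula}

abbrev OSt (Sg : Finset Formula) := (gm Sg).OS (evs Sg)

def st (o : OSt Sg) : St := o.pos.1.1

theorem wst (o : OSt Sg) : WG Sg (st o) := o.pos.1.2

def Stp (o o' : OSt Sg) : Prop := ∃ m, App Sg (st o) m ∧ o' = (gm Sg).resp (evs Sg) o m

theorem Stp.sp {o o' : OSt Sg} (h : Stp o o') : ∃ m, App Sg (st o) m ∧ Rep (st o) m (st o') ∧
    o'.pos.2 = o.pos.1 :: o.pos.2 := by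
  obtain ⟨m, hm, rfl⟩ := h
  have := TG.resp_spec (G := gm Sg) (e := evs Sg) (o := o) (m := m) hm
  exact ⟨m, hm, this.1⟩

theorem Stp.lev {o o' : OSt Sg} (h : Stp o o') : o'.lev = o.lev + 1 := by
  obtain ⟨m, hm, rfl⟩ := h
  exact (TG.resp_spec (G := gm Sg) (e := evs Sg) (o := o) (m := m) hm).2.1

theorem ask (o : OSt Sg) {m : Mv} (hm : App Sg (st o) m) : ∃ o', Stp o o' ∧ Rep (st o) m (st o') :=
  ⟨_, ⟨m, hm, rfl⟩, (TG.resp_spec (G := gm Sg) (e := evs Sg) (o := o) (m := m) hm).1.1⟩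

theorem not_closed (o : OSt Sg) : ¬ Closed (st o) := by
  intro h
  obtain ⟨o', -, h⟩ := ask o (.ax h)
  cases h

theorem Stp.mono {o o' : OSt Sg} (h : Stp o o') : (st o).V ⊆ (st o').V ∧ (st o).L ⊆ (st o').L := by
  obtain ⟨m, -, h, -⟩ := h.sp
  exact h.mono

theorem rtg_mono {o o' : OSt Sg} (h : ReflTransGen Stp o o') : (st o).V ⊆ (st o').V ∧ (st o).L ⊆ (st o').L := by
  induction h with
  | refl => exact ⟨subset_rfl, subset_rfl⟩
  | tail _ h ih => exact ⟨ih.1.trans h.mono.1, ih.2.trans h.mono.2⟩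

theorem ch_mono {c : ℕ → OSt Sg} (hc : ∀ n, Stp (c n) (c (n+1))) {i j : ℕ} (h : i ≤ j) :
    (st (c i)).V ⊆ (st (c j)).V := by
  induction j, h using Nat.le_induction with
  | base => exact subset_rfl
  | succ j _ ih => exact ih.trans (hc j).mono.1

theorem ch_first {c : ℕ → OSt Sg} (hc : ∀ n, Stp (c n) (c (n+1))) {y : Nd} {N M : ℕ}
    (h1 : y ∉ (st (c N)).V) (h2 : y ∈ (st (c M)).V) : ∃ n, N ≤ n ∧ y ∉ (st (c n)).V ∧ y ∈ (st (c (n+1))).V := by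
  classical
  have hex : ∃ n, y ∈ (st (c n)).V := ⟨M, h2⟩
  have hs := Nat.find_spec hex
  have hmin := fun k => Nat.find_min hex (m := k)
  set n := Nat.find hex
  have hn : N < n := by
    by_contra h
    exact h1 (ch_mono hc (by omega) hs)
  refine ⟨n-1, by omega, hmin _ (by omega), ?_⟩
  rw [show n - 1 + 1 = n by omega]; exact hs

theorem no_grow {c : ℕ → OSt Sg} (hc : ∀ n, Stp (c n) (c (n+1))) (v : Nd) :
    ∃ N, ∀ (t : Nd) (M : ℕ), t ≠ [] → (∀ k ∈ t, k % 2 = 0) → t ++ v ∈ (st (c M)).V → t ++ v ∈ (st (c N)).V := by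
  by_contra hcon
  push Not at hcon
  choose m hm1 hm2 using hc
  apply TG.chain_not (G := gm Sg) (e := evs Sg) (c := c) (m := m) hm1 hm2 (Encodable.encode v)
  rw [evs_encode]
  intro N
  obtain ⟨t, M, h1, h2, h3, h4⟩ := hcon N
  have hc : ∀ n, Stp (c n) (c (n+1)) := fun n => ⟨m n, hm1 n, hm2 n⟩
  obtain ⟨n, hn, h5, h6⟩ := ch_first hc h4 h3
  obtain ⟨_, -, -, hp⟩ := (hc n).sp
  exact ⟨n+1, by omega, _, _, hp, t, h1, h2, h6, h5⟩

structure GSt (o o' : OSt Sg) : Prop where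
  stp : Stp o o'
  g : (st o').g = (st o).g
  L : (st o).L ⊂ (st o').L
  V : ∀ y ∈ (st o').V, y ∈ (st o).V ∨ ∃ A x, y = dc A x ∧ x ∈ (st o).V

def Sat (o : OSt Sg) : Prop := ∀ o', ¬ GSt o o'

theorem exists_sat (o : OSt Sg) : ∃ o', ReflTransGen Stp o o' ∧ Sat o' ∧ (st o').g = (st o).g := by
  by_contra hcon
  push Not at hcon
  let I : OSt Sg → Prop := fun o' => ReflTransGen Stp o o' ∧ (st o').g = (st o).g
  have hstep : ∀ a : {a // I a}, ∃ b : {a // I a}, GSt a.1 b.1 := by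
    rintro ⟨a, ha1, ha2⟩
    have h1 : ¬ Sat a := fun h => hcon a ha1 h ha2
    unfold Sat at h1
    push Not at h1
    obtain ⟨b, hb⟩ := h1
    exact ⟨⟨b, ha1.tail hb.stp, hb.g.trans ha2⟩, hb⟩
  choose nx hnx using hstep
  let c' : ℕ → {a // I a} := fun n => Nat.rec ⟨o, .refl, rfl⟩ (fun _ a => nx a) n
  let c : ℕ → OSt Sg := fun n => (c' n).1
  have hg : ∀ n, GSt (c n) (c (n+1)) := fun n => hnx _
  have hc : ∀ n, Stp (c n) (c (n+1)) := fun n => (hg n).stp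
  have hV : ∀ n, ∀ y ∈ (st (c n)).V, ∃ t v : Nd, y = t ++ v ∧ v ∈ (st (c 0)).V ∧ ∀ k ∈ t, k % 2 = 0 := by
    intro n
    induction n with
    | zero => intro y hy; exact ⟨[], y, rfl, hy, by simp⟩
    | succ n ih =>
      intro y hy
      rcases (hg n).V y hy with h | ⟨A, x, rfl, hx⟩
      · exact ih y h
      · obtain ⟨t, v, rfl, h1, h2⟩ := ih x hx
        refine ⟨(2 * fc A) :: t, v, rfl, h1, ?_⟩
        intro k hk
        rcases List.mem_cons.1 hk with rfl | hk
        · omega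
        · exact h2 k hk
  choose Nf hNf using no_grow hc
  let N := (st (c 0)).V.sup Nf
  have hVN : ∀ n, (st (c n)).V ⊆ (st (c N)).V := by
    intro n y hy
    obtain ⟨t, v, rfl, h1, h2⟩ := hV n y hy
    by_cases ht : t = []
    · subst ht; exact ch_mono hc (Nat.zero_le _) h1
    · exact ch_mono hc (Finset.le_sup (f := Nf) h1) (hNf v t n ht h2 hy)
  have hcard : ∀ n, n ≤ (st (c n)).L.card := by
    intro n
    induction n with
    | zero => omega
    | succ n ih => have := Finset.card_lt_card (hg n).L; omega
  have hb : ∀ n, (st (c n)).L ⊆ (st (c N)).V ×ˢ Sg := by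
    rintro n ⟨x, A⟩ h
    exact Finset.mem_product.2 ⟨hVN n ((wst _).LV _ _ h), (wst _).LS _ _ h⟩
  have h1 := Finset.card_le_card (hb (((st (c N)).V ×ˢ Sg).card + 1))
  have h2 := hcard (((st (c N)).V ×ˢ Sg).card + 1)
  omega

theorem Sat.cut {o : OSt Sg} (h : Sat o) {x : Nd} {A : Formula} (hx : x ∈ (st o).V) (hA : A ∈ Sg)
    (hn : (x, A) ∉ (st o).L) : ∃ o', Stp o o' ∧ st o' = ⟨(st o).V, (st o).L, (x, A)⟩ := by
  obtain ⟨o', h1, h2⟩ := ask o (.cut x A hx hA)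
  refine ⟨o', h1, ?_⟩
  generalize hs : st o' = s at h2
  cases h2 with
  | cutR => rfl
  | cutL =>
    exfalso
    refine h o' ⟨h1, by rw [hs], by rw [hs]; exact Finset.ssubset_insert hn, fun y hy => ?_⟩
    rw [hs] at hy; exact Or.inl hy

theorem Sat.closure {o : OSt Sg} (h : Sat o) {x : Nd} {A : Formula} (hx : x ∈ (st o).V) (hA : A ∈ Sg)
    (hc : Closed ⟨(st o).V, (st o).L, (x, A)⟩) : (x, A) ∈ (st o).L := by
  by_contra hn
  obtain ⟨o', -, h2⟩ := h.cut hx hA hn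
  exact not_closed o' (h2 ▸ hc)

theorem Sat.or {o : OSt Sg} (h : Sat o) {x : Nd} {A B : Formula} (hx : (x, Formula.or A B) ∈ (st o).L) :
    (x, A) ∈ (st o).L ∨ (x, B) ∈ (st o).L := by
  by_contra hn
  push Not at hn
  obtain ⟨o', h1, h2⟩ := ask o (.orL x A B hx)
  generalize hs : st o' = s at h2
  cases h2 with
  | or1 =>
    refine h o' ⟨h1, by rw [hs], by rw [hs]; exact Finset.ssubset_insert hn.1, fun y hy => ?_⟩
    rw [hs] at hy; exact Or.inl hy
  | or2 =>
    refine h o' ⟨h1, by rw [hs], by rw [hs]; exact Finset.ssubset_insert hn.2, fun y hy => ?_⟩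
    rw [hs] at hy; exact Or.inl hy

theorem Sat.dia {o : OSt Sg} (h : Sat o) {x : Nd} {A : Formula} (hx : (x, Formula.dia A) ∈ (st o).L) :
    (dc A x, A) ∈ (st o).L := by
  apply (wst o).ev
  by_contra hn
  obtain ⟨o', h1, h2⟩ := ask o (.diaL x A hx hn)
  generalize hs : st o' = s at h2
  cases h2 with
  | dia =>
    refine h o' ⟨h1, by rw [hs], by
      rw [hs]; exact Finset.ssubset_insert (fun h => hn ((wst o).LV _ _ h)), fun y hy => ?_⟩
    rw [hs] at hy
    rcases Finset.mem_insert.1 hy with e | hy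
    · exact Or.inr ⟨A, x, e, (wst o).LV _ _ hx⟩
    · exact Or.inl hy

def HW (Sg : Finset Formula) : Type := {o : OSt Sg // Sat o}

def HK (Sg : Finset Formula) : Kripke (HW Sg) Nd where
  le w w' := ReflTransGen Stp w.1 w'.1
  le_refl _ := .refl
  le_trans _ _ _ h h' := h.trans h'
  le_antisymm u v h h' := by
    have hs : ∀ o o' : OSt Sg, Stp o o' → o'.lev = o.lev + 1 := fun _ _ h => h.lev
    have h1 := rtg_lev hs h
    have h2 := rtg_lev hs h'
    exact Subtype.ext (h1.2 (by omega))
  Dom w := {x | x ∈ (st w.1).V}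
  Dom_ne w := ⟨[], (wst w.1).root⟩
  Dom_mono _ _ h := fun _ hx => (rtg_mono h).1 hx
  Pr w p := {x | (x, Formula.atom p) ∈ (st w.1).L}
  Pr_sub w p := fun x hx => (wst w.1).LV _ _ hx
  Pr_mono _ _ _ h := fun _ hx => (rtg_mono h).2 hx
  Rel w d e := PS d e ∧ d ∈ (st w.1).V ∧ e ∈ (st w.1).V
  Rel_dom _ _ _ h := h.2
  Rel_mono _ _ _ _ h h' := ⟨h'.1, (rtg_mono h).1 h'.2.1, (rtg_mono h).1 h'.2.2⟩

theorem truth (hS : SubC Sg) (B : Formula) : B ∈ Sg → ∀ (w : HW Sg) (x : Nd),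
    x ∈ (st w.1).V → (ksat (HK Sg) w x B ↔ (x, B) ∈ (st w.1).L) := by
  induction B with
  | atom p => intro _ w x _; exact Iff.rfl
  | bot =>
    intro _ w x _
    exact ⟨fun h => h.elim, fun h' => not_closed w.1 (.bot _ h')⟩
  | and A B ihA ihB =>
    intro hB w x hx
    have h := w.2
    have h1 := hS.and1 _ _ hB
    have h2 := hS.and2 _ _ hB
    simp only [ksat]
    rw [ihA h1 w x hx, ihB h2 w x hx]
    constructor
    · rintro ⟨ha, hb⟩
      exact h.closure hx hB (.andR x A B ha hb rfl)
    · intro hab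
      exact ⟨h.closure hx h1 (.andL1 x A B hab rfl), h.closure hx h2 (.andL2 x A B hab rfl)⟩
  | or A B ihA ihB =>
    intro hB w x hx
    have h := w.2
    have h1 := hS.or1 _ _ hB
    have h2 := hS.or2 _ _ hB
    simp only [ksat]
    rw [ihA h1 w x hx, ihB h2 w x hx]
    constructor
    · rintro (ha | hb)
      · exact h.closure hx hB (.orR1 x A B ha rfl)
      · exact h.closure hx hB (.orR2 x A B hb rfl)
    · exact h.or
  | imp A B ihA ihB =>
    intro hB w x hx
    have h := w.2
    have h1 := hS.imp1 _ _ hB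
    have h2 := hS.imp2 _ _ hB
    simp only [ksat]
    constructor
    · intro hk
      by_contra hn
      obtain ⟨o1, hs1, ho1⟩ := h.cut hx hB hn
      obtain ⟨o2, hs2, ho2⟩ := ask o1 (.impR x A B (by rw [ho1]))
      obtain ⟨o3, hs3, hsat, hg⟩ := exists_sat o2
      generalize hs : st o2 = s at ho2
      rw [ho1] at ho2
      cases ho2 with
      | imp =>
      let w' : HW Sg := ⟨o3, hsat⟩
      have hle : (HK Sg).le w w' := (hs3.head hs2).head hs1
      have hxV : x ∈ (st w'.1).V := (rtg_mono hle).1 hx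
      have hL := (rtg_mono hs3).2
      rw [hs] at hL hg
      have := hk w' hle ((ihA h1 w' x hxV).2 (hL (Finset.mem_insert_self _ _)))
      rw [ihB h2 w' x hxV] at this
      exact not_closed o3 (.ax (by rw [hg]; exact this))
    · intro hab w' hle
      have h' := w'.2
      have hx' := (rtg_mono hle).1 hx
      rw [ihA h1 w' x hx', ihB h2 w' x hx']
      intro ha
      exact h'.closure hx' h2 (.impL x A B ((rtg_mono hle).2 hab) ha rfl)
  | box A ihA =>
    intro hB w x hx
    have h := w.2
    have h1 := hS.box _ hB
    simp only [ksat]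
    constructor
    · intro hk
      by_contra hn
      obtain ⟨o1, hs1, ho1⟩ := h.cut hx hB hn
      obtain ⟨o2, hs2, ho2⟩ := ask o1 (.boxR x A (by rw [ho1]))
      obtain ⟨o3, hs3, hsat, hg⟩ := exists_sat o2
      generalize hs : st o2 = s at ho2
      rw [ho1] at ho2
      cases ho2 with
      | box _ _ j hj =>
      let w' : HW Sg := ⟨o3, hsat⟩
      have hle : (HK Sg).le w w' := (hs3.head hs2).head hs1
      have hxV : x ∈ (st w'.1).V := (rtg_mono hle).1 hx
      have hV := (rtg_mono hs3).1
      rw [hs] at hV hg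
      have hyV : oc A j x ∈ (st w'.1).V := hV (Finset.mem_insert_self _ _)
      have := hk w' (oc A j x) hle ⟨PS_self_cons _ _, hxV, hyV⟩
      rw [ihA h1 w' _ hyV] at this
      exact not_closed o3 (.ax (by rw [hg]; exact this))
    · intro hab w' e hle hR
      have h' := w'.2
      rw [ihA h1 w' e hR.2.2]
      exact h'.closure hR.2.2 h1 (.boxL x e A ((rtg_mono hle).2 hab) hR.1 hR.2.2 rfl)
  | dia A ihA =>
    intro hB w x hx
    have h := w.2
    have h1 := hS.dia _ hB
    simp only [ksat]
    constructor
    · rintro ⟨e, hR, he⟩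
      rw [ihA h1 w e hR.2.2] at he
      exact h.closure hx hB (.diaR x e A he hR.1 rfl)
    · intro hd
      have hk := h.dia hd
      have hy := (wst w.1).LV _ _ hk
      exact ⟨dc A x, ⟨PS_self_cons _ _, hx, hy⟩, (ihA h1 w _ hy).2 hk⟩

theorem HK_pred (Sg : Finset Formula) : PredIGL (HK Sg) := by
  classical
  refine ⟨fun w x y z h h' => ⟨h.1.trans h'.1, h.2.1, h'.2.2⟩, ?_⟩
  rintro ⟨f', g, h⟩
  let f : ℕ → OSt Sg := fun n => (f' n).1
  have hle : ∀ n, ReflTransGen Stp (f n) (f (n+1)) := fun n => (h n).2.1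
  have hgV : ∀ n, g n ∈ (st (f n)).V := fun n => (h n).1
  have hps : ∀ n, PS (g n) (g (n+1)) := fun n => (h n).2.2.1
  have hl : ∀ m, m ≤ (g m).length := by
    intro m
    induction m with
    | zero => exact Nat.zero_le _
    | succ m ih => have := (hps m).len; omega
  have hs : ∀ o o' : OSt Sg, Stp o o' → o'.lev = o.lev + 1 := fun _ _ h => h.lev
  have hmono : ∀ n k, ReflTransGen Stp (f n) (f (n+k)) := by
    intro n k
    induction k with
    | zero => exact .refl
    | succ k ih => exact ih.trans (hle _)
  have hbd : ∀ o : OSt Sg, ∃ B, ∀ x ∈ (st o).V, x.length < B := by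
    intro o
    refine ⟨(st o).V.sup List.length + 1, fun x hx => ?_⟩
    have := Finset.le_sup (f := List.length) hx
    omega
  have hu : ∀ B, ∃ n, B < (f n).lev := by
    intro B
    by_contra hcon
    push Not at hcon
    have hfin : (Set.range fun n => (f n).lev).Finite := (Set.finite_Iic B).subset (by rintro _ ⟨n, rfl⟩; exact hcon n)
    obtain ⟨M, ⟨N, hN⟩, hM⟩ := hfin.exists_maximal (Set.range_nonempty _)
    have hconst : ∀ k, f N = f (N+k) := by
      intro k
      have h1 := rtg_lev hs (hmono N k)
      have h2 := hM ⟨N+k, rfl⟩ (by simp only at hN ⊢; omega)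
      simp only at h2 hN
      exact h1.2 (by omega)
    obtain ⟨b, hb⟩ := hbd (f N)
    have h1 := hgV (N+b)
    rw [← hconst] at h1
    have := hb _ h1
    have := hl (N+b)
    omega
  obtain ⟨c, hc0, hc, hvis⟩ := chain_of_reach hs f hle hu
  have hsuf : ∀ n k, g n <:+ g (n+k) := by
    intro n k
    induction k with
    | zero => exact List.suffix_rfl
    | succ k ih => exact ih.trans (hps _).1
  let u : ℕ → Nd := fun k => (g k).drop ((g k).length - k)
  have hul : ∀ k, (u k).length = k := by
    intro k; have := hl k; simp only [u, List.length_drop]; omega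
  have hug : ∀ k, u k <:+ g k := fun k => List.drop_suffix _ _
  have huu : ∀ k, u k <:+ u (k+1) := by
    intro k
    apply List.suffix_of_suffix_length_le ((hug k).trans (hsuf k 1)) (hug (k+1))
    rw [hul, hul]; omega
  have hcons : ∀ k, ∃ a, u (k+1) = a :: u k := by
    intro k
    obtain ⟨t, ht⟩ := huu k
    have hlen := congrArg List.length ht
    simp only [List.length_append, hul] at hlen
    obtain ⟨a, rfl⟩ := List.length_eq_one_iff.1 (show t.length = 1 by omega)
    exact ⟨a, ht.symm⟩
  choose a ha using hcons
  have huV : ∀ k, ∃ M, u k ∈ (st (c M)).V := by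
    intro k
    obtain ⟨M, hM⟩ := hvis k
    exact ⟨M, by rw [hM]; exact (wst _).suf (hgV k) (hug k)⟩
  have hsufu : ∀ i k, u i <:+ u (i+k) := by
    intro i k
    induction k with
    | zero => exact List.suffix_rfl
    | succ k ih => exact ih.trans (huu _)
  have hab : ∀ k, (∃ A ∈ Sg, a k = 2 * fc A) ∨
      ∃ A j, Formula.box A ∈ Sg ∧ a k = 2 * Nat.pair (fc A) j + 1 := by
    intro k
    obtain ⟨M, hM⟩ := huV (k+1)
    rw [ha] at hM
    exact (wst _).hd _ _ hM
  have hodd : ∀ k, ∃ A j, a k % 2 = 1 → Formula.box A ∈ Sg ∧ u (k+1) = oc A j (u k) := by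
    intro k
    rcases hab k with ⟨A, -, h⟩ | ⟨A, j, h1, h2⟩
    · exact ⟨A, 0, fun h' => by omega⟩
    · exact ⟨A, j, fun _ => ⟨h1, by rw [ha, h2]; rfl⟩⟩
  choose Af jf hAf using hodd
  obtain ⟨K0, hK0⟩ := hbd (c 0)
  have hkey : ∀ i j, i < j → K0 ≤ j → a i % 2 = 1 → a j % 2 = 1 → Af i = Af j → False := by
    intro i j hij hj hi1 hj1 hA
    obtain ⟨M, hM⟩ := huV (j+1)
    have hn0 : u (j+1) ∉ (st (c 0)).V := by
      intro hin; have := hK0 _ hin; rw [hul] at this; omega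
    obtain ⟨n, -, hn1, hn2⟩ := ch_first hc hn0 hM
    obtain ⟨m, hm, hr, -⟩ := (hc n).sp
    have e1 := (hAf i hi1).2
    have e2 := (hAf j hj1).2
    generalize hS' : st (c (n+1)) = S' at hr hn2
    cases hr with
    | cutR | cutL | or1 | or2 | imp => exact hn1 hn2
    | dia x A =>
      rcases Finset.mem_insert.1 hn2 with e | e
      · exact dc_ne_oc (e.symm.trans e2)
      · exact hn1 e
    | box x A k hk =>
      rcases Finset.mem_insert.1 hn2 with e | e
      · obtain ⟨e3, e4, e5⟩ := oc_inj (e.symm.trans e2)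
        cases hm with
        | boxR _ _ hg =>
        have hx : x ∈ (st (c n)).V := by have := (wst (c n)).gV; rw [hg] at this; exact this
        have hs1 : u (i+1) <:+ x := by
          have := hsufu (i+1) (j-(i+1))
          rwa [show i+1+(j-(i+1)) = j by omega, ← e5] at this
        have hin := (wst (c n)).suf hx hs1
        have hbx := hin
        rw [e1] at hbx
        have hL := (wst (c n)).od _ _ _ hbx
        rw [← e1, hA, ← e3] at hL
        apply not_closed (c n)
        by_cases he : u (i+1) = x
        · apply Closed.ax; rw [hg, ← he]; exact hL
        · exact .four _ _ _ hL ⟨hs1, he⟩ hx hg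
      · exact hn1 e
  have hfin : {k | K0 ≤ k ∧ a k % 2 = 1}.Finite := by
    by_contra hinf
    obtain ⟨i, hi, j, hj, hne, he⟩ := Set.Infinite.exists_ne_map_eq_of_mapsTo
      (t := {A | Formula.box A ∈ Sg}) (f := Af) hinf (fun k hk => (hAf k hk.2).1) (by
        apply Set.Finite.of_finite_image (f := Formula.box)
        · exact Sg.finite_toSet.subset (by rintro _ ⟨A, hA, rfl⟩; exact hA)
        · intro A _ B _ h; injection h)
    rcases lt_or_gt_of_ne hne with hlt | hlt
    · exact hkey i j hlt hj.1 hi.2 hj.2 he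
    · exact hkey j i hlt hi.1 hj.2 hi.2 he.symm
  obtain ⟨K1, hK1⟩ := hfin.bddAbove
  let K := max K0 (K1+1)
  have heven : ∀ k, K ≤ k → a k % 2 = 0 := by
    intro k hk
    by_contra hc
    have : k ≤ K1 := hK1 ⟨by omega, by omega⟩
    omega
  have happ : ∀ k, ∃ t : Nd, u (K+k) = t ++ u K ∧ ∀ i ∈ t, i % 2 = 0 := by
    intro k
    induction k with
    | zero => exact ⟨[], rfl, by simp⟩
    | succ k ih =>
      obtain ⟨t, h1, h2⟩ := ih
      refine ⟨a (K+k) :: t, by rw [← Nat.add_assoc, ha, h1]; rfl, ?_⟩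
      intro i hi
      rcases List.mem_cons.1 hi with rfl | hi
      · exact heven _ (by omega)
      · exact h2 i hi
  obtain ⟨N, hN⟩ := no_grow hc (u K)
  obtain ⟨b, hb⟩ := hbd (c N)
  obtain ⟨t, ht1, ht2⟩ := happ (b+1)
  obtain ⟨M, hM⟩ := huV (K+(b+1))
  have hlt := hul (K+(b+1))
  rw [ht1] at hM
  have h3 := hN t M (by
    rintro rfl
    rw [ht1] at hlt
    simp [hul] at hlt) ht2 hM
  have h4 := hb _ h3
  rw [← ht1, hul] at h4
  omega

def tA (A : Formula) : St := ⟨{[]}, ∅, ([], A)⟩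

theorem wg_tA (A : Formula) : WG (subF A) (tA A) where
  root := by simp [tA]
  tl := by simp [tA]
  LV := by simp [tA]
  LS := by simp [tA]
  gV := by simp [tA]
  gS := self_subF A
  ev := by simp [tA, dc]
  od := by simp [tA, oc]
  hd := by simp [tA]

def p0 (A : Formula) : GP (subF A) := (⟨tA A, wg_tA A⟩, [])

theorem henkin (A : Formula) (x : ℕ)
    (hval : ∀ (W D : Type) (K : Kripke W D), Nonempty W → PredIGL K →
        ∀ (w : W) (ρ : ℕ → D), (∀ v, ρ v ∈ K.Dom w) → ksat K w (ρ x) A) :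
    (gm (subF A)).Win Set.univ (TG.Aof (evs (subF A))) (p0 A) := by
  by_contra hu
  let o0 : OSt (subF A) := ⟨0, Set.univ, p0 A, trivial, hu, fun v hv => by omega⟩
  obtain ⟨o, h1, h2, h3⟩ := exists_sat o0
  let w : HW (subF A) := ⟨o, h2⟩
  have hr := (wst o).root
  have := hval _ _ (HK (subF A)) ⟨w⟩ (HK_pred _) w (fun _ => []) (fun _ => hr)
  rw [truth (subF_subC A) A (self_subF A) w [] hr] at this
  exact not_closed o (.ax (by rw [h3]; exact this))

end


theorem coalg {rule : Sequent → List Sequent → Prop} {Q : Type} (sq : Q → Sequent) (ch : Q → List Q)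
    (hr : ∀ q, rule (sq q) ((ch q).map sq)) (q0 : Q)
    (hp : ∀ c : ℕ → Q, c 0 = q0 → (∀ n, c (n+1) ∈ ch (c n)) → Progressing (fun n => sq (c n))) :
    InfProof rule (sq q0) := by
  let fol : List ℕ → Option Q := fun p => p.foldl (fun o i => o.bind fun q => (ch q)[i]?) (some q0)
  have hfol : ∀ p i, fol (p ++ [i]) = (fol p).bind fun q => (ch q)[i]? := by
    intro p i; simp only [fol, List.foldl_append, List.foldl_cons, List.foldl_nil]
  refine ⟨⟨fun p => (fol p).map sq, rfl, ?_⟩, ?_⟩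
  · intro p S h
    rw [Option.map_eq_some_iff] at h
    obtain ⟨q, hq, rfl⟩ := h
    refine ⟨_, hr q, fun i => ?_⟩
    rw [hfol, hq, List.getElem?_map]; rfl
  · intro f Sb h
    simp only [Option.map_eq_some_iff] at h
    choose c hc1 hc2 using h
    have := hp c (by
      have := hc1 0
      simp only [branchPath, List.range_zero, List.map_nil, fol, List.foldl_nil] at this
      injection this with this
      exact this.symm) (by
      intro n
      have := hc1 (n+1)
      rw [branchPath, List.range_succ, List.map_append, List.map_cons, List.map_nil, hfol] at this
      have h2 := hc1 n
      rw [branchPath] at h2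
      rw [h2] at this
      exact List.mem_of_getElem? this)
    simpa only [hc2] using this

theorem stut {α : Type} (a : ℕ → α) (J : ℕ → Prop) (hJ : ∀ n, ¬ J n → a (n+1) = a n)
    (hi : ∀ N, ∃ n, N ≤ n ∧ J n) : ∃ (b : ℕ → α) (m : ℕ → ℕ), m 0 = 0 ∧ (∀ n, J n → m (n+1) = m n + 1) ∧
      (∀ n, ¬ J n → m (n+1) = m n) ∧ (∀ n, a n = b (m n)) ∧ ∀ i, ∃ n, m n = i ∧ J n := by
  classical
  let m : ℕ → ℕ := fun n => Nat.rec 0 (fun k r => if J k then r + 1 else r) n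
  have m0 : m 0 = 0 := rfl
  have m1 : ∀ n, J n → m (n+1) = m n + 1 := fun n h => by simp [m, h]
  have m2 : ∀ n, ¬ J n → m (n+1) = m n := fun n h => by simp [m, h]
  have hs : ∀ n k, m n ≤ m (n+k) ∧ (m (n+k) = m n → a (n+k) = a n) := by
    intro n k
    induction k with
    | zero => exact ⟨le_rfl, fun _ => rfl⟩
    | succ k ih =>
      rw [← Nat.add_assoc]
      by_cases h : J (n+k)
      · rw [m1 _ h]; exact ⟨by omega, fun e => by omega⟩
      · rw [m2 _ h, hJ _ h]; exact ih
  have hmj : ∀ N, ∃ n, N ≤ n ∧ m n = m N ∧ J n := by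
    intro N
    have hsp := Nat.find_spec (hi N)
    have hmin := fun k => Nat.find_min (hi N) (m := k)
    set n := Nat.find (hi N)
    refine ⟨n, hsp.1, ?_, hsp.2⟩
    have : ∀ k, N + k ≤ n → m (N+k) = m N := by
      intro k
      induction k with
      | zero => intro _; rfl
      | succ k ih =>
        intro hk
        rw [← Nat.add_assoc, m2, ih (by omega)]
        intro hj
        exact hmin (N+k) (by omega) ⟨by omega, hj⟩
    have h2 := this (n-N) (by omega)
    rwa [show N + (n-N) = n by omega] at h2
  have hex : ∀ i, ∃ n, m n = i ∧ J n := by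
    intro i
    induction i with
    | zero => obtain ⟨n, -, h1, h2⟩ := hmj 0; exact ⟨n, h1, h2⟩
    | succ i ih =>
      obtain ⟨n, h1, h2⟩ := ih
      obtain ⟨n', -, h3, h4⟩ := hmj (n+1)
      exact ⟨n', by rw [h3, m1 _ h2, h1], h4⟩
  choose t ht1 ht2 using hex
  refine ⟨fun i => a (t i), m, m0, m1, m2, fun n => ?_, fun i => ⟨t i, ht1 i, ht2 i⟩⟩
  rcases le_total n (t (m n)) with h | h
  · obtain ⟨k, hk⟩ := Nat.exists_eq_add_of_le h
    have h2 := (hs n k).2 (by rw [← hk, ht1])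
    rw [← hk] at h2
    exact h2.symm
  · obtain ⟨k, hk⟩ := Nat.exists_eq_add_of_le h
    have h2 := (hs (t (m n)) k).2 (by rw [← hk, ht1])
    rw [← hk] at h2
    exact h2

inductive Fd (E : Sequent → Prop) (T : Set ℕ) : Sequent → Prop
  | ex (S : Sequent) : E S → Fd E T S
  | step (S : Sequent) (ps : List Sequent) : T ⊆ S.vars → RuleLIK4 S ps → (∀ p ∈ ps, Fd E T p) → Fd E T S

def FD (E : Sequent → Prop) (T : Set ℕ) : ℕ → Sequent → Prop
  | 0, _ => False
  | h+1, S => ∃ ps, RuleLIK4 S ps ∧ ∀ p ∈ ps, E p ∨ (T ⊆ p.vars ∧ FD E T h p)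

theorem FD.succ {E : Sequent → Prop} {T : Set ℕ} {h : ℕ} : ∀ {S}, FD E T h S → FD E T (h+1) S := by
  induction h with
  | zero => intro S h; exact h.elim
  | succ h ih =>
    rintro S ⟨ps, h1, h2⟩
    exact ⟨ps, h1, fun p hp => (h2 p hp).imp_right fun h => ⟨h.1, ih h.2⟩⟩

theorem FD.le {E : Sequent → Prop} {T : Set ℕ} {h h' : ℕ} {S} (hh : h ≤ h') (hF : FD E T h S) : FD E T h' S := by
  induction h', hh using Nat.le_induction with
  | base => exact hF
  | succ k _ ih => exact ih.succ

theorem ex_bound {α : Type} (P : ℕ → α → Prop) (hP : ∀ h h' a, h ≤ h' → P h a → P h' a) (l : List α)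
    (h : ∀ a ∈ l, ∃ n, P n a) : ∃ n, ∀ a ∈ l, P n a := by
  induction l with
  | nil => exact ⟨0, by simp⟩
  | cons b l ih =>
    obtain ⟨n, hn⟩ := ih (fun a ha => h a (List.mem_cons_of_mem _ ha))
    obtain ⟨k, hk⟩ := h b (by simp)
    refine ⟨max n k, fun a ha => ?_⟩
    rcases List.mem_cons.1 ha with rfl | ha
    · exact hP _ _ _ (le_max_right _ _) hk
    · exact hP _ _ _ (le_max_left _ _) (hn a ha)

theorem Fd.toFD {E : Sequent → Prop} {T : Set ℕ} {S : Sequent} (h : Fd E T S) :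
    ∃ n, E S ∨ (T ⊆ S.vars ∧ FD E T n S) := by
  induction h with
  | ex S h => exact ⟨0, Or.inl h⟩
  | step S ps h1 h2 h3 ih =>
    obtain ⟨n, hn⟩ := ex_bound (fun n p => E p ∨ (T ⊆ p.vars ∧ FD E T n p))
      (fun a b p hab hp => hp.imp_right fun h => ⟨h.1, h.2.le hab⟩) ps ih
    exact ⟨n+1, Or.inr ⟨h1, ps, h2, hn⟩⟩

theorem Fd.single {E : Sequent → Prop} {T : Set ℕ} {S : Sequent} (hs : SingleRHS S) (h : Fd E T S) :
    ∃ n, FD E T n S := by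
  obtain ⟨n, hn⟩ := h.toFD
  refine ⟨n+1, [S], ⟨?_, hs, by simpa using hs⟩, by simpa using hn⟩
  have := Rule.th (tr := true) (thn := true) (ir := false) S.rel ∅ S.left S.right rfl
  rw [Set.union_empty] at this
  exact this

theorem glue0 {A : Type} (sq : A → Sequent) (lab : A → Set ℕ) (nx : A → A → Prop)
    (hs : ∀ a, SingleRHS (sq a))
    (hF : ∀ a, Fd (fun p => ∃ a', nx a a' ∧ sq a' = p) (lab a) (sq a)) (a0 : A)
    (htr : ∀ c : ℕ → A, c 0 = a0 → (∀ n, nx (c n) (c (n+1))) → ∃ (k : ℕ) (l : ℕ → ℕ),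
      (∀ n, k ≤ n → l n ∈ (sq (c n)).vars ∧ l (n+1) ∈ lab (c n) ∧
        (l (n+1) = l n ∨ (l n, l (n+1)) ∈ (sq (c n)).rel)) ∧
      ∀ N, ∃ n, N ≤ n ∧ k ≤ n ∧ (l n, l (n+1)) ∈ (sq (c n)).rel) :
    InfProof RuleLIK4 (sq a0) := by
  classical
  choose H hH using fun a => (hF a).single (hs a)
  let E : A → Sequent → Prop := fun a p => ∃ a', nx a a' ∧ sq a' = p
  let Q := {t : A × ℕ × Sequent // FD (E t.1) (lab t.1) t.2.1 t.2.2}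
  let start : A → Q := fun a => ⟨(a, H a, sq a), hH a⟩
  let stp : Q → Q → Prop := fun q q' => (nx q.1.1 q'.1.1 ∧ q' = start q'.1.1) ∨
    (q'.1.1 = q.1.1 ∧ q'.1.2.1 < q.1.2.1 ∧ lab q.1.1 ⊆ q'.1.2.2.vars)
  have hch : ∀ q : Q, ∃ l : List Q, RuleLIK4 q.1.2.2 (l.map fun q => q.1.2.2) ∧ ∀ q' ∈ l, stp q q' := by
    rintro ⟨⟨a, h, S⟩, hq⟩
    rcases h with _ | h
    · exact hq.elim
    obtain ⟨ps, h1, h2⟩ := hq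
    have key : ∀ ps : List Sequent, (∀ p ∈ ps, E a p ∨ (lab a ⊆ p.vars ∧ FD (E a) (lab a) h p)) →
        ∃ l : List Q, l.map (fun q => q.1.2.2) = ps ∧ ∀ q' ∈ l, stp ⟨(a, h+1, S), ⟨_, h1, h2⟩⟩ q' := by
      intro ps
      induction ps with
      | nil => intro _; exact ⟨[], rfl, by simp⟩
      | cons p ps ih =>
        intro hh
        obtain ⟨l, hl1, hl2⟩ := ih (fun p hp => hh p (List.mem_cons_of_mem _ hp))
        rcases hh p (by simp) with ⟨a', hn, rfl⟩ | ⟨hl, hf⟩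
        · refine ⟨start a' :: l, by simp [hl1, start], ?_⟩
          intro q' hq'
          rcases List.mem_cons.1 hq' with rfl | hq'
          · exact Or.inl ⟨hn, rfl⟩
          · exact hl2 q' hq'
        · refine ⟨⟨(a, h, p), hf⟩ :: l, by simp [hl1], ?_⟩
          intro q' hq'
          rcases List.mem_cons.1 hq' with rfl | hq'
          · exact Or.inr ⟨rfl, Nat.lt_succ_self _, hl⟩
          · exact hl2 q' hq'
    obtain ⟨l, hl1, hl2⟩ := key ps h2
    exact ⟨l, by rw [hl1]; exact h1, hl2⟩
  choose ch hc1 hc2 using hch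
  have := coalg (rule := RuleLIK4) (fun q : Q => q.1.2.2) ch hc1 (start a0) ?_
  · exact this
  intro c hc0 hc
  have hst : ∀ n, stp (c n) (c (n+1)) := fun n => hc2 _ _ (hc n)
  let J : ℕ → Prop := fun n => nx (c n).1.1 (c (n+1)).1.1 ∧ c (n+1) = start (c (n+1)).1.1
  have hnJ : ∀ n, ¬ J n → (c (n+1)).1.1 = (c n).1.1 ∧ (c (n+1)).1.2.1 < (c n).1.2.1 ∧
      lab (c n).1.1 ⊆ (c (n+1)).1.2.2.vars := by
    intro n hn
    rcases hst n with h | h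
    · exact absurd h hn
    · exact h
  have hJi : ∀ N, ∃ n, N ≤ n ∧ J n := by
    intro N
    by_contra hcon
    push Not at hcon
    have : ∀ k, (c (N+k)).1.2.1 + k ≤ (c N).1.2.1 := by
      intro k
      induction k with
      | zero => exact le_rfl
      | succ k ih =>
        have := (hnJ (N+k) (hcon _ (by omega))).2.1
        show (c (N+k+1)).1.2.1 + (k+1) ≤ _
        omega
    have := this ((c N).1.2.1 + 1)
    omega
  obtain ⟨b, m, m0, m1, m2, hab, hex⟩ := stut (fun n => (c n).1.1) J (fun n hn => (hnJ n hn).1) hJi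
  have hb0 : b 0 = a0 := by
    have := hab 0
    rw [m0] at this
    rw [← this, hc0]
  obtain ⟨k, l, hl1, hl2⟩ := htr b hb0 (by
    intro i
    obtain ⟨n, hn, hj⟩ := hex i
    have h1 := hab n
    have h2 := hab (n+1)
    rw [m1 n hj, hn] at h2
    rw [hn] at h1
    rw [← h1, ← h2]; exact hj.1)
  let s : ℕ → Prop := fun n => n = 0 ∨ ∃ k, n = k + 1 ∧ J k
  have hs1 : ∀ n, s (n+1) ↔ J n := by
    intro n
    constructor
    · rintro (h | ⟨k, h, hk⟩)
      · omega
      · obtain rfl : n = k := by omega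
        exact hk
    · intro h; exact Or.inr ⟨n, rfl, h⟩
  let x : ℕ → ℕ := fun n => if s n then l (m n) else l (m n + 1)
  have hx1 : ∀ n, x (n+1) = l (m n + 1) := by
    intro n
    by_cases hj : J n
    · simp only [x, if_pos ((hs1 n).2 hj), m1 n hj]
    · simp only [x, m2 n hj, if_neg (fun h => hj ((hs1 n).1 h))]
  have hsS : ∀ n, s n → x n = l (m n) ∧ (c n).1.2.2 = sq (b (m n)) := by
    intro n hn
    refine ⟨by simp only [x, if_pos hn], ?_⟩
    rw [← hab n]
    rcases hn with rfl | ⟨k, rfl, hk⟩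
    · rw [hc0]
    · exact congrArg (fun q : Q => q.1.2.2) hk.2
  have hsN : ∀ n, ¬ s n → x n = l (m n + 1) ∧ lab (b (m n)) ⊆ (c n).1.2.2.vars := by
    intro n hn
    refine ⟨by simp only [x, if_neg hn], ?_⟩
    rcases n with _ | n
    · exact absurd (Or.inl rfl) hn
    · have hj : ¬ J n := fun h => hn ((hs1 n).2 h)
      rw [← hab (n+1)]
      rw [(hnJ n hj).1]
      exact (hnJ n hj).2.2
  have hmm : ∀ n k, m n ≤ m (n+k) := by
    intro n k
    induction k with
    | zero => exact le_rfl
    | succ k ih =>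
      by_cases h : J (n+k)
      · have := m1 _ h
        show _ ≤ m (n+k+1)
        omega
      · have := m2 _ h
        show _ ≤ m (n+k+1)
        omega
  have hmn : ∀ n, m n ≤ n := by
    intro n
    induction n with
    | zero => omega
    | succ k ih =>
      by_cases h : J k
      · have := m1 _ h
        omega
      · have := m2 _ h
        omega
  obtain ⟨n0, hn0, -⟩ := hex k
  have hk : ∀ n, n0 ≤ n → k ≤ m n := by
    intro n hn
    obtain ⟨j, rfl⟩ := Nat.exists_eq_add_of_le hn
    have := hmm n0 j
    omega
  refine ⟨n0, x, ?_, ?_, ?_⟩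
  · intro n hn
    have h1 := hl1 (m n) (hk n hn)
    by_cases h : s n
    · dsimp only; rw [(hsS n h).1, (hsS n h).2]; exact h1.1
    · rw [(hsN n h).1]; exact (hsN n h).2 h1.2.1
  · intro n hn
    have h1 := hl1 (m n) (hk n hn)
    rw [hx1]
    by_cases h : s n
    · dsimp only; rw [(hsS n h).1, (hsS n h).2]; exact h1.2.2
    · left; rw [(hsN n h).1]
  · intro N
    obtain ⟨i, hi1, -, hi2⟩ := hl2 (N + n0 + 1)
    obtain ⟨i, rfl⟩ : ∃ i', i = i' + 1 := ⟨i - 1, by omega⟩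
    obtain ⟨n, hn, hj⟩ := hex i
    have h2 := m1 n hj
    have h3 := hmn n
    have h4 := hsS (n+1) ((hs1 n).2 hj)
    refine ⟨n+1, by omega, by omega, ?_⟩
    dsimp only; rw [hx1 (n+1), h4.1, h4.2, h2, hn]
    exact hi2

abbrev Cl : Sequent → Prop := Fd (fun _ => False) ∅

theorem Fd.mono {E E' : Sequent → Prop} {T : Set ℕ} (h : ∀ S, E S → E' S) {S : Sequent} (hF : Fd E T S) : Fd E' T S := by
  induction hF with
  | ex S hS => exact .ex S (h S hS)
  | step S ps h1 h2 _ ih => exact .step S ps h1 h2 ih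

theorem Fd.cl {T : Set ℕ} {S : Sequent} (hF : Cl S) (E : Sequent → Prop) (hE : ∀ S, Cl S → SingleRHS S → E S)
    (hs : SingleRHS S) : Fd E T S := .ex _ (hE _ hF hs)

theorem glue {A : Type} (sq : A → Sequent) (lab : A → Set ℕ) (nx : A → A → Prop)
    (hs : ∀ a, SingleRHS (sq a))
    (hF : ∀ a, Fd (fun p => (∃ a', nx a a' ∧ sq a' = p) ∨ (Cl p ∧ SingleRHS p)) (lab a) (sq a)) (a0 : A)
    (htr : ∀ c : ℕ → A, c 0 = a0 → (∀ n, nx (c n) (c (n+1))) → ∃ (k : ℕ) (l : ℕ → ℕ),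
      (∀ n, k ≤ n → l n ∈ (sq (c n)).vars ∧ l (n+1) ∈ lab (c n) ∧
        (l (n+1) = l n ∨ (l n, l (n+1)) ∈ (sq (c n)).rel)) ∧
      ∀ N, ∃ n, N ≤ n ∧ k ≤ n ∧ (l n, l (n+1)) ∈ (sq (c n)).rel) :
    InfProof RuleLIK4 (sq a0) := by
  let A' := A ⊕ {S // Cl S ∧ SingleRHS S}
  let sq' : A' → Sequent := Sum.elim sq Subtype.val
  let lab' : A' → Set ℕ := Sum.elim lab fun _ => ∅
  let nx' : A' → A' → Prop := fun a b => ∃ c, a = .inl c ∧ ∀ d, b = .inl d → nx c d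
  refine glue0 sq' lab' nx' ?_ ?_ (.inl a0) ?_
  · rintro (a | a)
    · exact hs a
    · exact a.2.2
  · rintro (a | a)
    · refine (hF a).mono ?_
      rintro S (⟨a', h, rfl⟩ | h)
      · exact ⟨.inl a', ⟨a, rfl, fun d hd => by cases hd; exact h⟩, rfl⟩
      · exact ⟨.inr ⟨S, h⟩, ⟨a, rfl, fun d hd => by cases hd⟩, rfl⟩
    · exact a.2.1.mono fun _ h => h.elim
  · intro c h0 h
    choose d hd hd2 using h
    obtain ⟨k, l, h1⟩ := htr d (by have := hd 0; rw [h0] at this; cases this; rfl) (fun n => hd2 n _ (hd (n+1)))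
    refine ⟨k, l, ?_⟩
    simp only [hd]
    exact h1



def OKT (T : Set ℕ) (R : Set (ℕ × ℕ)) (q : LFormula) : Prop := T ⊆ relVars R ∪ {q.1}

theorem OKT.sub {T : Set ℕ} {R : Set (ℕ × ℕ)} {q : LFormula} (h : OKT T R q) (Γ) :
    T ⊆ (⟨R, Γ, {q}⟩ : Sequent).vars := by
  intro z hz
  rcases h hz with h | h
  · exact Or.inl (Or.inl h)
  · exact Or.inr ⟨q.2, by rw [Set.mem_singleton_iff.1 h]; simp⟩

theorem OKT.mono {T : Set ℕ} {R R' : Set (ℕ × ℕ)} {q : LFormula} (h : OKT T R q) (hR : R ⊆ R') : OKT T R' q := by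
  intro z hz
  rcases h hz with ⟨w, h⟩ | h
  · exact Or.inl ⟨w, h.imp (@hR _) (@hR _)⟩
  · exact Or.inr h

theorem OKT.emp (R : Set (ℕ × ℕ)) (q : LFormula) : OKT ∅ R q := Set.empty_subset _

section
variable {E : Sequent → Prop} {T : Set ℕ} {R : Set (ℕ × ℕ)} {Γ : Multiset LFormula} {q : LFormula}

theorem Fd.mk1 (hT : OKT T R q) {Γ' R' q'} (hr : RuleLK4 ⟨R, Γ, {q}⟩ [⟨R', Γ', {q'}⟩])
    (h : Fd E T ⟨R', Γ', {q'}⟩) : Fd E T ⟨R, Γ, {q}⟩ :=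
  .step _ _ (hT.sub _) ⟨hr, by simp [SingleRHS], by simp [SingleRHS]⟩ (by simpa using h)

theorem Fd.mk2 (hT : OKT T R q) {Γ' R' q' Γ'' R'' q''}
    (hr : RuleLK4 ⟨R, Γ, {q}⟩ [⟨R', Γ', {q'}⟩, ⟨R'', Γ'', {q''}⟩])
    (h : Fd E T ⟨R', Γ', {q'}⟩) (h' : Fd E T ⟨R'', Γ'', {q''}⟩) : Fd E T ⟨R, Γ, {q}⟩ :=
  .step _ _ (hT.sub _) ⟨hr, by simp [SingleRHS], by simp [SingleRHS]⟩ (by simpa using ⟨h, h'⟩)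

theorem Fd.wk (hT : OKT T R q) (Θ : Multiset LFormula) (h : Fd E T ⟨R, Γ, {q}⟩) : Fd E T ⟨R, Θ + Γ, {q}⟩ := by
  induction Θ using Multiset.induction with
  | empty => simpa using h
  | cons a Θ ih => rw [Multiset.cons_add]; exact .mk1 hT (.wkL _ _ _ a.1 a.2) ih

theorem Fd.ctr (hT : OKT T R q) (Θ : Multiset LFormula) (hs : ∀ a ∈ Θ, a ∈ Γ) (h : Fd E T ⟨R, Θ + Γ, {q}⟩) :
    Fd E T ⟨R, Γ, {q}⟩ := by
  induction Θ using Multiset.induction with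
  | empty => simpa using h
  | cons a Θ ih =>
    apply ih (fun b hb => hs b (Multiset.mem_cons_of_mem hb))
    rw [Multiset.cons_add] at h
    obtain ⟨X, hX⟩ := Multiset.exists_cons_of_mem
      (show a ∈ Θ + Γ from Multiset.mem_add.2 (Or.inr (hs a (by simp))))
    rw [hX] at h ⊢
    exact .mk1 hT (.ctrL _ _ _ a.1 a.2) h

theorem Fd.sub (hT : OKT T R q) {Γ' : Multiset LFormula} (hs : ∀ a ∈ Γ', a ∈ Γ) (h : Fd E T ⟨R, Γ', {q}⟩) :
    Fd E T ⟨R, Γ, {q}⟩ := by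
  apply Fd.ctr hT Γ' hs
  rw [Multiset.add_comm]
  exact h.wk hT _

theorem Fd.thin (hT : OKT T R q) {R'} (hR : R' ⊆ R) (h : Fd E T ⟨R', Γ, {q}⟩) : Fd E T ⟨R, Γ, {q}⟩ := by
  refine .mk1 hT ?_ h
  have := Rule.th (tr := true) (thn := true) (ir := false) R' R Γ {q} rfl
  rw [Set.union_eq_self_of_subset_left hR] at this
  exact this

theorem Fd.cut (hT : OKT T R q) (x : ℕ) (A : Formula) (h1 : Fd E T ⟨R, Γ, {(x, A)}⟩)
    (h2 : Fd E T ⟨R, (x, A) ::ₘ Γ, {q}⟩) : Fd E T ⟨R, Γ, {q}⟩ := by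
  refine Fd.sub hT (Γ' := Γ + Γ) (by simp) (.mk2 hT ?_ h1 h2)
  have := Rule.cut (tr := true) (thn := true) (ir := false) R Γ Γ 0 {q} x A
  rw [Multiset.zero_add] at this
  exact this

theorem Fd.orL (hT : OKT T R q) {x : ℕ} {A B : Formula} (hx : (x, Formula.or A B) ∈ Γ)
    (h1 : Fd E T ⟨R, (x, A) ::ₘ Γ, {q}⟩)
    (h2 : Fd E T ⟨R, (x, B) ::ₘ Γ, {q}⟩) : Fd E T ⟨R, Γ, {q}⟩ :=
  Fd.sub hT (Γ' := (x, Formula.or A B) ::ₘ Γ) (by simpa using hx) (.mk2 hT (.orL _ _ _ _ _ _) h1 h2)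

theorem Fd.andL1 (hT : OKT T R q) {x : ℕ} {A B : Formula} (hx : (x, Formula.and A B) ∈ Γ)
    (h1 : Fd E T ⟨R, (x, A) ::ₘ Γ, {q}⟩) : Fd E T ⟨R, Γ, {q}⟩ :=
  Fd.sub hT (Γ' := (x, Formula.and A B) ::ₘ Γ) (by simpa using hx) (.mk1 hT (.andL₁ _ _ _ _ _ _) h1)

theorem Fd.andL2 (hT : OKT T R q) {x : ℕ} {A B : Formula} (hx : (x, Formula.and A B) ∈ Γ)
    (h1 : Fd E T ⟨R, (x, B) ::ₘ Γ, {q}⟩) : Fd E T ⟨R, Γ, {q}⟩ :=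
  Fd.sub hT (Γ' := (x, Formula.and A B) ::ₘ Γ) (by simpa using hx) (.mk1 hT (.andL₂ _ _ _ _ _ _) h1)

theorem Fd.boxL (hT : OKT T R q) {x y : ℕ} {A : Formula} (hx : (x, Formula.box A) ∈ Γ) (hxy : (x, y) ∈ R)
    (h1 : Fd E T ⟨R, (y, A) ::ₘ Γ, {q}⟩) : Fd E T ⟨R, Γ, {q}⟩ :=
  Fd.sub hT (Γ' := (x, Formula.box A) ::ₘ Γ) (by simpa using hx) (.mk1 hT (.boxL _ _ _ _ _ _ hxy) h1)

theorem Fd.impL (hT : OKT T R q) {x : ℕ} {A B : Formula} (hx : (x, Formula.imp A B) ∈ Γ)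
    (h1 : Fd E T ⟨R, Γ, {(x, A)}⟩)
    (h2 : Fd E T ⟨R, (x, B) ::ₘ Γ, {q}⟩) : Fd E T ⟨R, Γ, {q}⟩ := by
  refine Fd.sub hT (Γ' := (x, Formula.imp A B) ::ₘ (Γ + Γ)) (by simpa using hx) (.mk2 hT ?_ h1 h2)
  have := Rule.impL (tr := true) (thn := true) (ir := false) R Γ Γ 0 {q} x A B
  rw [Multiset.zero_add] at this
  exact this

theorem mkFresh {y : ℕ} {R : Set (ℕ × ℕ)} {Γ : Multiset LFormula} {q : LFormula} (h1 : y ∉ relVars R)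
    (h2 : y ∉ mLabels Γ) (h3 : y ≠ q.1) : Fresh y ⟨R, Γ, {q}⟩ := by
  rintro ((h | h) | ⟨A, h⟩)
  · exact h1 h
  · exact h2 h
  · exact h3 (by rw [← Multiset.mem_singleton.1 h])

theorem Fd.diaL (hT : OKT T R q) {x y : ℕ} {A : Formula} (hx : (x, Formula.dia A) ∈ Γ)
    (hy : Fresh y ⟨R, Γ, {q}⟩)
    (h1 : Fd E T ⟨insert (x, y) R, (y, A) ::ₘ Γ, {q}⟩) : Fd E T ⟨R, Γ, {q}⟩ := by
  refine Fd.sub hT (Γ' := (x, Formula.dia A) ::ₘ Γ) (by simpa using hx) (.mk1 hT (.diaL _ _ _ _ _ _ ?_) h1)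
  rintro ((h | ⟨B, h⟩) | h)
  · exact hy (Or.inl (Or.inl h))
  · rcases Multiset.mem_cons.1 h with h | h
    · rw [← h] at hx; exact hy (Or.inl (Or.inr ⟨_, hx⟩))
    · exact hy (Or.inl (Or.inr ⟨B, h⟩))
  · exact hy (Or.inr h)

theorem Fd.impR {x : ℕ} {A B : Formula} (hT : OKT T R (x, Formula.imp A B))
    (h1 : Fd E T ⟨R, (x, A) ::ₘ Γ, {(x, B)}⟩) : Fd E T ⟨R, Γ, {(x, Formula.imp A B)}⟩ :=
  .mk1 hT (.impR _ _ 0 _ _ _ (fun _ => rfl)) h1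

theorem Fd.boxR {x y : ℕ} {A : Formula} (hT : OKT T R (x, Formula.box A))
    (hy : Fresh y ⟨R, Γ, {(x, Formula.box A)}⟩)
    (h1 : Fd E T ⟨insert (x, y) R, Γ, {(y, A)}⟩) : Fd E T ⟨R, Γ, {(x, Formula.box A)}⟩ :=
  .mk1 hT (.boxR _ _ 0 _ _ _ (fun _ => rfl) hy) h1

theorem Fd.transE (x y : ℕ) (Anc : Finset ℕ) : ∀ {R : Set (ℕ × ℕ)}, OKT T R q →
    (∀ a ∈ Anc, (a, x) ∈ R) → (x, y) ∈ R → Fd E T ⟨R ∪ (fun a => (a, y)) '' (Anc : Set ℕ), Γ, {q}⟩ →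
    Fd E T ⟨R, Γ, {q}⟩ := by
  classical
  induction Anc using Finset.induction with
  | empty => intro R _ _ _ h; simpa using h
  | insert a s _ ih =>
    intro R hT h1 h2 h3
    refine .mk1 hT (.trans _ _ _ a x y rfl (h1 a (by simp)) h2) (ih (hT.mono (Set.subset_insert _ _)) ?_ ?_ ?_)
    · intro b hb; exact Or.inr (h1 b (by simp [hb]))
    · exact Or.inr h2
    · convert h3 using 2
      ext z
      simp only [Set.mem_union, Set.mem_insert_iff, Set.mem_image, Finset.coe_insert]
      constructor
      · rintro ((h | h) | ⟨b, hb, h⟩)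
        · exact Or.inr ⟨a, Or.inl rfl, h.symm⟩
        · exact Or.inl h
        · exact Or.inr ⟨b, Or.inr hb, h⟩
      · rintro (h | ⟨b, rfl | hb, h⟩)
        · exact Or.inl (Or.inr h)
        · exact Or.inl (Or.inl h.symm)
        · exact Or.inr ⟨b, hb, h⟩
end

theorem relVars_fin {R : Set (ℕ × ℕ)} (h : R.Finite) : (relVars R).Finite := by
  refine ((h.image Prod.fst).union (h.image Prod.snd)).subset ?_
  rintro z ⟨w, h | h⟩
  · exact Or.inl ⟨_, h, rfl⟩
  · exact Or.inr ⟨_, h, rfl⟩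

theorem mLabels_fin (Γ : Multiset LFormula) : (mLabels Γ).Finite := by
  refine ((Γ.toFinset.finite_toSet).image Prod.fst).subset ?_
  rintro z ⟨A, h⟩
  exact ⟨_, by simpa using h, rfl⟩

theorem ex_fresh {R : Set (ℕ × ℕ)} (h : R.Finite) (Γ : Multiset LFormula) (q : LFormula) :
    ∃ y, Fresh y ⟨R, Γ, {q}⟩ ∧ y ≠ q.1 := by
  obtain ⟨y, hy⟩ := (((relVars_fin h).union (mLabels_fin Γ)).union (Set.finite_singleton q.1)).exists_notMem
  simp only [Set.mem_union, not_or, Set.mem_singleton_iff] at hy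
  exact ⟨y, mkFresh hy.1.1 hy.1.2 hy.2, hy.2⟩

theorem Cl_id (A : Formula) : ∀ {R : Set (ℕ × ℕ)} (_ : R.Finite) {Γ : Multiset LFormula} {x : ℕ},
    (x, A) ∈ Γ → Cl ⟨R, Γ, {(x, A)}⟩ := by
  have e := OKT.emp
  induction A with
  | atom p =>
    intro R hR Γ x h
    refine Fd.sub (e _ _) (Γ' := {(x, Formula.atom p)}) (by simpa using h) ?_
    exact .step _ [] (by simp) ⟨.id _ _ _, by simp [SingleRHS], by simp⟩ (by simp)
  | bot =>
    intro R hR Γ x h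
    obtain ⟨X, rfl⟩ := Multiset.exists_cons_of_mem h
    exact .step _ [] (by simp) ⟨.botL _ _ _ _, by simp [SingleRHS], by simp⟩ (by simp)
  | and A B h1 h2 =>
    intro R hR Γ x h
    exact .mk2 (e _ _) (.andR _ _ 0 _ _ _) (.andL1 (e _ _) h (h1 hR (by simp))) (.andL2 (e _ _) h (h2 hR (by simp)))
  | or A B h1 h2 =>
    intro R hR Γ x h
    exact .orL (e _ _) h (.mk1 (e _ _) (.orR₁ _ _ 0 _ _ _) (h1 hR (by simp)))
      (.mk1 (e _ _) (.orR₂ _ _ 0 _ _ _) (h2 hR (by simp)))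
  | imp A B h1 h2 =>
    intro R hR Γ x h
    exact .impR (e _ _) (.impL (e _ _) (Multiset.mem_cons_of_mem h) (h1 hR (by simp)) (h2 hR (by simp)))
  | box A h1 =>
    intro R hR Γ x h
    obtain ⟨y, hy, -⟩ := ex_fresh hR Γ (x, Formula.box A)
    exact .boxR (e _ _) hy (.boxL (e _ _) h (Set.mem_insert _ _) (h1 (hR.insert _) (by simp)))
  | dia A h1 =>
    intro R hR Γ x h
    obtain ⟨y, hy, -⟩ := ex_fresh hR Γ (x, Formula.dia A)
    exact .diaL (e _ _) h hy (.mk1 (e _ _) (.diaR _ _ 0 _ _ _ (Set.mem_insert _ _)) (h1 (hR.insert _) (by simp)))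

theorem Cl_four {A : Formula} {R : Set (ℕ × ℕ)} (hR : R.Finite) {Γ : Multiset LFormula} {x y : ℕ}
    (h : (x, Formula.box A) ∈ Γ) (hxy : (x, y) ∈ R) : Cl ⟨R, Γ, {(y, Formula.box A)}⟩ := by
  have e := OKT.emp
  obtain ⟨z, hz, -⟩ := ex_fresh hR Γ (y, Formula.box A)
  exact .boxR (e _ _) hz (.mk1 (e _ _) (.trans _ _ _ x y z rfl (Or.inr hxy) (Or.inl rfl))
    (.boxL (e _ _) h (Set.mem_insert _ _) (Cl_id A ((hR.insert _).insert _) (by simp))))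



theorem WG.ins {Sg : Finset Formula} {S : St} (h : WG Sg S) {x : Nd} {A : Formula} {q : Nd × Formula}
    (hx : x ∈ S.V) (hA : A ∈ Sg) (hq : q.1 ∈ S.V) (hq' : q.2 ∈ Sg) :
    WG Sg ⟨S.V, insert (x, A) S.L, q⟩ where
  toWF := h.toWF.ins hx hA hq hq'
  ev B y hy := Finset.mem_insert_of_mem (h.ev B y hy)
  od B j y hy := Finset.mem_insert_of_mem (h.od B j y hy)
  hd := h.hd

theorem Rep.wg {Sg : Finset Formula} (hS : SubC Sg) {S S' : St} {m : Mv} (h : WG Sg S) (hm : App Sg S m)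
    (hr : Rep S m S') : WG Sg S' := by
  cases hr with
  | cutR x A =>
    cases hm with
    | cut _ _ h1 h2 => exact ⟨h.toWF.goal h1 h2, h.ev, h.od, h.hd⟩
  | cutL x A =>
    cases hm with
    | cut _ _ h1 h2 => exact h.ins h1 h2 h.gV h.gS
  | or1 x A B =>
    cases hm with
    | orL _ _ _ h1 => exact h.ins (h.LV _ _ h1) (hS.or1 _ _ (h.LS _ _ h1)) h.gV h.gS
  | or2 x A B =>
    cases hm with
    | orL _ _ _ h1 => exact h.ins (h.LV _ _ h1) (hS.or2 _ _ (h.LS _ _ h1)) h.gV h.gS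
  | imp x A B =>
    cases hm with
    | impR _ _ _ h1 =>
      have h2 := h.gV
      have h3 := h.gS
      rw [h1] at h2 h3
      exact h.ins h2 (hS.imp1 _ _ h3) h2 (hS.imp2 _ _ h3)
  | dia x A =>
    cases hm with
    | diaL _ _ h1 h2 =>
      have h3 := h.LV _ _ h1
      have h4 := hS.dia _ (h.LS _ _ h1)
      have hw := h.toWF.new (2 * fc A) h3
      refine ⟨hw.ins (Finset.mem_insert_self _ _) h4 hw.gV hw.gS, ?_, ?_, ?_⟩
      · intro B y hy
        rcases Finset.mem_insert.1 hy with e | hy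
        · rw [e, (dc_inj e).1]; exact Finset.mem_insert_self _ _
        · exact Finset.mem_insert_of_mem (h.ev B y hy)
      · intro B j y hy
        rcases Finset.mem_insert.1 hy with e | hy
        · exact (dc_ne_oc e.symm).elim
        · exact Finset.mem_insert_of_mem (h.od B j y hy)
      · intro k y hy
        rcases Finset.mem_insert.1 hy with e | hy
        · injection e with e _; exact Or.inl ⟨A, h4, e⟩
        · exact h.hd k y hy
  | box x A j hj =>
    cases hm with
    | boxR _ _ h1 =>
      have h3 := h.gV
      have h4 := h.gS
      rw [h1] at h3 h4
      have hw := h.toWF.new (2 * Nat.pair (fc A) j + 1) h3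
      refine ⟨hw.ins (Finset.mem_insert_self _ _) h4 (Finset.mem_insert_self _ _) (hS.box _ h4), ?_, ?_, ?_⟩
      · intro B y hy
        rcases Finset.mem_insert.1 hy with e | hy
        · exact (dc_ne_oc e).elim
        · exact Finset.mem_insert_of_mem (h.ev B y hy)
      · intro B i y hy
        rcases Finset.mem_insert.1 hy with e | hy
        · rw [e, (oc_inj e).1]; exact Finset.mem_insert_self _ _
        · exact Finset.mem_insert_of_mem (h.od B i y hy)
      · intro k y hy
        rcases Finset.mem_insert.1 hy with e | hy
        · injection e with e _; exact Or.inr ⟨A, j, h4, e⟩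
        · exact h.hd k y hy

def rl (ν : Nd → ℕ) (V : Finset Nd) : Set (ℕ × ℕ) := {p | ∃ a ∈ V, ∃ b ∈ V, PS a b ∧ (ν a, ν b) = p}

def fL (ν : Nd → ℕ) (L : Finset (Nd × Formula)) : Multiset LFormula := L.val.map fun q => (ν q.1, q.2)

def sqS (ν : Nd → ℕ) (S : St) : Sequent := ⟨rl ν S.V, fL ν S.L, {(ν S.g.1, S.g.2)}⟩

def sqP (ν : Nd → ℕ) (S : St) (x : Nd) (A : Formula) (z : Nd) (j : ℕ) : Sequent :=
  ⟨insert (ν z, ν (oc A j x)) (rl ν (insert (oc A j x) S.V)), fL ν S.L, {(ν (oc A j x), Formula.box A)}⟩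

section
variable {ν : Nd → ℕ}

theorem mem_fL {L : Finset (Nd × Formula)} {x : Nd} {A : Formula} (h : (x, A) ∈ L) : (ν x, A) ∈ fL ν L :=
  Multiset.mem_map.2 ⟨(x, A), h, rfl⟩

theorem of_fL {L : Finset (Nd × Formula)} {q : LFormula} (h : q ∈ fL ν L) : ∃ x A, (x, A) ∈ L ∧ q = (ν x, A) := by
  obtain ⟨⟨x, A⟩, h1, h2⟩ := Multiset.mem_map.1 h
  exact ⟨x, A, h1, h2.symm⟩

theorem fL_ins {L : Finset (Nd × Formula)} {x : Nd} {A : Formula} :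
    ∀ a ∈ fL ν (insert (x, A) L), a ∈ (ν x, A) ::ₘ fL ν L := by
  intro a ha
  obtain ⟨y, B, h, rfl⟩ := of_fL ha
  rcases Finset.mem_insert.1 h with e | h
  · cases e; simp
  · exact Multiset.mem_cons_of_mem (mem_fL h)

theorem mem_rl {V : Finset Nd} {a b : Nd} (h1 : a ∈ V) (h2 : b ∈ V) (h : PS a b) : (ν a, ν b) ∈ rl ν V :=
  ⟨a, h1, b, h2, h, rfl⟩

theorem rl_mono {V V' : Finset Nd} (h : V ⊆ V') : rl ν V ⊆ rl ν V' := by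
  rintro _ ⟨a, h1, b, h2, h3, rfl⟩
  exact mem_rl (h h1) (h h2) h3

theorem rl_fin (V : Finset Nd) : (rl ν V).Finite := by
  refine ((V ×ˢ V).image fun p => (ν p.1, ν p.2)).finite_toSet.subset ?_
  rintro _ ⟨a, h1, b, h2, h3, rfl⟩
  simp only [Finset.coe_image, Set.mem_image, Finset.mem_coe, Finset.mem_product, Prod.exists]
  exact ⟨a, b, ⟨h1, h2⟩, rfl⟩

theorem rl_vars {V : Finset Nd} {z : ℕ} (h : z ∈ relVars (rl ν V)) : ∃ a ∈ V, ν a = z := by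
  rcases h with ⟨w, ⟨a, h1, b, h2, h3, e⟩ | ⟨a, h1, b, h2, h3, e⟩⟩
  · cases e; exact ⟨a, h1, rfl⟩
  · cases e; exact ⟨b, h2, rfl⟩

theorem okV {V : Finset Nd} (hr : [] ∈ V) {x : Nd} (hx : x ∈ V) (A : Formula) :
    OKT (ν '' (V : Set Nd)) (rl ν V) (ν x, A) := by
  rintro _ ⟨y, hy, rfl⟩
  have hy : y ∈ V := hy
  by_cases e : y = x
  · right; rw [e]; rfl
  · left
    by_cases e' : y = []
    · subst e'
      exact ⟨ν x, Or.inl (mem_rl hr hx ⟨List.nil_suffix, e⟩)⟩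
    · exact ⟨ν [], Or.inr (mem_rl hr hy ⟨List.nil_suffix, Ne.symm e'⟩)⟩

theorem rl_new {Sg : Finset Formula} {S : St} (h : WF Sg S) {x : Nd} {k : ℕ} (hk : k :: x ∉ S.V) :
    rl ν (insert (k :: x) S.V) ⊆ insert (ν x, ν (k :: x)) (rl ν S.V) ∪
      (fun a => (a, ν (k :: x))) '' (((S.V.filter fun a => a <:+ x ∧ a ≠ x).image ν : Finset ℕ) : Set ℕ) := by
  rintro _ ⟨a, h1, b, h2, h3, rfl⟩
  have ha : a ∈ S.V := by
    rcases Finset.mem_insert.1 h1 with rfl | h1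
    · rcases Finset.mem_insert.1 h2 with rfl | h2
      · exact absurd rfl h3.2
      · exact absurd (h.suf h2 h3.1) hk
    · exact h1
  rcases Finset.mem_insert.1 h2 with rfl | h2
  · rcases PS_cons'.1 h3 with rfl | h4
    · exact Or.inl (Or.inl rfl)
    · refine Or.inr ⟨ν a, ?_, rfl⟩
      simp only [Finset.coe_image, Set.mem_image, Finset.mem_coe, Finset.mem_filter]
      exact ⟨a, ⟨ha, h4⟩, rfl⟩
  · exact Or.inl (Or.inr (mem_rl ha h2 h3))

theorem OKT.new {T : Set ℕ} {R R' : Set (ℕ × ℕ)} {q q' : LFormula} (h : OKT T R q) (hR : R ⊆ R') {y : ℕ}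
    (hy : (q.1, y) ∈ R') : OKT T R' q' := by
  intro z hz
  rcases h hz with ⟨w, h⟩ | h
  · exact Or.inl ⟨w, h.imp (@hR _) (@hR _)⟩
  · left
    rw [Set.mem_singleton_iff.1 h]
    exact ⟨y, Or.inl hy⟩

theorem fresh_nu (hν : Function.Injective ν) {Sg : Finset Formula} {S : St} (h : WF Sg S) {y z : Nd} (hy : y ∉ S.V)
    (hz : z ∈ S.V) (A : Formula) : Fresh (ν y) ⟨rl ν S.V, fL ν S.L, {(ν z, A)}⟩ := by
  refine mkFresh ?_ ?_ ?_
  · intro hh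
    obtain ⟨a, ha, e⟩ := rl_vars hh
    exact hy (hν e ▸ ha)
  · rintro ⟨B, hB⟩
    obtain ⟨a, C, h1, e⟩ := of_fL hB
    injection e with e _
    exact hy (hν e ▸ h.LV _ _ h1)
  · intro e
    exact hy (hν e ▸ hz)

theorem oc_fresh (A : Formula) (x : Nd) (V : Finset Nd) : ∃ j, oc A j x ∉ V := by
  by_contra hc
  push Not at hc
  exact Set.infinite_univ ((V.finite_toSet.preimage (f := fun j => oc A j x)
    (fun a _ b _ e => (oc_inj e).2.1)).subset (fun j _ => hc j))

theorem Closed.cl {Sg : Finset Formula} {S : St} (h : WF Sg S) (hc : Closed S) : Cl (sqS ν S) := by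
  have e := OKT.emp
  have hR := rl_fin (ν := ν) S.V
  unfold sqS
  cases hc with
  | ax h1 => exact Cl_id _ hR (mem_fL h1)
  | bot x h1 =>
    obtain ⟨X, hX⟩ := Multiset.exists_cons_of_mem (mem_fL (ν := ν) h1)
    rw [hX]
    exact .step _ [] (by simp) ⟨.botL _ _ _ _, by simp [SingleRHS], by simp⟩ (by simp)
  | andL1 x A B h1 h2 => rw [h2]; exact .andL1 (e _ _) (mem_fL h1) (Cl_id _ hR (by simp))
  | andL2 x A B h1 h2 => rw [h2]; exact .andL2 (e _ _) (mem_fL h1) (Cl_id _ hR (by simp))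
  | andR x A B h1 h2 h3 =>
    rw [h3]; exact .mk2 (e _ _) (.andR _ _ 0 _ _ _) (Cl_id _ hR (mem_fL h1)) (Cl_id _ hR (mem_fL h2))
  | orR1 x A B h1 h3 => rw [h3]; exact .mk1 (e _ _) (.orR₁ _ _ 0 _ _ _) (Cl_id _ hR (mem_fL h1))
  | orR2 x A B h1 h3 => rw [h3]; exact .mk1 (e _ _) (.orR₂ _ _ 0 _ _ _) (Cl_id _ hR (mem_fL h1))
  | impL x A B h1 h2 h3 =>
    rw [h3]; exact .impL (e _ _) (mem_fL h1) (Cl_id _ hR (mem_fL h2)) (Cl_id _ hR (by simp))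
  | boxL x y A h1 h2 h3 h4 =>
    rw [h4]; exact .boxL (e _ _) (mem_fL h1) (mem_rl (h.suf h3 h2.1) h3 h2) (Cl_id _ hR (by simp))
  | diaR x y A h1 h2 h4 =>
    rw [h4]
    exact .mk1 (e _ _) (.diaR _ _ 0 _ _ _ (mem_rl (h.suf (h.LV _ _ h1) h2.1) (h.LV _ _ h1) h2))
      (Cl_id _ hR (mem_fL h1))
  | four x y A h1 h2 h3 h4 =>
    rw [h4]; exact Cl_four hR (mem_fL h1) (mem_rl (h.suf h3 h2.1) h3 h2)

variable {E : Sequent → Prop}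

theorem addN {T : Set ℕ} {Γ : Multiset LFormula} {q : LFormula} {Sg : Finset Formula} {S : St} (h : WF Sg S)
    {x : Nd} (hx : x ∈ S.V) {k : ℕ} (hk : k :: x ∉ S.V)
    (hT : OKT T (insert (ν x, ν (k :: x)) (rl ν S.V)) q)
    (hF : Fd E T ⟨rl ν (insert (k :: x) S.V), Γ, {q}⟩) :
    Fd E T ⟨insert (ν x, ν (k :: x)) (rl ν S.V), Γ, {q}⟩ := by
  refine Fd.transE (ν x) (ν (k :: x)) ((S.V.filter fun a => a <:+ x ∧ a ≠ x).image ν) hT ?_ (Or.inl rfl) ?_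
  · intro a ha
    obtain ⟨b, hb, rfl⟩ := Finset.mem_image.1 ha
    have := Finset.mem_filter.1 hb
    exact Or.inr (mem_rl this.1 hx this.2)
  · exact .thin (hT.mono Set.subset_union_left) (rl_new h hk) hF

theorem gmStep (hν : Function.Injective ν) {Sg : Finset Formula} (hS : SubC Sg) {S : St} {m : Mv} (h : WG Sg S)
    (hm : App Sg S m) (hE : ∀ S', Rep S m S' → WG Sg S' → E (sqS ν S')) (hC : ∀ p, Cl p ∧ SingleRHS p → E p)
    (hB : ∀ x A, m = .boxR x A → S.g = (x, Formula.box A) → ∀ j, oc A j x ∉ S.V → E (sqP ν S x A x j)) :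
    Fd E (ν '' (S.V : Set Nd)) (sqS ν S) := by
  have hE : ∀ S', Rep S m S' → E (sqS ν S') := fun S' hr => hE S' hr (hr.wg hS h hm)
  have ok : ∀ {x A}, x ∈ S.V → OKT (ν '' (S.V : Set Nd)) (rl ν S.V) (ν x, A) := fun hx => okV h.root hx _
  have okg := ok (A := S.g.2) h.gV
  cases hm with
  | ax hc => exact .ex _ (hC _ ⟨hc.cl h.toWF, by simp [SingleRHS, sqS]⟩)
  | cut x A h1 h2 =>
    refine .cut okg (ν x) A (.ex _ (hE _ (.cutR x A))) (.sub okg fL_ins (.ex _ (hE _ (.cutL x A))))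
  | orL x A B h1 =>
    exact .orL okg (mem_fL h1) (.sub okg fL_ins (.ex _ (hE _ (.or1 x A B))))
      (.sub okg fL_ins (.ex _ (hE _ (.or2 x A B))))
  | impR x A B h1 =>
    have hx := h.gV
    unfold sqS
    rw [h1] at hx ⊢
    exact .impR (ok hx) (.sub (ok hx) fL_ins (.ex _ (hE _ (.imp x A B))))
  | diaL x A h1 h2 =>
    refine .diaL okg (mem_fL h1) (fresh_nu hν h.toWF h2 h.gV _) ?_
    have hx := h.LV _ _ h1
    have ok2 := okg.mono (Set.subset_insert (ν x, ν (dc A x)) _)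
    refine addN h.toWF hx h2 ok2 (.sub (okg.mono (rl_mono (Finset.subset_insert _ _))) fL_ins
      (.ex _ (hE _ (.dia x A))))
  | boxR x A h1 =>
    obtain ⟨j, hj⟩ := oc_fresh A x S.V
    have hx := h.gV
    have hb := hB x A rfl h1 j hj
    unfold sqS
    rw [h1] at hx ⊢
    have okx := ok (A := Formula.box A) hx
    have hm : (ν x, ν (oc A j x)) ∈ rl ν (insert (oc A j x) S.V) :=
      mem_rl (Finset.mem_insert_of_mem hx) (Finset.mem_insert_self _ _) (PS_self_cons _ _)
    have ok3 : ∀ q, OKT (ν '' (S.V : Set Nd)) (rl ν (insert (oc A j x) S.V)) q :=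
      fun _ => okx.new (rl_mono (Finset.subset_insert _ _)) hm
    refine .boxR okx (fresh_nu hν h.toWF hj hx _)
      (addN h.toWF hx hj (okx.new (Set.subset_insert _ _) (Or.inl rfl)) ?_)
    refine .cut (ok3 _) (ν (oc A j x)) (Formula.box A) ?_ (.sub (ok3 _) fL_ins (.ex _ (hE _ (.box x A j hj))))
    unfold sqP at hb
    rw [Set.insert_eq_of_mem hm] at hb
    exact .ex _ hb

theorem spStep (hν : Function.Injective ν) {Sg : Finset Formula} {S : St} (h : WG Sg S)
    {x : Nd} {A : Formula} (hg : S.g = (x, Formula.box A)) {z : Nd} {j : ℕ}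
    (hE : ∀ S', Rep S (.boxR x A) S' → E (sqS ν S'))
    (hB : ∀ i, oc A i x ∉ S.V → E (sqP ν S x A (oc A j x) i)) :
    Fd E (ν '' ((insert (oc A j x) S.V : Finset Nd) : Set Nd)) (sqP ν S x A z j) := by
  obtain ⟨i, hi⟩ := oc_fresh A x (insert (oc A j x) S.V)
  have hi1 : oc A i x ∉ S.V := fun h => hi (Finset.mem_insert_of_mem h)
  have hx := h.gV
  rw [hg] at hx
  have hw := h.toWF.new (2 * Nat.pair (fc A) j + 1) hx
  have ok1 := okV (ν := ν) hw.root (Finset.mem_insert_self (oc A j x) S.V) (Formula.box A)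
  have hzz : ∀ q, OKT (ν '' ((insert (oc A j x) S.V : Finset Nd) : Set Nd))
      (insert (ν (oc A j x), ν (oc A i x)) (rl ν (insert (oc A j x) S.V))) q :=
    fun _ => ok1.new (Set.subset_insert _ _) (Or.inl rfl)
  unfold sqP
  refine .thin (ok1.mono (Set.subset_insert _ _)) (Set.subset_insert _ _) (.boxR ok1
    (fresh_nu hν hw hi (Finset.mem_insert_self _ _) _) ?_)
  refine Fd.transE (ν (oc A j x)) (ν (oc A i x)) ((S.V.filter fun a => a <:+ x).image ν) (hzz _) ?_ (Or.inl rfl) ?_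
  · intro a ha
    obtain ⟨b, hb, rfl⟩ := Finset.mem_image.1 ha
    have := Finset.mem_filter.1 hb
    exact Or.inr (mem_rl (Finset.mem_insert_of_mem this.1) (Finset.mem_insert_self _ _) (PS_cons.2 this.2))
  have okz : ∀ q, OKT (ν '' ((insert (oc A j x) S.V : Finset Nd) : Set Nd))
      (insert (ν (oc A j x), ν (oc A i x)) (rl ν (insert (oc A i x) S.V))) q := by
    rintro q _ ⟨y, hy, rfl⟩
    left
    rcases Finset.mem_insert.1 hy with rfl | hy
    · exact ⟨_, Or.inl (Or.inl rfl)⟩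
    · have h1 := okV (ν := ν) h.root hx (Formula.box A)
      rcases (h1.new (q' := (ν x, A)) (R' := insert (ν (oc A j x), ν (oc A i x)) (rl ν (insert (oc A i x) S.V)))
        ((rl_mono (Finset.subset_insert _ _)).trans (Set.subset_insert _ _)) (Or.inr (mem_rl (Finset.mem_insert_of_mem hx) (Finset.mem_insert_self _ _) (PS_self_cons _ _)))) ⟨y, hy, rfl⟩
        with h2 | h2
      · exact h2
      · rw [Set.mem_singleton_iff.1 h2]
        exact ⟨_, Or.inl (Or.inr (mem_rl (Finset.mem_insert_of_mem hx) (Finset.mem_insert_self _ _) (PS_self_cons _ _)))⟩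
  refine .thin ((hzz _).mono Set.subset_union_left)
    (R' := insert (ν (oc A j x), ν (oc A i x)) (rl ν (insert (oc A i x) S.V))) ?_ ?_
  · rintro p (hp | hp)
    · exact Or.inl (Or.inl hp)
    · rcases rl_new h.toWF hi1 hp with (hp | hp) | ⟨a, ha, hp⟩
      · right
        rw [hp]
        refine ⟨ν x, ?_, rfl⟩
        simp only [Finset.coe_image, Set.mem_image, Finset.mem_coe, Finset.mem_filter]
        exact ⟨x, ⟨hx, List.suffix_rfl⟩, rfl⟩
      · exact Or.inl (Or.inr (rl_mono (Finset.subset_insert _ _) hp))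
      · right
        refine ⟨a, ?_, hp⟩
        simp only [Finset.coe_image, Set.mem_image, Finset.mem_coe, Finset.mem_filter] at ha ⊢
        obtain ⟨y, hy, rfl⟩ := ha
        exact ⟨y, ⟨hy.1, hy.2.1⟩, rfl⟩
  · exact .cut (okz _) (ν (oc A i x)) (Formula.box A) (.ex _ (hB i hi1)) (.sub (okz _) fL_ins
      (.thin (okz _) (Set.subset_insert _ _) (.ex _ (hE _ (.box x A i hi1)))))
end



theorem konig {Sg : Finset Formula} (U : Set Nd) (hs : ∀ k y, k :: y ∈ U → y ∈ U)
    (hh : ∀ k y, k :: y ∈ U → k % 2 = 0 → ∃ A ∈ Sg, k = 2 * fc A) (v : Nd)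
    (hv : {t : Nd | (∀ k ∈ t, k % 2 = 0) ∧ t ++ v ∈ U}.Infinite) :
    ∃ u : ℕ → Nd, u 0 = v ∧ (∀ n, PS (u n) (u (n+1))) ∧ ∀ n, u n ∈ U := by
  classical
  have suf : ∀ (t y : Nd), t ++ y ∈ U → y ∈ U := by
    intro t
    induction t with
    | nil => intro y h; exact h
    | cons k t ih => intro y h; exact ih y (hs _ _ h)
  let I : Nd → Prop := fun y => {t : Nd | (∀ k ∈ t, k % 2 = 0) ∧ t ++ y ∈ U}.Infinite
  have hst : ∀ y, I y → ∃ k, I (k :: y) := by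
    intro y hy
    by_contra hc
    push Not at hc
    apply hy
    have hf : ∀ k, {t : Nd | (∀ k ∈ t, k % 2 = 0) ∧ t ++ (k :: y) ∈ U}.Finite := fun k => by
      have := hc k
      simp only [I, Set.not_infinite] at this
      exact this
    refine ((Set.finite_singleton ([] : Nd)).union (Set.Finite.biUnion Sg.finite_toSet
      (fun A _ => (hf (2 * fc A)).image fun t => t ++ [2 * fc A]))).subset ?_
    rintro t ⟨h1, h2⟩
    rcases List.eq_nil_or_concat t with rfl | ⟨t', k, rfl⟩
    · exact Or.inl rfl
    · right
      rw [List.concat_eq_append] at h1 h2 ⊢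
      rw [List.append_assoc] at h2
      obtain ⟨A, hA, rfl⟩ := hh k y (suf _ _ h2) (h1 k (by simp))
      simp only [Set.mem_iUnion]
      exact ⟨A, hA, t', ⟨fun k hk => h1 k (by simp [hk]), h2⟩, rfl⟩
  choose! nk hnk using hst
  let u : ℕ → Nd := fun n => Nat.rec v (fun _ y => nk y :: y) n
  have hu : ∀ n, I (u n) := by
    intro n
    induction n with
    | zero => exact hv
    | succ n ih => exact hnk _ ih
  refine ⟨u, rfl, fun n => PS_self_cons _ _, fun n => ?_⟩
  obtain ⟨t, ht⟩ := (hu n).nonempty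
  exact suf _ _ ht.2

theorem grow_trace (W : ℕ → Finset Nd) (hW : ∀ n, W n ⊆ W (n+1)) (u : ℕ → Nd) (hu : ∀ n, ∃ i, u n ∈ W i) :
    ∃ (k : ℕ) (j : ℕ → ℕ), ∀ n, k ≤ n → u (j n) ∈ W n ∧ u (j (n+1)) ∈ W n ∧ (j (n+1) = j n ∨ j (n+1) = j n + 1) ∧
      ∃ n', n ≤ n' ∧ j (n'+1) = j n' + 1 := by
  classical
  have hm : ∀ {a b}, a ≤ b → W a ⊆ W b := fun h => monotone_nat_of_le_succ hW h
  let j : ℕ → ℕ := fun n => Nat.rec 0 (fun n r => if u (r+1) ∈ W n then r + 1 else r) n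
  have j1 : ∀ n, u (j n + 1) ∈ W n → j (n+1) = j n + 1 := fun n h => by
    show (if _ then _ else _) = _
    rw [if_pos h]
  have j2 : ∀ n, u (j n + 1) ∉ W n → j (n+1) = j n := fun n h => by
    show (if _ then _ else _) = _
    rw [if_neg h]
  have inv : ∀ n, j n = 0 ∨ u (j n) ∈ W n := by
    intro n
    induction n with
    | zero => exact Or.inl rfl
    | succ n ih =>
      by_cases h : u (j n + 1) ∈ W n
      · right; rw [j1 n h]; exact hW n h
      · rw [j2 n h]; exact ih.imp_right (@hW n _)
  obtain ⟨k, hk⟩ := hu 0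
  have hin : ∀ n, k ≤ n → u (j n) ∈ W n := by
    intro n hn
    rcases inv n with h | h
    · rw [h]; exact hm hn hk
    · exact h
  refine ⟨k, j, fun n hn => ?_⟩
  have hpr : ∃ n', n ≤ n' ∧ j (n'+1) = j n' + 1 := by
    by_contra hc
    push Not at hc
    have hc2 : ∀ n', n ≤ n' → u (j n' + 1) ∉ W n' := fun n' h h' => hc n' h (j1 _ h')
    have he : ∀ i, j (n+i) = j n := by
      intro i
      induction i with
      | zero => rfl
      | succ i ih => exact (j2 _ (hc2 (n+i) (by omega))).trans ih
    obtain ⟨i, hi⟩ := hu (j n + 1)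
    exact hc2 (n+i) (by omega) (by rw [he]; exact hm (by omega) hi)
  by_cases h : u (j n + 1) ∈ W n
  · exact ⟨hin n hn, by rw [j1 n h]; exact h, Or.inr (j1 n h), hpr⟩
  · exact ⟨hin n hn, by rw [j2 n h]; exact hin n hn, Or.inl (j2 n h), hpr⟩

inductive Mac {Sg : Finset Formula} (σ : GP Sg → Mv) : Type
  | gm (p : GP Sg) : Mac σ
  | sp (p : GP Sg) (x : Nd) (A : Formula) (h : σ p = .boxR x A) (z : Nd) (j : ℕ) : Mac σ

namespace Mac
variable {Sg : Finset Formula} {σ : GP Sg → Mv} (ν : Nd → ℕ)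

def mp : Mac σ → GP Sg
  | gm p => p
  | sp p _ _ _ _ _ => p

def sq : Mac σ → Sequent
  | gm p => sqS ν p.1.1
  | sp p x A _ z j => sqP ν p.1.1 x A z j

def lab : Mac σ → Set ℕ
  | gm p => ν '' (p.1.1.V : Set Nd)
  | sp p x A _ _ j => ν '' ((insert (oc A j x) p.1.1.V : Finset Nd) : Set Nd)

def nz : Mac σ → Nd → Nd
  | gm _, x => x
  | sp _ x A _ _ j, _ => oc A j x

def isG : Mac σ → Prop
  | gm _ => True
  | sp _ _ _ _ _ _ => False

def zz : Mac σ → Nd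
  | gm _ => []
  | sp _ _ _ _ z _ => z

def nx (a : Mac σ) : Mac σ → Prop
  | gm q => (IGL.gm Sg).rp a.mp (σ a.mp) q
  | sp p x _ _ z _ => a.mp = p ∧ z = a.nz x

theorem nx_G {a b : Mac σ} (h : nx a b) (hb : b.isG) : (IGL.gm Sg).rp a.mp (σ a.mp) b.mp := by
  cases b with
  | gm q => exact h
  | sp => exact hb.elim

theorem nx_N {a b : Mac σ} (h : nx a b) (hb : ¬ b.isG) : b.mp = a.mp := by
  cases b with
  | gm q => exact absurd trivial hb
  | sp => exact h.1.symm

theorem hF {ν : Nd → ℕ} (hν : Function.Injective ν) (hS : SubC Sg) (hσ : ∀ p, App Sg p.1.1 (σ p)) (a : Mac σ) :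
    Fd (fun p => (∃ a', nx a a' ∧ sq ν a' = p) ∨ (Cl p ∧ SingleRHS p)) (lab ν a) (sq ν a) := by
  cases a with
  | gm p =>
    refine gmStep hν hS p.1.2 (hσ p) ?_ (fun _ h => Or.inr h) ?_
    · intro S' hr hw
      exact Or.inl ⟨gm (⟨S', hw⟩, p.1 :: p.2), ⟨hr, rfl⟩, rfl⟩
    · intro x A hm _ j _
      exact Or.inl ⟨sp p x A hm x j, ⟨rfl, rfl⟩, rfl⟩
  | sp p x A h z j =>
    have ha := hσ p
    rw [h] at ha
    have hg : p.1.1.g = (x, Formula.box A) := by cases ha; assumption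
    refine spStep hν p.1.2 hg ?_ ?_
    · intro S' hr
      refine Or.inl ⟨gm (⟨S', hr.wg hS p.1.2 ha⟩, p.1 :: p.2), ⟨?_, rfl⟩, rfl⟩
      show Rep p.1.1 (σ p) S'
      rw [h]; exact hr
    · intro i _
      exact Or.inl ⟨sp p x A h (oc A j x) i, ⟨rfl, rfl⟩, rfl⟩

theorem sq_rel (a : Mac σ) : rl ν a.mp.1.1.V ⊆ (sq ν a).rel := by
  cases a with
  | gm p => exact subset_rfl
  | sp p x A h z j => exact (rl_mono (Finset.subset_insert _ _)).trans (Set.subset_insert _ _)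

theorem lab_V (a : Mac σ) {y : Nd} (h : y ∈ a.mp.1.1.V) : ν y ∈ lab ν a := by
  cases a with
  | gm p => exact ⟨y, h, rfl⟩
  | sp p x A _ z j => exact ⟨y, Finset.mem_insert_of_mem h, rfl⟩

theorem vars_V (a : Mac σ) {y : Nd} (h : y ∈ a.mp.1.1.V) : ν y ∈ (sq ν a).vars := by
  cases a with
  | gm p => exact (okV p.1.2.root p.1.2.gV _).sub _ ⟨y, h, rfl⟩
  | sp p x A _ z j =>
    exact ((okV (Finset.mem_insert_of_mem p.1.2.root) (Finset.mem_insert_self _ _) _).mono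
      (Set.subset_insert _ _)).sub _ ⟨y, Finset.mem_insert_of_mem h, rfl⟩
end Mac

theorem toLI (B : Formula) (x : ℕ) (hw : (gm (subF B)).Win Set.univ (TG.Aof (evs (subF B))) (p0 B)) :
    InfProof RuleLIK4 ⟨∅, 0, {(x, B)}⟩ := by
  classical
  obtain ⟨σ, hσ, hwin⟩ := hw
  let ν : Nd → ℕ := fun a => Equiv.swap x (Encodable.encode ([] : Nd)) (Encodable.encode a)
  have hν : Function.Injective ν := fun a b h => Encodable.encode_injective ((Equiv.swap _ _).injective h)
  have hν0 : ν [] = x := Equiv.swap_apply_right _ _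
  have h0 : (⟨∅, 0, {(x, B)}⟩ : Sequent) = Mac.sq (σ := σ) ν (.gm (p0 B)) := by
    have : rl ν {[]} = ∅ := by
      ext p
      simp only [Set.mem_empty_iff_false, iff_false]
      rintro ⟨a, h1, b, h2, h3, -⟩
      rw [Finset.mem_singleton] at h1 h2
      exact h3.2 (h1.trans h2.symm)
    simp only [Mac.sq, sqS, p0, tA, this, hν0]
    rfl
  rw [h0]
  refine glue (Mac.sq ν) (Mac.lab ν) Mac.nx ?_ (Mac.hF hν (subF_subC B) hσ) _ ?_
  · intro a; cases a <;> simp [Mac.sq, sqS, sqP, SingleRHS]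
  intro c hc0 hc
  by_cases hJ : ∀ N, ∃ n, N ≤ n ∧ (c (n+1)).isG
  · obtain ⟨b, m, m0, m1, m2, hab, hex⟩ := stut (fun n => (c n).mp) (fun n => (c (n+1)).isG)
      (fun n hn => Mac.nx_N (hc n) hn) hJ
    have hb0 : b 0 = p0 B := by
      have := hab 0
      rw [m0] at this
      rw [← this, hc0]; rfl
    have hrp : ∀ i, (gm (subF B)).rp (b i) (σ (b i)) (b (i+1)) := by
      intro i
      obtain ⟨n, hn, hj⟩ := hex i
      have h1 := hab n
      have h2 := hab (n+1)
      rw [m1 n hj, hn] at h2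
      rw [hn] at h1
      rw [← h1, ← h2]; exact Mac.nx_G (hc n) hj
    obtain ⟨v, hv⟩ := hwin b ⟨hb0, fun n => ⟨hrp n, trivial⟩⟩
    obtain ⟨n1, -, v', hv', -⟩ := hv 0
    rw [← hv', evs_encode] at hv
    have hbm : ∀ i, (b i).1.1.V ⊆ (b (i+1)).1.1.V := fun i => (hrp i).1.mono.1
    have hbm' : ∀ {i j}, i ≤ j → (b i).1.1.V ⊆ (b j).1.1.V := fun h =>
      monotone_nat_of_le_succ (f := fun i => (b i).1.1.V) hbm h
    have hgrow : ∀ N, ∃ t : Nd, (∀ k ∈ t, k % 2 = 0) ∧ (∃ i, t ++ v' ∈ (b i).1.1.V) ∧ t ++ v' ∉ (b N).1.1.V := by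
      intro N
      obtain ⟨n, hn, a, l, h1, t, h2, h3, h4, h5⟩ := hv (N+1)
      obtain ⟨n, rfl⟩ : ∃ i, n = i + 1 := ⟨n - 1, by omega⟩
      have h6 := (hrp n).2
      rw [h1] at h6
      injection h6 with h6 _
      refine ⟨t, h3, ⟨_, h4⟩, fun h => h5 ?_⟩
      rw [h6]
      exact hbm' (by omega) h
    obtain ⟨u, -, hu1, hu2⟩ := konig (Sg := subF B) {y | ∃ i, y ∈ (b i).1.1.V}
      (fun k y ⟨i, h⟩ => ⟨i, (b i).1.2.tl _ _ h⟩)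
      (by
        rintro k y ⟨i, h⟩ hk
        rcases (b i).1.2.hd _ _ h with h | ⟨A, j, -, h⟩
        · exact h
        · omega) v' (by
        intro hfin
        have : ∃ N, ∀ t ∈ hfin.toFinset, t ++ v' ∈ (b N).1.1.V := by
          have h1 : ∀ t ∈ hfin.toFinset, ∃ i, t ++ v' ∈ (b i).1.1.V := by
            intro t ht
            rw [Set.Finite.mem_toFinset] at ht
            exact ht.2
          obtain ⟨N, hN⟩ := ex_bound (fun i t => t ++ v' ∈ (b i).1.1.V) (fun i j t hij h => hbm' hij h)
            hfin.toFinset.toList (by simpa only [Finset.mem_toList] using h1)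
          exact ⟨N, by simpa only [Finset.mem_toList] using hN⟩
        obtain ⟨N, hN⟩ := this
        obtain ⟨t, h1, h2, h3⟩ := hgrow N
        exact h3 (hN t (by rw [Set.Finite.mem_toFinset]; exact ⟨h1, h2⟩)))
    obtain ⟨k, j, hj⟩ := grow_trace (fun n => (c n).mp.1.1.V) (by
        intro n
        by_cases h : (c (n+1)).isG
        · exact (Mac.nx_G (hc n) h).1.mono.1
        · rw [Mac.nx_N (hc n) h]) u (by
        intro n
        obtain ⟨i, hi⟩ := hu2 n
        obtain ⟨n', hn', -⟩ := hex i
        refine ⟨n', ?_⟩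
        have := hab n'
        rw [this, hn']; exact hi)
    have hrel : ∀ n, k ≤ n → j (n+1) = j n + 1 → (ν (u (j n)), ν (u (j (n+1)))) ∈ (Mac.sq ν (c n)).rel := by
      intro n hn e
      have := hj n hn
      refine Mac.sq_rel ν _ (mem_rl this.1 this.2.1 ?_)
      rw [e]; exact hu1 _
    refine ⟨k, fun n => ν (u (j n)), fun n hn => ⟨Mac.vars_V _ _ (hj n hn).1, Mac.lab_V _ _ (hj n hn).2.1, ?_⟩, ?_⟩
    · rcases (hj n hn).2.2.1 with e | e
      · left; dsimp only; rw [e]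
      · exact Or.inr (hrel n hn e)
    · intro N
      obtain ⟨n', hn', e⟩ := (hj (max N k) (le_max_right _ _)).2.2.2
      exact ⟨n', (le_max_left _ _).trans hn', (le_max_right _ _).trans hn', hrel _ ((le_max_right _ _).trans hn') e⟩
  · push Not at hJ
    obtain ⟨N, hN⟩ := hJ
    have key : ∀ n, N + 1 ≤ n → (ν (c n).zz, ν (c (n+1)).zz) ∈ (Mac.sq ν (c n)).rel ∧
        ν (c (n+1)).zz ∈ Mac.lab ν (c n) := by
      intro n hn
      have h1 : ¬ (c n).isG := by
        obtain ⟨i, rfl⟩ : ∃ i, n = i + 1 := ⟨n - 1, by omega⟩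
        exact hN i (by omega)
      have h2 : ¬ (c (n+1)).isG := hN n (by omega)
      have h3 := hc n
      revert h1 h2 h3
      generalize c n = a
      generalize c (n+1) = a'
      intro h1 h2 h3
      cases a with
      | gm => exact absurd trivial h1
      | sp p y A h z j =>
        cases a' with
        | gm => exact absurd trivial h2
        | sp p' y' A' h' z' j' =>
          obtain ⟨-, rfl⟩ := h3
          exact ⟨Or.inl rfl, ⟨_, Finset.mem_insert_self _ _, rfl⟩⟩
    refine ⟨N+1, fun n => ν (c n).zz, fun n hn => ⟨?_, (key n hn).2, Or.inr (key n hn).1⟩, fun M =>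
      ⟨max M (N+1), le_max_left _ _, le_max_right _ _, (key _ (le_max_right _ _)).1⟩⟩
    exact Or.inl (Or.inl ⟨_, Or.inl (key n hn).1⟩)

theorem pred_LI (B : Formula) (x : ℕ)
    (hval : ∀ (W D : Type) (K : Kripke W D), Nonempty W → PredIGL K →
        ∀ (w : W) (ρ : ℕ → D), (∀ v, ρ v ∈ K.Dom w) → ksat K w (ρ x) B) :
    InfProof RuleLIK4 ⟨∅, 0, {(x, B)}⟩ := toLI B x (henkin B x hval)



theorem LI_ML {S : Sequent} (h : InfProof RuleLIK4 S) : InfProof RuleMLIK4 S := by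
  obtain ⟨⟨nd, rt, chd⟩, hP⟩ := h
  refine ⟨⟨nd, rt, fun p S hS => ?_⟩, hP⟩
  obtain ⟨ps, ⟨hr, h1, h2⟩, h3⟩ := chd p S hS
  refine ⟨ps, ?_, h3⟩
  unfold RuleLK4 at hr
  unfold SingleRHS at h1
  cases hr with
  | id => exact .id ..
  | cut => exact .cut ..
  | wkL => exact .wkL ..
  | wkR => exact .wkR ..
  | ctrL => exact .ctrL ..
  | ctrR => exact .ctrR ..
  | th _ _ _ _ h => exact .th _ _ _ _ h
  | botL => exact .botL ..
  | impL => exact .impL ..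
  | impR => exact .impR _ _ _ _ _ _ (fun _ => by simpa using h1)
  | andL₁ => exact .andL₁ ..
  | andL₂ => exact .andL₂ ..
  | orL => exact .orL ..
  | orR₁ => exact .orR₁ ..
  | orR₂ => exact .orR₂ ..
  | andR => exact .andR ..
  | diaL _ _ _ _ _ _ h => exact .diaL _ _ _ _ _ _ h
  | diaR _ _ _ _ _ _ h => exact .diaR _ _ _ _ _ _ h
  | boxR _ _ _ _ _ _ _ h => exact .boxR _ _ _ _ _ _ (fun _ => by simpa using h1) h
  | boxL _ _ _ _ _ _ h => exact .boxL _ _ _ _ _ _ h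
  | trans _ _ _ _ _ _ h h' h'' => exact .trans _ _ _ _ _ _ h h' h''

def KB {W D : Type} (K : Kripke W D) : Birel {p : W × D // p.2 ∈ K.Dom p.1} where
  le p q := K.le p.1.1 q.1.1 ∧ p.1.2 = q.1.2
  le_refl p := ⟨K.le_refl _, rfl⟩
  le_trans _ _ _ h h' := ⟨K.le_trans _ _ _ h.1 h'.1, h.2.trans h'.2⟩
  le_antisymm p q h h' := Subtype.ext (Prod.ext (K.le_antisymm _ _ h.1 h'.1) h.2)
  acc p q := p.1.1 = q.1.1 ∧ K.Rel p.1.1 p.1.2 q.1.2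
  F1 := by
    rintro ⟨⟨w, d⟩, hd⟩ ⟨⟨w', d'⟩, hd'⟩ ⟨⟨v, e⟩, he⟩ ⟨h1, h2⟩ ⟨h3, h4⟩
    dsimp only at *
    subst h2 h3
    have := K.Rel_mono _ _ _ _ h1 h4
    exact ⟨⟨(w', e), (K.Rel_dom _ _ _ this).2⟩, ⟨h1, rfl⟩, rfl, this⟩
  F2 := by
    rintro ⟨⟨w, d⟩, hd⟩ ⟨⟨v, e⟩, he⟩ ⟨⟨v', e'⟩, he'⟩ ⟨h3, h4⟩ ⟨h1, h2⟩
    dsimp only at *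
    subst h2 h3
    have := K.Rel_mono _ _ _ _ h1 h4
    exact ⟨⟨(v', d), (K.Rel_dom _ _ _ this).1⟩, ⟨h1, rfl⟩, rfl, this⟩
  val p n := p.1.2 ∈ K.Pr p.1.1 n
  val_mono := by
    rintro ⟨⟨w, d⟩, hd⟩ ⟨⟨w', d'⟩, hd'⟩ ⟨h1, h2⟩ p hp
    dsimp only at *
    subst h2
    exact K.Pr_mono _ _ _ h1 hp

theorem KB_sat {W D : Type} (K : Kripke W D) (A : Formula) : ∀ (w : W) (d : D) (h : d ∈ K.Dom w),
    bsat (KB K) ⟨(w, d), h⟩ A ↔ ksat K w d A := by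
  induction A with
  | atom p => intros; rfl
  | bot => intros; rfl
  | and A B h1 h2 => intro w d h; exact and_congr (h1 w d h) (h2 w d h)
  | or A B h1 h2 => intro w d h; exact or_congr (h1 w d h) (h2 w d h)
  | imp A B h1 h2 =>
    intro w d h
    constructor
    · intro H w' hw ha
      have hd := K.Dom_mono _ _ hw h
      exact (h2 _ _ hd).1 (H ⟨(w', d), hd⟩ ⟨hw, rfl⟩ ((h1 _ _ hd).2 ha))
    · rintro H ⟨⟨w', d'⟩, hd⟩ ⟨hw, rfl⟩ ha
      exact (h2 _ _ hd).2 (H w' hw ((h1 _ _ hd).1 ha))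
  | box A h1 =>
    intro w d h
    constructor
    · intro H w' e hw hr
      have hd := K.Rel_dom _ _ _ hr
      exact (h1 _ _ hd.2).1 (H ⟨(w', d), hd.1⟩ ⟨(w', e), hd.2⟩ ⟨hw, rfl⟩ ⟨rfl, hr⟩)
    · rintro H ⟨⟨w', d'⟩, hd⟩ ⟨⟨w'', e⟩, he⟩ ⟨hw, h2⟩ ⟨h3, hr⟩
      dsimp only at *
      subst h2 h3
      exact (h1 _ _ he).2 (H _ _ hw hr)
  | dia A h1 =>
    intro w d h
    constructor
    · rintro ⟨⟨⟨w'', e⟩, he⟩, ⟨h3, hr⟩, ha⟩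
      dsimp only at *
      subst h3
      exact ⟨e, hr, (h1 _ _ he).1 ha⟩
    · rintro ⟨e, hr, ha⟩
      have hd := K.Rel_dom _ _ _ hr
      exact ⟨⟨(w, e), hd.2⟩, ⟨rfl, hr⟩, (h1 _ _ hd.2).2 ha⟩

theorem KB_IGL {W D : Type} (K : Kripke W D) (h : PredIGL K) : BirelIGL (KB K) := by
  refine ⟨?_, ?_⟩
  · rintro ⟨⟨w, d⟩, hd⟩ ⟨⟨w', d'⟩, hd'⟩ ⟨⟨v, e⟩, he⟩ ⟨h1, h2⟩ ⟨h3, h4⟩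
    dsimp only at *
    subst h1 h3
    exact ⟨rfl, h.1 _ h2 h4⟩
  · rintro ⟨f, hf⟩
    refine h.2 ⟨fun n => (f n).1.1, fun n => (f n).1.2, fun n => ?_⟩
    obtain ⟨m, ⟨h1, h2⟩, h3, h4⟩ := hf n
    refine ⟨(f n).2, ?_, ?_⟩
    · dsimp only; rw [← h3]; exact h1
    · dsimp only; rw [← h3, h2]; exact h4

theorem birel_pred {A : Formula} (x : ℕ)
    (h : ∀ (W : Type) (B : Birel W), Nonempty W → BirelIGL B → ∀ w, bsat B w A)
    (W D : Type) (K : Kripke W D) (hK : PredIGL K)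
    (w : W) (ρ : ℕ → D) (hρ : ∀ v, ρ v ∈ K.Dom w) : ksat K w (ρ x) A :=
  (KB_sat K A w (ρ x) (hρ x)).1 (h _ (KB K) ⟨⟨(w, ρ x), hρ x⟩⟩ (KB_IGL K hK) _)

section unravel
variable {W : Type} (B : Birel W)

abbrev UN (W : Type) := List (ℕ × W)

structure KW : Type where
  F : UN W → Option W
  root : ∃ a, F [] = some a
  tl : ∀ k x a, F (k :: x) = some a → ∃ b, F x = some b ∧ B.acc b a
  bd : ∃ N, ∀ k x, N ≤ k.1 → F (k :: x) = none
  sat : ∀ d a c, F d = some a → B.acc a c → ∃ k, F (k :: d) = some c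

variable {B}

theorem KW.ext' {F F' : KW B} (h : F.F = F'.F) : F = F' := by
  cases F; cases F'; cases h; rfl

open Classical in
noncomputable def satF (B : Birel W) (H : UN W → Option W) (N : ℕ) : UN W → Option W
  | [] => H []
  | k :: x => if k.1 = N then (if ∃ b, satF B H N x = some b ∧ B.acc b k.2 then some k.2 else none) else H (k :: x)

theorem sat_ext (H : UN W → Option W) (N : ℕ) (root : ∃ a, H [] = some a)
    (tl : ∀ k x a, H (k :: x) = some a → ∃ b, H x = some b ∧ B.acc b a)
    (bd : ∀ k x, N ≤ k.1 → H (k :: x) = none) : ∃ F' : KW B, ∀ e b, H e = some b → F'.F e = some b := by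
  have ext : ∀ e b, H e = some b → satF B H N e = some b := by
    intro e b h
    cases e with
    | nil => exact h
    | cons k x =>
      rw [satF, if_neg]
      · exact h
      · intro e
        rw [bd k x e.ge] at h
        cases h
  refine ⟨⟨satF B H N, root, ?_, ⟨N + 1, ?_⟩, ?_⟩, ext⟩
  · intro k x a h
    rw [satF] at h
    split_ifs at h with h1 h2
    · cases h; exact h2
    · obtain ⟨b, h3, h4⟩ := tl _ _ _ h
      exact ⟨b, ext _ _ h3, h4⟩
  · intro k x hk
    rw [satF, if_neg (by omega)]
    exact bd k x (by omega)
  · intro d a c h1 h2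
    refine ⟨(N, c), ?_⟩
    rw [satF, if_pos rfl, if_pos ⟨a, h1, h2⟩]

theorem KW.suf (F : KW B) (ht : Transitive B.acc) {d : UN W} : ∀ {e : UN W} {a : W}, d <:+ e → F.F e = some a →
    ∃ b, F.F d = some b ∧ (d ≠ e → B.acc b a) := by
  intro e
  induction e with
  | nil => intro a h h'; rw [List.suffix_nil.1 h]; exact ⟨a, h', fun h => absurd rfl h⟩
  | cons k e ih =>
    intro a h h'
    rcases List.suffix_cons_iff.1 h with rfl | h
    · exact ⟨a, h', fun h => absurd rfl h⟩
    · obtain ⟨c, h1, h2⟩ := F.tl _ _ _ h'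
      obtain ⟨b, h3, h4⟩ := ih h h1
      refine ⟨b, h3, fun _ => ?_⟩
      by_cases e' : d = e
      · subst e'; rw [h3] at h1; cases h1; exact h2
      · exact ht (h4 e') h2

theorem KW.spine (F : KW B) : ∀ (d : UN W) (a a' : W), F.F d = some a → B.le a a' → ∃ g : UN W → W, g d = a' ∧
    (∀ e, e <:+ d → ∃ b, F.F e = some b ∧ B.le b (g e)) ∧ ∀ k x, (k :: x) <:+ d → B.acc (g x) (g (k :: x)) := by
  classical
  intro d
  induction d with
  | nil =>
    intro a a' h h'
    refine ⟨fun _ => a', rfl, fun e he => ⟨a, by rw [List.suffix_nil.1 he]; exact h, h'⟩, fun k x hk => ?_⟩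
    have := List.suffix_nil.1 hk
    cases this
  | cons k d ih =>
    intro a a' h h'
    obtain ⟨b, h1, h2⟩ := F.tl _ _ _ h
    obtain ⟨b', h3, h4⟩ := B.F2 _ _ _ h2 h'
    obtain ⟨g, g1, g2, g3⟩ := ih b b' h1 h3
    have hne : ∀ e, e <:+ d → e ≠ k :: d := by
      rintro e he rfl
      have := he.length_le
      simp at this
    refine ⟨Function.update g (k :: d) a', Function.update_self .., ?_, ?_⟩
    · intro e he
      rcases List.suffix_cons_iff.1 he with rfl | he
      · exact ⟨a, h, by rw [Function.update_self]; exact h'⟩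
      · rw [Function.update_of_ne (hne e he)]; exact g2 e he
    · intro j x hx
      rcases List.suffix_cons_iff.1 hx with e | hx
      · cases e
        rw [Function.update_self, Function.update_of_ne (hne _ List.suffix_rfl), g1]; exact h4
      · rw [Function.update_of_ne (hne _ hx), Function.update_of_ne (hne _ ((List.suffix_cons _ _).trans hx))]
        exact g3 j x hx

open Classical in
noncomputable def extG (F : UN W → Option W) (ch : W → W → W → W) (d : UN W) (g : UN W → W) : UN W → W
  | [] => g []
  | k :: x => if (k :: x) <:+ d then g (k :: x) else
      ch ((F x).getD (g [])) (extG F ch d g x) ((F (k :: x)).getD (g []))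

theorem KW.extend (F : KW B) {d : UN W} {a a' : W} (h : F.F d = some a) (h' : B.le a a') :
    ∃ F' : KW B, F'.F d = some a' ∧ ∀ e b, F.F e = some b → ∃ b', F'.F e = some b' ∧ B.le b b' := by
  obtain ⟨g, g1, g2, g3⟩ := F.spine d a a' h h'
  have hF1 := B.F1
  choose! ch hch1 hch2 using hF1
  let G := extG F.F ch d g
  have hG : ∀ e, e <:+ d → G e = g e := by
    intro e he
    cases e with
    | nil => rfl
    | cons k x => exact if_pos he
  have hG2 : ∀ k x, ¬ (k :: x) <:+ d → G (k :: x) = ch ((F.F x).getD (g [])) (G x) ((F.F (k :: x)).getD (g [])) := by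
    intro k x hk
    exact if_neg hk
  have hle : ∀ e b, F.F e = some b → B.le b (G e) := by
    intro e
    induction e with
    | nil =>
      intro b hb
      rw [hG _ List.nil_suffix]
      obtain ⟨c, h1, h2⟩ := g2 [] List.nil_suffix
      rw [h1] at hb; cases hb; exact h2
    | cons k x ih =>
      intro b hb
      by_cases hk : (k :: x) <:+ d
      · rw [hG _ hk]
        obtain ⟨c, h1, h2⟩ := g2 _ hk
        rw [h1] at hb; cases hb; exact h2
      · rw [hG2 _ _ hk]
        obtain ⟨c, h1, h2⟩ := F.tl _ _ _ hb
        rw [h1, hb]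
        exact hch1 c (G x) b (ih c h1) h2
  have hacc : ∀ k x b, F.F (k :: x) = some b → B.acc (G x) (G (k :: x)) := by
    intro k x b hb
    by_cases hk : (k :: x) <:+ d
    · rw [hG _ hk, hG _ ((List.suffix_cons _ _).trans hk)]; exact g3 _ _ hk
    · rw [hG2 _ _ hk]
      obtain ⟨c, h1, h2⟩ := F.tl _ _ _ hb
      rw [h1, hb]
      exact hch2 c (G x) b (hle x c h1) h2
  obtain ⟨N, hN⟩ := F.bd
  obtain ⟨F', hF'⟩ := sat_ext (B := B) (fun e => (F.F e).map fun _ => G e) N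
    (by obtain ⟨a, ha⟩ := F.root; exact ⟨_, by rw [ha]; rfl⟩)
    (by
      intro k x c hc
      rw [Option.map_eq_some_iff] at hc
      obtain ⟨b, hb, rfl⟩ := hc
      obtain ⟨b', h1, h2⟩ := F.tl _ _ _ hb
      exact ⟨G x, by rw [h1]; rfl, hacc _ _ _ hb⟩)
    (by intro k x hk; rw [hN k x hk]; rfl)
  refine ⟨F', ?_, fun e b hb => ⟨G e, hF' _ _ (by rw [hb]; rfl), hle e b hb⟩⟩
  rw [← g1, ← hG d List.suffix_rfl]
  exact hF' _ _ (by rw [h]; rfl)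

def UK (B : Birel W) (ht : Transitive B.acc) : Kripke (KW B) (UN W) where
  le F F' := ∀ e b, F.F e = some b → ∃ b', F'.F e = some b' ∧ B.le b b'
  le_refl F e b h := ⟨b, h, B.le_refl _⟩
  le_trans F G H h h' e b hb := by
    obtain ⟨c, h1, h2⟩ := h e b hb
    obtain ⟨c', h3, h4⟩ := h' e c h1
    exact ⟨c', h3, B.le_trans _ _ _ h2 h4⟩
  le_antisymm F F' h h' := by
    apply KW.ext'
    funext e
    cases h1 : F.F e with
    | some b =>
      obtain ⟨c, h2, h3⟩ := h e b h1
      obtain ⟨c', h4, h5⟩ := h' e c h2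
      rw [h1] at h4; cases h4
      rw [h2, B.le_antisymm _ _ h3 h5]
    | none =>
      cases h2 : F'.F e with
      | none => rfl
      | some c =>
        obtain ⟨c', h4, h5⟩ := h' e c h2
        rw [h1] at h4; cases h4
  Dom F := {d | ∃ a, F.F d = some a}
  Dom_ne F := ⟨[], F.root⟩
  Dom_mono F F' h d := fun ⟨a, ha⟩ => by
    obtain ⟨b, hb, -⟩ := h d a ha
    exact ⟨b, hb⟩
  Pr F p := {d | ∃ a, F.F d = some a ∧ B.val a p}
  Pr_sub F p d := fun ⟨a, ha, _⟩ => ⟨a, ha⟩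
  Pr_mono F F' p h d := fun ⟨a, ha, hv⟩ => by
    obtain ⟨b, hb, hl⟩ := h d a ha
    exact ⟨b, hb, B.val_mono _ _ hl _ hv⟩
  Rel F d e := (d <:+ e ∧ d ≠ e) ∧ ∃ a, F.F e = some a
  Rel_dom F d e h := by
    obtain ⟨⟨h1, h2⟩, a, ha⟩ := h
    obtain ⟨b, hb, -⟩ := F.suf ht h1 ha
    exact ⟨⟨b, hb⟩, ⟨a, ha⟩⟩
  Rel_mono F F' d e h hr := by
    obtain ⟨h1, a, ha⟩ := hr
    obtain ⟨b, hb, -⟩ := h e a ha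
    exact ⟨h1, b, hb⟩

theorem UK_rel (ht : Transitive B.acc) {F : KW B} {d e : UN W} (h : (UK B ht).Rel F d e) {a : W} (ha : F.F d = some a) :
    ∃ b, F.F e = some b ∧ B.acc a b := by
  obtain ⟨⟨h1, h2⟩, b, hb⟩ := h
  obtain ⟨c, hc, h3⟩ := F.suf ht h1 hb
  rw [ha] at hc; cases hc
  exact ⟨b, hb, h3 h2⟩

theorem UK_child (ht : Transitive B.acc) {F : KW B} {d : UN W} {k : ℕ × W} {c : W} (h : F.F (k :: d) = some c) :
    (UK B ht).Rel F d (k :: d) :=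
  ⟨⟨List.suffix_cons _ _, fun e => by
    have := congrArg List.length e
    simp at this⟩, c, h⟩

theorem UK_sat (ht : Transitive B.acc) (A : Formula) : ∀ (F : KW B) (d : UN W) (a : W), F.F d = some a →
    (ksat (UK B ht) F d A ↔ bsat B a A) := by
  induction A with
  | atom p =>
    intro F d a h
    constructor
    · rintro ⟨b, hb, hv⟩
      rw [h] at hb; cases hb; exact hv
    · intro hv; exact ⟨a, h, hv⟩
  | bot => intros; rfl
  | and A C h1 h2 => intro F d a h; exact and_congr (h1 F d a h) (h2 F d a h)
  | or A C h1 h2 => intro F d a h; exact or_congr (h1 F d a h) (h2 F d a h)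
  | imp A C h1 h2 =>
    intro F d a h
    constructor
    · intro H a' hl ha
      obtain ⟨F', h3, h4⟩ := F.extend h hl
      exact (h2 F' d a' h3).1 (H F' h4 ((h1 F' d a' h3).2 ha))
    · intro H F' hl ha
      obtain ⟨b, h3, h4⟩ := hl d a h
      exact (h2 F' d b h3).2 (H b h4 ((h1 F' d b h3).1 ha))
  | box A h1 =>
    intro F d a h
    constructor
    · intro H a' c hl hc
      obtain ⟨F', h3, h4⟩ := F.extend h hl
      obtain ⟨k, hk⟩ := F'.sat _ _ _ h3 hc
      exact (h1 F' _ _ hk).1 (H F' _ h4 (UK_child ht hk))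
    · intro H F' e hl hr
      obtain ⟨b, h3, h4⟩ := hl d a h
      obtain ⟨c, h5, h6⟩ := UK_rel ht hr h3
      exact (h1 F' e c h5).2 (H b c h4 h6)
  | dia A h1 =>
    intro F d a h
    constructor
    · rintro ⟨e, hr, ha⟩
      obtain ⟨c, h5, h6⟩ := UK_rel ht hr h
      exact ⟨c, h6, (h1 F e c h5).1 ha⟩
    · rintro ⟨c, hc, ha⟩
      obtain ⟨k, hk⟩ := F.sat _ _ _ h hc
      exact ⟨_, UK_child ht hk, (h1 F _ _ hk).2 ha⟩

theorem UK_IGL (h : BirelIGL B) : PredIGL (UK B h.1) := by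
  refine ⟨?_, ?_⟩
  · rintro F d e i ⟨⟨h1, h2⟩, -⟩ ⟨⟨h3, h4⟩, h5⟩
    refine ⟨⟨h1.trans h3, ?_⟩, h5⟩
    rintro rfl
    exact h2 (h1.eq_of_length (le_antisymm h1.length_le h3.length_le))
  · rintro ⟨f, g, hfg⟩
    choose a ha using fun n => (hfg n).1
    refine h.2 ⟨a, fun n => ?_⟩
    obtain ⟨m, h1, h2⟩ := (hfg n).2.1 _ _ (ha n)
    obtain ⟨c, h3, h4⟩ := UK_rel h.1 (hfg n).2.2 h1
    rw [ha (n+1)] at h3; cases h3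
    exact ⟨m, h2, h4⟩

theorem pred_birel {A : Formula} (x : ℕ)
    (h : ∀ (W D : Type) (K : Kripke W D), Nonempty W → PredIGL K →
        ∀ (w : W) (ρ : ℕ → D), (∀ v, ρ v ∈ K.Dom w) → ksat K w (ρ x) A)
    (W : Type) (B : Birel W) (hB : BirelIGL B) (w : W) : bsat B w A := by
  classical
  obtain ⟨F, hF⟩ := sat_ext (B := B) (fun e => if e = [] then some w else none) 0 ⟨w, rfl⟩
    (by intro k x a h; simp at h) (by intro k x _; simp)
  have h0 : F.F [] = some w := hF _ _ rfl
  exact (UK_sat hB.1 A F [] w h0).1 (h _ _ (UK B hB.1) ⟨F⟩ (UK_IGL hB) F (fun _ => []) (fun _ => ⟨w, h0⟩))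
end unravel



theorem ksat_mono' {W D : Type} (K : Kripke W D) (A : Formula) :
    ∀ w w' d, K.le w w' → ksat K w d A → ksat K w' d A := by
  induction A with
  | atom p => intro w w' d h h1; exact K.Pr_mono _ _ _ h h1
  | bot => intro w w' d h h1; exact h1
  | and A B iA iB => intro w w' d h h1; exact ⟨iA _ _ _ h h1.1, iB _ _ _ h h1.2⟩
  | or A B iA iB => intro w w' d h h1; exact h1.imp (iA _ _ _ h) (iB _ _ _ h)
  | imp A B iA iB => intro w w' d h h1 v hv; exact h1 v (K.le_trans _ _ _ h hv)
  | box A iA => intro w w' d h h1 v e hv; exact h1 v e (K.le_trans _ _ _ h hv)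
  | dia A iA =>
    rintro w w' d h ⟨e, h1, h2⟩
    exact ⟨e, K.Rel_mono _ _ _ _ h h1, iA _ _ _ h h2⟩

structure Fals {W D : Type} (K : Kripke W D) (w : W) (ρ : ℕ → D) (S : Sequent) : Prop where
  dom : ∀ v, ρ v ∈ K.Dom w
  rel : ∀ a b, (a, b) ∈ S.rel → K.Rel w (ρ a) (ρ b)
  lt : ∀ a A, (a, A) ∈ S.left → ksat K w (ρ a) A
  rt : ∀ a A, (a, A) ∈ S.right → ¬ ksat K w (ρ a) A

theorem fals_same {W D : Type} {K : Kripke W D} {w : W} {ρ : ℕ → D} {S p : Sequent} {ps : List Sequent}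
    (hp : p ∈ ps) (h : Fals K w ρ p) :
    ∃ (i : ℕ) (p : Sequent) (w' : W) (ρ' : ℕ → D), ps[i]? = some p ∧ K.le w w' ∧
      (∀ v ∈ S.vars, ρ' v = ρ v) ∧ Fals K w' ρ' p := by
  obtain ⟨i, hi⟩ := List.mem_iff_getElem?.1 hp
  exact ⟨i, p, w, ρ, hi, K.le_refl _, fun _ _ => rfl, h⟩

theorem fals_step {W D : Type} {K : Kripke W D} (hK : PredIGL K) {w : W} {ρ : ℕ → D} {S : Sequent}
    {ps : List Sequent} (hr : RuleMLIK4 S ps) (hf : Fals K w ρ S) :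
    ∃ (i : ℕ) (p : Sequent) (w' : W) (ρ' : ℕ → D), ps[i]? = some p ∧ K.le w w' ∧
      (∀ v ∈ S.vars, ρ' v = ρ v) ∧ Fals K w' ρ' p := by
  obtain ⟨hd, hR, hL, hT⟩ := hf
  cases hr with
  | id R x p => exact absurd (hL x (Formula.atom p) (by simp)) (hT x (Formula.atom p) (by simp))
  | botL R Γ Δ x => exact absurd (hL x Formula.bot (by simp)) (fun h => h)
  | cut R Γ Γ' Δ Δ' x A =>
    by_cases h : ksat K w (ρ x) A
    · refine fals_same (p := ⟨R, (x, A) ::ₘ Γ', Δ'⟩) (by simp) ⟨hd, hR, ?_, ?_⟩ <;>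
        simp only [Multiset.mem_cons, Multiset.mem_add, Prod.mk.injEq] at * <;> grind
    · refine fals_same (p := ⟨R, Γ, (x, A) ::ₘ Δ⟩) (by simp) ⟨hd, hR, ?_, ?_⟩ <;>
        simp only [Multiset.mem_cons, Multiset.mem_add, Prod.mk.injEq] at * <;> grind
  | wkL R Γ Δ x A =>
    refine fals_same (List.mem_singleton_self _) ⟨hd, hR, ?_, ?_⟩ <;>
      simp only [Multiset.mem_cons, Prod.mk.injEq] at * <;> grind
  | wkR R Γ Δ x A =>
    refine fals_same (List.mem_singleton_self _) ⟨hd, hR, ?_, ?_⟩ <;>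
      simp only [Multiset.mem_cons, Prod.mk.injEq] at * <;> grind
  | ctrL R Γ Δ x A =>
    refine fals_same (List.mem_singleton_self _) ⟨hd, hR, ?_, ?_⟩ <;>
      simp only [Multiset.mem_cons, Prod.mk.injEq] at * <;> grind
  | ctrR R Γ Δ x A =>
    refine fals_same (List.mem_singleton_self _) ⟨hd, hR, ?_, ?_⟩ <;>
      simp only [Multiset.mem_cons, Prod.mk.injEq] at * <;> grind
  | th R R' Γ Δ _ =>
    exact fals_same (List.mem_singleton_self _) ⟨hd, fun a b h => hR a b (Or.inl h), hL, hT⟩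
  | impL R Γ Γ' Δ Δ' x A B =>
    have hi : ksat K w (ρ x) (Formula.imp A B) := hL x _ (by simp)
    by_cases h : ksat K w (ρ x) A
    · have h2 := hi w (K.le_refl _) h
      refine fals_same (p := ⟨R, (x, B) ::ₘ Γ', Δ'⟩) (by simp) ⟨hd, hR, ?_, ?_⟩ <;>
        simp only [Multiset.mem_cons, Multiset.mem_add, Prod.mk.injEq] at * <;> grind
    · refine fals_same (p := ⟨R, Γ, (x, A) ::ₘ Δ⟩) (by simp) ⟨hd, hR, ?_, ?_⟩ <;>
        simp only [Multiset.mem_cons, Multiset.mem_add, Prod.mk.injEq] at * <;> grind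
  | impR R Γ Δ x A B h0 =>
    obtain rfl := h0 rfl
    have h : ¬ ksat K w (ρ x) (Formula.imp A B) := hT x _ (by simp)
    simp only [ksat, not_forall] at h
    obtain ⟨w', hw, h1, h2⟩ := h
    refine ⟨0, _, w', ρ, rfl, hw, fun _ _ => rfl, fun v => K.Dom_mono _ _ hw (hd v),
      fun a b h => K.Rel_mono _ _ _ _ hw (hR a b h), ?_, ?_⟩
    · intro a C hC
      rcases Multiset.mem_cons.1 hC with e | e
      · cases e; exact h1
      · exact ksat_mono' K C _ _ _ hw (hL a C e)
    · intro a C hC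
      have hC' : (a, C) ∈ (x, B) ::ₘ (0 : Multiset LFormula) := hC
      rcases Multiset.mem_cons.1 hC' with e | e
      · cases e; exact h2
      · simp at e
  | andL₁ R Γ Δ x A B =>
    have h : ksat K w (ρ x) (Formula.and A B) := hL x _ (by simp)
    have h1 := h.1
    refine fals_same (List.mem_singleton_self _) ⟨hd, hR, ?_, ?_⟩ <;>
      simp only [Multiset.mem_cons, Prod.mk.injEq] at * <;> grind
  | andL₂ R Γ Δ x A B =>
    have h : ksat K w (ρ x) (Formula.and A B) := hL x _ (by simp)
    have h1 := h.2
    refine fals_same (List.mem_singleton_self _) ⟨hd, hR, ?_, ?_⟩ <;>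
      simp only [Multiset.mem_cons, Prod.mk.injEq] at * <;> grind
  | orL R Γ Δ x A B =>
    have h : ksat K w (ρ x) (Formula.or A B) := hL x _ (by simp)
    rcases h with h | h
    · refine fals_same (p := ⟨R, (x, A) ::ₘ Γ, Δ⟩) (by simp) ⟨hd, hR, ?_, ?_⟩ <;>
        simp only [Multiset.mem_cons, Prod.mk.injEq] at * <;> grind
    · refine fals_same (p := ⟨R, (x, B) ::ₘ Γ, Δ⟩) (by simp) ⟨hd, hR, ?_, ?_⟩ <;>
        simp only [Multiset.mem_cons, Prod.mk.injEq] at * <;> grind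
  | orR₁ R Γ Δ x A B =>
    have h : ¬ ksat K w (ρ x) (Formula.or A B) := hT x _ (by simp)
    have h1 : ¬ ksat K w (ρ x) A := fun g => h (Or.inl g)
    refine fals_same (List.mem_singleton_self _) ⟨hd, hR, ?_, ?_⟩ <;>
      simp only [Multiset.mem_cons, Prod.mk.injEq] at * <;> grind
  | orR₂ R Γ Δ x A B =>
    have h : ¬ ksat K w (ρ x) (Formula.or A B) := hT x _ (by simp)
    have h1 : ¬ ksat K w (ρ x) B := fun g => h (Or.inr g)
    refine fals_same (List.mem_singleton_self _) ⟨hd, hR, ?_, ?_⟩ <;>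
      simp only [Multiset.mem_cons, Prod.mk.injEq] at * <;> grind
  | andR R Γ Δ x A B =>
    have h : ¬ ksat K w (ρ x) (Formula.and A B) := hT x _ (by simp)
    by_cases h1 : ksat K w (ρ x) A
    · have h2 : ¬ ksat K w (ρ x) B := fun g => h ⟨h1, g⟩
      refine fals_same (p := ⟨R, Γ, (x, B) ::ₘ Δ⟩) (by simp) ⟨hd, hR, ?_, ?_⟩ <;>
        simp only [Multiset.mem_cons, Prod.mk.injEq] at * <;> grind
    · refine fals_same (p := ⟨R, Γ, (x, A) ::ₘ Δ⟩) (by simp) ⟨hd, hR, ?_, ?_⟩ <;>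
        simp only [Multiset.mem_cons, Prod.mk.injEq] at * <;> grind
  | diaL R Γ Δ x y A hfr =>
    have h : ksat K w (ρ x) (Formula.dia A) := hL x _ (by simp)
    obtain ⟨e, h1, h2⟩ := h
    have hne : ∀ v ∈ Sequent.vars ⟨R, (x, Formula.dia A) ::ₘ Γ, Δ⟩, Function.update ρ y e v = ρ v := by
      intro v hv
      exact Function.update_of_ne (by rintro rfl; exact hfr hv) _ _
    have hx : Function.update ρ y e x = ρ x := hne x (Or.inl (Or.inr ⟨_, Multiset.mem_cons_self _ _⟩))
    refine ⟨0, _, w, Function.update ρ y e, rfl, K.le_refl _, hne, ?_, ?_, ?_, ?_⟩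
    · intro v
      by_cases hv : v = y
      · subst hv; rw [Function.update_self]; exact (K.Rel_dom _ _ _ h1).2
      · rw [Function.update_of_ne hv]; exact hd v
    · intro a b hab
      rcases hab with e' | hab
      · cases e'; rw [Function.update_self, hx]; exact h1
      · rw [hne a (Or.inl (Or.inl ⟨b, Or.inl hab⟩)), hne b (Or.inl (Or.inl ⟨a, Or.inr hab⟩))]
        exact hR a b hab
    · intro a C hC
      rcases Multiset.mem_cons.1 hC with e' | e'
      · cases e'; rw [Function.update_self]; exact h2
      · rw [hne a (Or.inl (Or.inr ⟨C, Multiset.mem_cons_of_mem e'⟩))]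
        exact hL a C (Multiset.mem_cons_of_mem e')
    · intro a C hC
      rw [hne a (Or.inr ⟨C, hC⟩)]
      exact hT a C hC
  | diaR R Γ Δ x y A hxy =>
    have h : ¬ ksat K w (ρ x) (Formula.dia A) := hT x _ (by simp)
    have h1 : ¬ ksat K w (ρ y) A := fun g => h ⟨_, hR _ _ hxy, g⟩
    refine fals_same (List.mem_singleton_self _) ⟨hd, hR, ?_, ?_⟩ <;>
      simp only [Multiset.mem_cons, Prod.mk.injEq] at * <;> grind
  | boxR R Γ Δ x y A h0 hfr =>
    obtain rfl := h0 rfl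
    have h : ¬ ksat K w (ρ x) (Formula.box A) := hT x _ (by simp)
    simp only [ksat, not_forall] at h
    obtain ⟨w', e, hw, h1, h2⟩ := h
    have hne : ∀ v ∈ Sequent.vars ⟨R, Γ, (x, Formula.box A) ::ₘ 0⟩, Function.update ρ y e v = ρ v := by
      intro v hv
      exact Function.update_of_ne (by rintro rfl; exact hfr hv) _ _
    have hx : Function.update ρ y e x = ρ x := hne x (Or.inr ⟨Formula.box A, by simp⟩)
    refine ⟨0, _, w', Function.update ρ y e, rfl, hw, hne, ?_, ?_, ?_, ?_⟩
    · intro v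
      by_cases hv : v = y
      · subst hv; rw [Function.update_self]; exact (K.Rel_dom _ _ _ h1).2
      · rw [Function.update_of_ne hv]; exact K.Dom_mono _ _ hw (hd v)
    · intro a b hab
      rcases hab with e' | hab
      · cases e'; rw [Function.update_self, hx]; exact h1
      · rw [hne a (Or.inl (Or.inl ⟨b, Or.inl hab⟩)), hne b (Or.inl (Or.inl ⟨a, Or.inr hab⟩))]
        exact K.Rel_mono _ _ _ _ hw (hR a b hab)
    · intro a C hC
      rw [hne a (Or.inl (Or.inr ⟨C, hC⟩))]
      exact ksat_mono' K C _ _ _ hw (hL a C hC)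
    · intro a C hC
      have hC' : (a, C) ∈ (y, A) ::ₘ (0 : Multiset LFormula) := hC
      rcases Multiset.mem_cons.1 hC' with e' | e'
      · cases e'; rw [Function.update_self]; exact h2
      · simp at e'
  | boxL R Γ Δ x y A hxy =>
    have h : ksat K w (ρ x) (Formula.box A) := hL x _ (by simp)
    have h1 : ksat K w (ρ y) A := h w _ (K.le_refl _) (hR _ _ hxy)
    refine fals_same (List.mem_singleton_self _) ⟨hd, hR, ?_, ?_⟩ <;>
      simp only [Multiset.mem_cons, Prod.mk.injEq] at * <;> grind
  | trans R Γ Δ x y z _ h1 h2 =>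
    refine fals_same (List.mem_singleton_self _) ⟨hd, ?_, hL, hT⟩
    intro a b hab
    rcases hab with e | hab
    · cases e; exact hK.1 w (hR _ _ h1) (hR _ _ h2)
    · exact hR a b hab

structure FSt {W D : Type} (K : Kripke W D) (N : List ℕ → Option Sequent) where
  p : List ℕ
  S : Sequent
  w : W
  ρ : ℕ → D
  hN : N p = some S
  hF : Fals K w ρ S

theorem ML_pred {A : Formula} {x : ℕ} (h : InfProof RuleMLIK4 ⟨∅, 0, {(x, A)}⟩)
    (W D : Type) (K : Kripke W D) (hK : PredIGL K) (w : W) (ρ : ℕ → D)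
    (hρ : ∀ v, ρ v ∈ K.Dom w) : ksat K w (ρ x) A := by
  by_contra hno
  obtain ⟨P, hP⟩ := h
  have hstep : ∀ s : FSt K P.node, ∃ (t : FSt K P.node) (i : ℕ), t.p = s.p ++ [i] ∧ K.le s.w t.w ∧
      ∀ v ∈ s.S.vars, t.ρ v = s.ρ v := by
    intro s
    obtain ⟨ps, h1, h2⟩ := P.children _ _ s.hN
    obtain ⟨i, p, w', ρ', h3, h4, h5, h6⟩ := fals_step hK h1 s.hF
    exact ⟨⟨s.p ++ [i], p, w', ρ', by rw [h2, h3], h6⟩, i, rfl, h4, h5⟩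
  choose nx ix hp hw hv using hstep
  let s0 : FSt K P.node := ⟨[], _, w, ρ, P.root, hρ, by simp, by simp, by
    intro a C hC
    cases Multiset.mem_singleton.1 hC
    exact hno⟩
  let s : ℕ → FSt K P.node := fun n => Nat.rec s0 (fun _ r => nx r) n
  have hs : ∀ n, s (n+1) = nx (s n) := fun n => rfl
  have hpath : ∀ n, branchPath (fun n => ix (s n)) n = (s n).p := by
    intro n
    induction n with
    | zero => rfl
    | succ n ih => rw [hs, hp, ← ih]; simp [branchPath, List.range_succ]
  obtain ⟨k, l, l1, l2, l3⟩ := hP (fun n => ix (s n)) (fun n => (s n).S) (fun n => by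
    rw [hpath]; exact (s n).hN)
  have hwm : ∀ n d, K.le (s n).w (s (n+d)).w := by
    intro n d
    induction d with
    | zero => exact K.le_refl _
    | succ d ih => exact K.le_trans _ _ _ ih (hw (s (n+d)))
  have hkeep : ∀ n v, v ∈ (s n).S.vars → (s (n+1)).ρ v = (s n).ρ v := fun n v h => hv (s n) v h
  obtain ⟨b, m, m0, m1, m2, hab, hex⟩ := stut (fun n => (s (k+n)).ρ (l (k+n)))
    (fun n => (l (k+n), l (k+n+1)) ∈ (s (k+n)).S.rel)
    (by
      intro n hn
      have e := (l2 (k+n) (by omega)).resolve_right hn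
      show (s (k+n+1)).ρ (l (k+n+1)) = _
      rw [e]; exact hkeep _ _ (l1 _ (by omega)))
    (by
      intro N
      obtain ⟨i, h1, h2, h3⟩ := l3 (k+N)
      refine ⟨i-k, by omega, ?_⟩
      have : k + (i-k) = i := by omega
      show (l (k+(i-k)), l (k+(i-k)+1)) ∈ (s (k+(i-k))).S.rel
      rw [this]; exact h3)
  have mm : Monotone m := monotone_nat_of_le_succ (fun n => by
    by_cases hj : (l (k+n), l (k+n+1)) ∈ (s (k+n)).S.rel
    · have := m1 n hj; omega
    · have := m2 n hj; omega)
  choose ni hni hJ using hex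
  have hR : ∀ i, K.Rel (s (k + ni i)).w (b i) (b (i+1)) := by
    intro i
    have h1 := hab (ni i)
    have h2 := hab (ni i + 1)
    rw [m1 _ (hJ i), hni] at h2
    rw [hni] at h1
    rw [← h1, ← h2]
    have h3 := (s (k+ni i)).hF.rel _ _ (hJ i)
    have h4 := hkeep (k+ni i) (l (k+ni i+1)) (Or.inl (Or.inl ⟨_, Or.inr (hJ i)⟩))
    show K.Rel _ _ ((s (k+ni i+1)).ρ (l (k+ni i+1)))
    rw [h4]; exact h3
  refine hK.2 ⟨fun i => (s (k+ni i)).w, b, fun i => ?_⟩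
  have hlt : ni i < ni (i+1) := by
    by_contra hc
    have := mm (not_lt.1 hc)
    rw [hni, hni] at this
    omega
  have hle : K.le (s (k+ni i)).w (s (k+ni (i+1))).w := by
    have := hwm (k+ni i) (ni (i+1) - ni i)
    have e : k + ni i + (ni (i+1) - ni i) = k + ni (i+1) := by omega
    rwa [e] at this
  exact ⟨(K.Rel_dom _ _ _ (hR i)).1, hle, K.Rel_mono _ _ _ _ hle (hR i)⟩


/-- **From the multi-succedent to the single-succedent system, and the grand
equivalence.** mℓIGL ⊢ x:A implies ℓIGL ⊢ x:A; consequently the following are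
equivalent: (i) ℓIGL ⊢ x:A; (ii) birel-IGL ⊨ A; (iii) pred-IGL ⊨ A;
(iv) mℓIGL ⊢ x:A. -/
theorem grand_tour (A : Formula) (x : ℕ) :
    (InfProof RuleMLIK4 ⟨∅, 0, {(x, A)}⟩ → InfProof RuleLIK4 ⟨∅, 0, {(x, A)}⟩) ∧
    (InfProof RuleLIK4 ⟨∅, 0, {(x, A)}⟩ ↔
      ∀ (W : Type) (B : Birel W), Nonempty W → BirelIGL B → ∀ w, bsat B w A) ∧
    ((∀ (W : Type) (B : Birel W), Nonempty W → BirelIGL B → ∀ w, bsat B w A) ↔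
      ∀ (W D : Type) (K : Kripke W D), Nonempty W → PredIGL K →
        ∀ (w : W) (ρ : ℕ → D), (∀ v, ρ v ∈ K.Dom w) → ksat K w (ρ x) A) ∧
    ((∀ (W D : Type) (K : Kripke W D), Nonempty W → PredIGL K →
        ∀ (w : W) (ρ : ℕ → D), (∀ v, ρ v ∈ K.Dom w) → ksat K w (ρ x) A) ↔
      InfProof RuleMLIK4 ⟨∅, 0, {(x, A)}⟩) := by
  refine ⟨fun h => pred_LI A x (fun W D K _ hK w ρ hρ => ML_pred h W D K hK w ρ hρ),
    ⟨fun h W B _ hB w => pred_birel x (fun W D K _ hK w ρ hρ => ML_pred (LI_ML h) W D K hK w ρ hρ) W B hB w,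
      fun h => pred_LI A x (fun W D K _ hK w ρ hρ => birel_pred x h W D K hK w ρ hρ)⟩,
    ⟨fun h W D K _ hK w ρ hρ => birel_pred x h W D K hK w ρ hρ,
      fun h W B _ hB w => pred_birel x h W B hB w⟩,
    ⟨fun h => LI_ML (pred_LI A x h), fun h W D K _ hK w ρ hρ => ML_pred h W D K hK w ρ hρ⟩⟩

end IGL
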